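/- Let f be C²-smooth on an open neighbourhood of S^{n-1} and suppose its restriction to S^{n-1} is orthogonal to all affine functions. If for some a ∈ ℝ and b ≥ 0 one has ‖f''(θ) − a I_n‖ ≤ 1 for every θ ∈ S^{n-1} and ∫ ‖f'' − a I_n‖²_HS dσ_{n-1} ≤ b², then ∫ exp{ ((n−1)/(2(1+4b²))) · |f| } dσ_{n-1} ≤ 2. -/

import Mathlib

open MeasureTheory Metric Filter
open scoped RealInnerProductSpace ENNReal NNReal

noncomputable section

namespace SecondOrderConc

/-- Euclidean space ℝⁿ. -/
abbrev E (n : ℕ) : Type := EuclideanSpace ℝ (Fin n)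

/-- The uniform (normalized rotation-invariant) probability measure `σ_{n-1}`
on the unit sphere `S^{n-1}`, viewed as a measure on the ambient space ℝⁿ. -/
def sphMeasure (n : ℕ) : Measure (E n) :=
  ((((volume : Measure (E n)).toSphere).map Subtype.val) Set.univ)⁻¹ •
    (((volume : Measure (E n)).toSphere).map Subtype.val)

variable {n : ℕ}

/-- Euclidean Hessian of `f` at `x`, as a continuous linear operator on ℝⁿ. -/
def hess (f : E n → ℝ) (x : E n) : E n →L[ℝ] E n :=
  fderiv ℝ (gradient f) x

/-- Squared Hilbert–Schmidt norm of an operator on ℝⁿ. -/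
def hsNormSq (A : E n →L[ℝ] E n) : ℝ :=
  ∑ i : Fin n, ‖A (EuclideanSpace.single i 1)‖ ^ 2

/-- Orthogonal projection of ℝⁿ onto `θ^⊥` (for a unit vector `θ`). -/
def projPerp (θ : E n) : E n →L[ℝ] E n :=
  ContinuousLinearMap.id ℝ (E n) - (innerSL ℝ θ).smulRight θ

/-- Spherical gradient `∇_S f(θ) = ∇f(θ) − ⟨∇f(θ),θ⟩θ`. -/
def sgrad (f : E n → ℝ) (θ : E n) : E n :=
  gradient f θ - ⟪gradient f θ, θ⟫ • θ

/-- Spherical Hessian `f''_S(θ) = P_{θ^⊥} (f''(θ) − ⟨∇f(θ),θ⟩ I_n) P_{θ^⊥}`. -/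
def sHess (f : E n → ℝ) (θ : E n) : E n →L[ℝ] E n :=
  (projPerp θ).comp
    ((hess f θ - ⟪gradient f θ, θ⟫ • ContinuousLinearMap.id ℝ (E n)).comp (projPerp θ))

/-- Spherical Laplacian `Δ_S f(θ) = Tr f''_S(θ)`. -/
def sLap (f : E n → ℝ) (θ : E n) : ℝ :=
  LinearMap.trace ℝ (E n) (sHess f θ).toLinearMap

/-- Euclidean Laplacian `Δ f = Tr f''`. -/
def eLap (f : E n → ℝ) (x : E n) : ℝ :=
  LinearMap.trace ℝ (E n) (hess f x).toLinearMap

/-- 0-homogeneous extension to `ℝⁿ \ {0}` of (the restriction to the sphere of) `g`. -/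
def ext0 (g : E n → ℝ) : E n → ℝ := fun x => g (‖x‖⁻¹ • x)

/-
Let `L_p` be the infinitesimal rotations, `Δₛ` the spherical Laplacian and `Γ` its carré du champ.
For `n ≥ 3` the Bakry–Émery condition `CD(n - 2, n - 1)` holds on the sphere, and integrating by
parts it shows that along the heat flow the Fisher information decays like `exp (-2 (n - 1) t)`.
This is the logarithmic Sobolev inequality with constant `n - 1`, whose linearization is the
Poincaré inequality. The heat flow is only needed for polynomial data, where it is the exponential
of a matrix; all other functions are approximated by averages against powers of `1 + ⟪x, y⟫`.

Replacing `f` by `f - a / 2 * (‖x‖² - 1)`, which agrees with it on the sphere, reduces to `a = 0`.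
The function `h = ‖∇f‖²` then satisfies `Γ(h) ≤ 4 h`, because the operator norm of `f''` is at most
one, and `Γ(f) ≤ h`. Herbst's argument, applied once to `f` and once to `h`, bounds the Laplace
transform of `±f` by the exponential of a multiple of the mean of `h`. By the Poincaré inequality
for `∇f` this mean is at most the square of the mean gradient plus `b² / (n - 1)`, and because `f`
is orthogonal to the linear functions, the mean gradient is controlled in the same way. For `n = 2`
the elementary Wirtinger inequalities on the circle even bound `|f|` pointwise by a multiple of `b`.
-/

open scoped ContDiff Topology

local notation "𝕊" => sphere (0 : E _) 1

lemma integral_linear_combination {α : Type*} {m : MeasurableSpace α} {μ : Measure α}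
    {f g h : α → ℝ} (hf : Integrable f μ) (hg : Integrable g μ) (hh : Integrable h μ)
    {a b c : ℝ} :
    ∫ x, (a * f x + b * g x + c * h x) ∂μ =
      a * ∫ x, f x ∂μ + b * ∫ x, g x ∂μ + c * ∫ x, h x ∂μ := by
  rw [integral_add ((hf.const_mul a).fun_add (hg.const_mul b)) (hh.const_mul c),
    integral_add (hf.const_mul a) (hg.const_mul b), integral_const_mul, integral_const_mul,
    integral_const_mul]

section CompactlyCarried

variable {X : Type*} [TopologicalSpace X] [T2Space X] [MeasurableSpace X] [OpensMeasurableSpace X]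
  {F : Type*} [NormedAddCommGroup F] {μ : Measure X} {K : Set X}

lemma integrable_of_ae_mem_isCompact [IsFiniteMeasureOnCompacts μ] (hK : IsCompact K)
    (hμ : ∀ᵐ x ∂μ, x ∈ K) {g : X → F} (hg : ContinuousOn g K) : Integrable g μ := by
  rw [← Measure.restrict_eq_self_of_ae_mem hμ]
  exact hg.integrableOn_compact' hK hK.measurableSet

variable [IsFiniteMeasure μ] [NormedSpace ℝ F]

lemma hasDerivAt_integral_of_ae_mem_isCompact (hK : IsCompact K) (hμ : ∀ᵐ x ∂μ, x ∈ K)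
    {f f' : ℝ → X → F} {t₀ δ : ℝ} (hδ : 0 < δ)
    (hf : ∀ t ∈ closedBall t₀ δ, ContinuousOn (f t) K)
    (hf' : ContinuousOn (Function.uncurry f') (closedBall t₀ δ ×ˢ K))
    (hderiv : ∀ t ∈ closedBall t₀ δ, ∀ x ∈ K, HasDerivAt (fun s => f s x) (f' t x) t) :
    HasDerivAt (fun t => ∫ x, f t x ∂μ) (∫ x, f' t₀ x ∂μ) t₀ := by
  obtain ⟨C, hC⟩ := ((isCompact_closedBall t₀ δ).prod hK).exists_bound_of_continuousOn hf'
  have hslice : ContinuousOn (f' t₀) K :=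
    hf'.comp (f := fun x => (t₀, x)) (by fun_prop) fun x hx => ⟨mem_closedBall_self hδ.le, hx⟩
  refine (hasDerivAt_integral_of_dominated_loc_of_deriv_le (bound := fun _ => C)
    (closedBall_mem_nhds t₀ hδ) ?_
    (integrable_of_ae_mem_isCompact hK hμ (hf t₀ (mem_closedBall_self hδ.le)))
    (integrable_of_ae_mem_isCompact hK hμ hslice).aestronglyMeasurable ?_
    (integrable_const C) ?_).2
  · filter_upwards [closedBall_mem_nhds t₀ hδ] with t ht
    exact (integrable_of_ae_mem_isCompact hK hμ (hf t ht)).aestronglyMeasurable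
  · filter_upwards [hμ] with x hx t ht using hC (t, x) ⟨ht, hx⟩
  · filter_upwards [hμ] with x hx t ht using hderiv t ht x hx

lemma continuousOn_integral_of_ae_mem_isCompact {T : Type*} [TopologicalSpace T]
    [FirstCountableTopology T] [WeaklyLocallyCompactSpace T] {s : Set T} (hs : IsClosed s)
    (hK : IsCompact K) (hμ : ∀ᵐ x ∂μ, x ∈ K) {f : T → X → F}
    (hf : ContinuousOn (Function.uncurry f) (s ×ˢ K)) :
    ContinuousOn (fun t => ∫ x, f t x ∂μ) s := by
  intro t₀ ht₀
  obtain ⟨L, hL, hLt₀⟩ := exists_compact_mem_nhds t₀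
  have hLs : L ∩ s ∈ 𝓝[s] t₀ := inter_mem (mem_nhdsWithin_of_mem_nhds hLt₀) self_mem_nhdsWithin
  obtain ⟨C, hC⟩ := ((hL.inter_right hs).prod hK).exists_bound_of_continuousOn
    (hf.mono (Set.prod_mono Set.inter_subset_right subset_rfl))
  refine continuousWithinAt_of_dominated (bound := fun _ => C) ?_ ?_ (integrable_const C) ?_
  · filter_upwards [self_mem_nhdsWithin] with t ht
    exact (integrable_of_ae_mem_isCompact hK hμ (hf.comp (f := fun x => (t, x)) (by fun_prop)
      fun x hx => ⟨ht, hx⟩)).aestronglyMeasurable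
  · filter_upwards [hLs] with t ht
    filter_upwards [hμ] with x hx using hC (t, x) ⟨ht, hx⟩
  · filter_upwards [hμ] with x hx
    exact hf.comp (f := fun t => (t, x)) (by fun_prop) (fun t ht => ⟨ht, hx⟩) t₀ ht₀

lemma tendsto_integral_comp_of_ae_mem_isCompact {Y : Type*} [TopologicalSpace Y] {L : Set Y}
    (hK : IsCompact K) (hμ : ∀ᵐ x ∂μ, x ∈ K) (hL : IsCompact L) {φ : Y → F}
    (hφ : ContinuousOn φ L) {f : ℕ → X → Y} (hf : ∀ k, ContinuousOn (f k) K)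
    (hfL : ∀ k, Set.MapsTo (f k) K L) {g : X → Y} (hgL : Set.MapsTo g K L)
    (hlim : ∀ x ∈ K, Tendsto (fun k => f k x) atTop (𝓝 (g x))) :
    Tendsto (fun k => ∫ x, φ (f k x) ∂μ) atTop (𝓝 (∫ x, φ (g x) ∂μ)) := by
  obtain ⟨C, hC⟩ := hL.exists_bound_of_continuousOn hφ
  refine tendsto_integral_of_dominated_convergence (fun _ => C) (fun k =>
    (integrable_of_ae_mem_isCompact hK hμ (hφ.comp (hf k) (hfL k))).aestronglyMeasurable)
    (integrable_const C) (fun k => ?_) ?_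
  · filter_upwards [hμ] with x hx using hC _ (hfL k hx)
  · filter_upwards [hμ] with x hx
    exact (hφ _ (hgL hx)).tendsto.comp (tendsto_nhdsWithin_of_tendsto_nhds_of_eventually_within _
      (hlim x hx) (Eventually.of_forall fun k => hfL k hx))

end CompactlyCarried

section SphereMeasure

instance isProbabilityMeasure_sphMeasure [NeZero n] : IsProbabilityMeasure (sphMeasure n) := by
  have : Nontrivial (E n) := by
    rw [← Module.finrank_pos_iff (R := ℝ), finrank_euclideanSpace_fin]
    exact Nat.pos_of_neZero n
  have : IsFiniteMeasure ((volume : Measure (E n)).toSphere.map Subtype.val) := inferInstance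
  have : NeZero ((volume : Measure (E n)).toSphere.map Subtype.val) :=
    ⟨(Measure.map_eq_zero_iff measurable_subtype_coe.aemeasurable).not.2
      (Measure.toSphere_ne_zero _)⟩
  unfold sphMeasure
  infer_instance

lemma ae_mem_sphere : ∀ᵐ x ∂sphMeasure n, x ∈ 𝕊 :=
  Measure.ae_smul_measure ((ae_map_iff (p := (· ∈ 𝕊)) measurable_subtype_coe.aemeasurable
    isClosed_sphere.measurableSet).2 (Eventually.of_forall Subtype.property)) _

open scoped Pointwise in
lemma measurePreserving_isometry (R : E n ≃ₗᵢ[ℝ] E n) :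
    MeasurePreserving R (sphMeasure n) (sphMeasure n) := by
  have hR : Measurable R := R.continuous.measurable
  have hcone (s : Set (E n)) :
      R ⁻¹' (Set.Ioo (0 : ℝ) 1 • (Subtype.val '' (Subtype.val ⁻¹' s : Set (sphere (0 : E n) 1)))) =
        Set.Ioo (0 : ℝ) 1 •
          (Subtype.val '' (Subtype.val ⁻¹' (R ⁻¹' s) : Set (sphere (0 : E n) 1))) := by
    ext x
    simp only [Subtype.image_preimage_coe, Set.mem_smul, Set.mem_preimage, Set.mem_inter_iff]
    constructor
    · rintro ⟨r, hr, y, ⟨hy, hys⟩, hyx⟩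
      exact ⟨r, hr, R.symm y, ⟨by simpa using hy, by simpa using hys⟩, R.injective (by simp [hyx])⟩
    · rintro ⟨r, hr, y, ⟨hy, hys⟩, rfl⟩
      exact ⟨r, hr, R y, ⟨by simpa using hy, hys⟩, by simp⟩
  refine ⟨hR, ?_⟩
  unfold sphMeasure
  rw [Measure.map_smul]
  congr 1
  ext s hs
  rw [Measure.map_apply hR hs, Measure.map_apply measurable_subtype_coe (hR hs),
    Measure.map_apply measurable_subtype_coe hs,
    Measure.toSphere_apply' _ (measurable_subtype_coe (hR hs)),
    Measure.toSphere_apply' _ (measurable_subtype_coe hs), ← hcone,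
    R.measurePreserving.measure_preimage_emb R.toHomeomorph.measurableEmbedding]

lemma integral_comp_isometry {F : Type*} [NormedAddCommGroup F] [NormedSpace ℝ F]
    (R : E n ≃ₗᵢ[ℝ] E n) (g : E n → F) :
    ∫ x, g (R x) ∂sphMeasure n = ∫ x, g x ∂sphMeasure n :=
  (measurePreserving_isometry R).integral_comp R.toHomeomorph.measurableEmbedding g

lemma sphMeasure_pos_of_isOpen {O : Set (E n)} (hO : IsOpen O) {x : E n} (hx : x ∈ O)
    (hxS : x ∈ 𝕊) : 0 < sphMeasure n O := by
  unfold sphMeasure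
  rw [Measure.smul_apply, Measure.map_apply measurable_subtype_coe hO.measurableSet, smul_eq_mul]
  exact ENNReal.mul_pos (ENNReal.inv_ne_zero.2 (measure_ne_top _ _))
    ((hO.preimage continuous_subtype_val).measure_ne_zero _ ⟨⟨x, hxS⟩, hx⟩)

lemma integral_congr_sphere {F : Type*} [NormedAddCommGroup F] [NormedSpace ℝ F] {g h : E n → F}
    (hgh : ∀ x ∈ 𝕊, g x = h x) : ∫ x, g x ∂sphMeasure n = ∫ x, h x ∂sphMeasure n :=
  integral_congr_ae (ae_mem_sphere.mono hgh)

variable [NeZero n]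

lemma integrable_of_continuousOn_sphere {F : Type*} [NormedAddCommGroup F] {g : E n → F}
    (hg : ContinuousOn g 𝕊) : Integrable g (sphMeasure n) :=
  integrable_of_ae_mem_isCompact (isCompact_sphere _ _) ae_mem_sphere hg

lemma integral_mono_sphere {g h : E n → ℝ} (hg : ContinuousOn g 𝕊) (hh : ContinuousOn h 𝕊)
    (hgh : ∀ x ∈ 𝕊, g x ≤ h x) : ∫ x, g x ∂sphMeasure n ≤ ∫ x, h x ∂sphMeasure n :=
  integral_mono_ae (integrable_of_continuousOn_sphere hg) (integrable_of_continuousOn_sphere hh)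
    (ae_mem_sphere.mono hgh)

end SphereMeasure

section LieDeriv

variable {V : Type*} [NormedAddCommGroup V] [NormedSpace ℝ V]

/-- The derivative of `g` along the linear vector field `A`. -/
def lieDeriv (A : V →L[ℝ] V) (g : V → ℝ) (x : V) : ℝ := fderiv ℝ g x (A x)

variable (A B : V →L[ℝ] V) {g h : V → ℝ} {x : V}

lemma lieDeriv_congr (hgh : g =ᶠ[𝓝 x] h) : lieDeriv A g x = lieDeriv A h x := by
  rw [lieDeriv, lieDeriv, hgh.fderiv_eq]

lemma lieDeriv_comp {φ : ℝ → ℝ} {φ' : ℝ} (hφ : HasDerivAt φ φ' (g x))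
    (hg : DifferentiableAt ℝ g x) : lieDeriv A (fun y => φ (g y)) x = φ' * lieDeriv A g x := by
  have h : HasFDerivAt (fun y => φ (g y)) (φ' • fderiv ℝ g x) x :=
    hφ.comp_hasFDerivAt x hg.hasFDerivAt
  rw [lieDeriv, h.fderiv]
  rfl

lemma lieDeriv_const (c : ℝ) : lieDeriv A (fun _ => c) x = 0 := by
  simp [lieDeriv]

lemma lieDeriv_add_const (c : ℝ) : lieDeriv A (fun y => g y + c) = lieDeriv A g := by
  funext x
  rw [lieDeriv, fderiv_add_const, lieDeriv]

lemma lieDeriv_add (hg : DifferentiableAt ℝ g x) (hh : DifferentiableAt ℝ h x) :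
    lieDeriv A (fun y => g y + h y) x = lieDeriv A g x + lieDeriv A h x := by
  rw [lieDeriv, fderiv_fun_add hg hh]
  rfl

lemma lieDeriv_mul (hg : DifferentiableAt ℝ g x) (hh : DifferentiableAt ℝ h x) :
    lieDeriv A (fun y => g y * h y) x = g x * lieDeriv A h x + h x * lieDeriv A g x := by
  rw [lieDeriv, fderiv_fun_mul hg hh]
  rfl

lemma lieDeriv_const_mul (hg : DifferentiableAt ℝ g x) (c : ℝ) :
    lieDeriv A (fun y => c * g y) x = c * lieDeriv A g x := by
  rw [lieDeriv, fderiv_const_mul hg]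
  rfl

lemma lieDeriv_sum {κ : Type*} {s : Finset κ} {G : κ → V → ℝ}
    (hG : ∀ a ∈ s, DifferentiableAt ℝ (G a) x) :
    lieDeriv A (fun y => ∑ a ∈ s, G a y) x = ∑ a ∈ s, lieDeriv A (G a) x := by
  rw [lieDeriv, fderiv_fun_sum hG]
  exact sum_apply _ _ _

lemma lieDeriv_exp (hg : DifferentiableAt ℝ g x) :
    lieDeriv A (fun y => Real.exp (g y)) x = Real.exp (g x) * lieDeriv A g x :=
  lieDeriv_comp A (Real.hasDerivAt_exp _) hg

lemma contDiffAt_lieDeriv {k l : ℕ∞ω} (hg : ContDiffAt ℝ k g x) (hl : l + 1 ≤ k) :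
    ContDiffAt ℝ l (lieDeriv A g) x :=
  (hg.fderiv_right hl).clm_apply A.contDiff.contDiffAt

lemma differentiableAt_lieDeriv (hg : ContDiffAt ℝ 2 g x) :
    DifferentiableAt ℝ (lieDeriv A g) x :=
  (contDiffAt_lieDeriv A (l := 1) hg (by norm_num)).differentiableAt one_ne_zero

lemma lieDeriv_lieDeriv (hg : ContDiffAt ℝ 2 g x) :
    lieDeriv A (lieDeriv B g) x =
      fderiv ℝ (fderiv ℝ g) x (A x) (B x) + fderiv ℝ g x (B (A x)) := by
  have hg' : DifferentiableAt ℝ (fderiv ℝ g) x :=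
    (hg.fderiv_right (m := 1) (by norm_num)).differentiableAt one_ne_zero
  have h : HasFDerivAt (lieDeriv B g) ((fderiv ℝ g x).comp B +
      (fderiv ℝ (fderiv ℝ g) x).flip (B x)) x := hg'.hasFDerivAt.clm_apply B.hasFDerivAt
  rw [lieDeriv, h.fderiv, add_comm]
  rfl

lemma lieDeriv_lieDeriv_sub_swap (hg : ContDiffAt ℝ 2 g x) :
    lieDeriv A (lieDeriv B g) x - lieDeriv B (lieDeriv A g) x =
      lieDeriv (B.comp A - A.comp B) g x := by
  rw [lieDeriv_lieDeriv A B hg, lieDeriv_lieDeriv B A hg,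
    (hg.isSymmSndFDerivAt (by simp)) (A x), add_sub_add_left_eq_sub, ← map_sub]
  rfl

end LieDeriv

section SphSmooth

/-- `g` is of class `C^k` in the ambient space near every point of the unit sphere. -/
def SphSmooth (k : ℕ∞ω) (g : E n → ℝ) : Prop := ∀ x ∈ 𝕊, ContDiffAt ℝ k g x

namespace SphSmooth

variable {k l : ℕ∞ω} {g h : E n → ℝ}

lemma of_le (hg : SphSmooth k g) (hl : l ≤ k) : SphSmooth l g := fun x hx => (hg x hx).of_le hl

lemma continuousOn (hg : SphSmooth k g) : ContinuousOn g 𝕊 :=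
  fun x hx => (hg x hx).continuousAt.continuousWithinAt

lemma differentiableAt (hg : SphSmooth k g) (hk : k ≠ 0) {x : E n} (hx : x ∈ 𝕊) :
    DifferentiableAt ℝ g x :=
  (hg x hx).differentiableAt hk

lemma const (c : ℝ) : SphSmooth k (fun _ : E n => c) := fun _ _ => contDiffAt_const

lemma add (hg : SphSmooth k g) (hh : SphSmooth k h) : SphSmooth k (fun x => g x + h x) :=
  fun x hx => (hg x hx).add (hh x hx)

lemma neg (hg : SphSmooth k g) : SphSmooth k (fun x => -g x) := fun x hx => (hg x hx).neg

lemma mul (hg : SphSmooth k g) (hh : SphSmooth k h) : SphSmooth k (fun x => g x * h x) :=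
  fun x hx => (hg x hx).mul (hh x hx)

lemma exp (hg : SphSmooth k g) : SphSmooth k (fun x => Real.exp (g x)) :=
  fun x hx => (hg x hx).exp

lemma log (hg : SphSmooth k g) (h0 : ∀ x ∈ 𝕊, 0 < g x) : SphSmooth k (fun x => Real.log (g x)) :=
  fun x hx => (hg x hx).log (h0 x hx).ne'

lemma lieDeriv (hg : SphSmooth k g) (hl : l + 1 ≤ k) (A : E n →L[ℝ] E n) :
    SphSmooth l (lieDeriv A g) :=
  fun x hx => contDiffAt_lieDeriv A (hg x hx) hl

end SphSmooth

end SphSmooth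

section Rotations

/-- The generator `x ↦ xᵢ eⱼ - xⱼ eᵢ` of the rotations in the coordinate plane `p = (i, j)`. All
ordered pairs are allowed, so that every plane occurs twice, with opposite orientations. -/
def rotGen (p : Fin n × Fin n) : E n →L[ℝ] E n :=
  (EuclideanSpace.proj p.1).smulRight (EuclideanSpace.single p.2 1) -
    (EuclideanSpace.proj p.2).smulRight (EuclideanSpace.single p.1 1)

variable (p : Fin n × Fin n) {g h : E n → ℝ}

lemma rotGen_apply (x : E n) : rotGen p x =
    x p.1 • EuclideanSpace.single p.2 (1 : ℝ) - x p.2 • EuclideanSpace.single p.1 1 := rfl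

lemma rotGen_apply_coord (m : Fin n) (x : E n) :
    rotGen p x m = (if m = p.2 then x p.1 else 0) - if m = p.1 then x p.2 else 0 := by
  simp [rotGen_apply]

lemma rotGen_swap : rotGen p.swap = -rotGen p := by
  ext1 x
  simp [rotGen_apply]

lemma inner_rotGen_left (x y : E n) : ⟪rotGen p x, y⟫ = x p.1 * y p.2 - x p.2 * y p.1 := by
  simp [rotGen_apply, inner_sub_left, inner_smul_left, EuclideanSpace.inner_single_left]

lemma inner_rotGen_self (x : E n) : ⟪rotGen p x, x⟫ = 0 := by
  rw [inner_rotGen_left, mul_comm, sub_self]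

lemma rotGen_rotGen_rotGen (x : E n) : rotGen p (rotGen p (rotGen p x)) = -rotGen p x := by
  by_cases h : p.1 = p.2
  · simp [rotGen_apply, h]
  · ext m
    simp only [rotGen_apply_coord, PiLp.neg_apply, h, Ne.symm h, if_true, if_false]
    split_ifs <;> simp_all

lemma lieDeriv_rotGen_swap : lieDeriv (rotGen p.swap) g = fun x => -lieDeriv (rotGen p) g x := by
  ext x
  simp [lieDeriv, rotGen_swap]

/-- The rotation by the angle `s` in the coordinate plane `p`, that is `exp (s • rotGen p)`. -/
def rotFlow (s : ℝ) : E n →L[ℝ] E n :=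
  ContinuousLinearMap.id ℝ (E n) + Real.sin s • rotGen p +
    (1 - Real.cos s) • (rotGen p).comp (rotGen p)

lemma rotFlow_apply (s : ℝ) (x : E n) : rotFlow p s x =
    x + Real.sin s • rotGen p x + (1 - Real.cos s) • rotGen p (rotGen p x) := rfl

@[simp] lemma rotFlow_zero (x : E n) : rotFlow p 0 x = x := by
  simp [rotFlow_apply]

lemma continuous_rotFlow : Continuous fun q : ℝ × E n => rotFlow p q.1 q.2 := by
  simp only [rotFlow_apply]
  fun_prop

lemma hasDerivAt_rotFlow (s : ℝ) (x : E n) :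
    HasDerivAt (fun s => rotFlow p s x) (rotGen p (rotFlow p s x)) s := by
  simp only [rotFlow_apply, map_add, map_smul, rotGen_rotGen_rotGen]
  refine ((((Real.hasDerivAt_sin s).smul_const (rotGen p x)).const_add x).add
    (((Real.hasDerivAt_cos s).const_sub 1).smul_const
      (rotGen p (rotGen p x)))).congr_deriv ?_
  module

lemma norm_rotFlow (s : ℝ) (x : E n) : ‖rotFlow p s x‖ = ‖x‖ := by
  have hderiv (s : ℝ) : HasDerivAt (fun s => ‖rotFlow p s x‖ ^ 2) 0 s := by
    have h := (hasDerivAt_rotFlow p s x).norm_sq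
    rwa [real_inner_comm, inner_rotGen_self, mul_zero] at h
  have hconst := is_const_of_deriv_eq_zero (fun s => (hderiv s).differentiableAt)
    (fun s => (hderiv s).deriv) s 0
  rw [rotFlow_zero] at hconst
  exact (sq_eq_sq₀ (norm_nonneg _) (norm_nonneg _)).1 hconst

lemma inner_rotFlow (s : ℝ) (x y : E n) : ⟪rotFlow p s x, rotFlow p s y⟫ = ⟪x, y⟫ :=
  LinearIsometry.inner_map_map ⟨(rotFlow p s).toLinearMap, norm_rotFlow p s⟩ x y

lemma rotFlow_mem_sphere (s : ℝ) {x : E n} (hx : x ∈ 𝕊) : rotFlow p s x ∈ 𝕊 := by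
  simpa [norm_rotFlow] using hx

lemma hasDerivAt_comp_rotFlow {s : ℝ} {x : E n} (hg : DifferentiableAt ℝ g (rotFlow p s x)) :
    HasDerivAt (fun s => g (rotFlow p s x)) (lieDeriv (rotGen p) g (rotFlow p s x)) s :=
  hg.hasFDerivAt.comp_hasDerivAt s (hasDerivAt_rotFlow p s x)

lemma integral_comp_rotFlow (s : ℝ) (g : E n → ℝ) :
    ∫ x, g (rotFlow p s x) ∂sphMeasure n = ∫ x, g x ∂sphMeasure n :=
  integral_comp_isometry (LinearIsometry.toLinearIsometryEquiv
    ⟨(rotFlow p s).toLinearMap, norm_rotFlow p s⟩ rfl) g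

variable [NeZero n]

lemma integral_lieDeriv_rotGen (hg : SphSmooth 1 g) :
    ∫ x, lieDeriv (rotGen p) g x ∂sphMeasure n = 0 := by
  have h := hasDerivAt_integral_of_ae_mem_isCompact (isCompact_sphere (0 : E n) 1) ae_mem_sphere
    (f := fun s x => g (rotFlow p s x)) (f' := fun s x => lieDeriv (rotGen p) g (rotFlow p s x))
    (t₀ := 0) one_pos
    (fun t _ => hg.continuousOn.comp (rotFlow p t).continuous.continuousOn
      fun x hx => rotFlow_mem_sphere p t hx)
    ((hg.lieDeriv (l := 0) (by simp) (rotGen p)).continuousOn.comp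
      (continuous_rotFlow p).continuousOn fun q hq => rotFlow_mem_sphere p q.1 hq.2)
    (fun t _ x hx => hasDerivAt_comp_rotFlow p
      (hg.differentiableAt one_ne_zero (rotFlow_mem_sphere p t hx)))
  simp only [integral_comp_rotFlow, rotFlow_zero] at h
  exact h.unique (hasDerivAt_const _ _)

end Rotations

section CurvatureAlgebra

open scoped Matrix

variable {ι : Type*}

/-- The coordinates of the bivector `a ∧ b`, indexed by all ordered pairs. -/
def wedge (a b : ι → ℝ) (q : ι × ι) : ℝ := a q.1 * b q.2 - a q.2 * b q.1

variable {x p t : ι → ℝ} {F H : ι → ι → ℝ}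

lemma sum_wedge_mul_wedge [Fintype ι] (a b c d : ι → ℝ) :
    ∑ q, wedge a b q * wedge c d q = 2 * ((a ⬝ᵥ c) * (b ⬝ᵥ d) - (a ⬝ᵥ d) * (b ⬝ᵥ c)) := by
  have h (u v : ι → ℝ) : (∑ i, u i) * ∑ i, v i = ∑ q : ι × ι, u q.1 * v q.2 := by
    rw [Finset.sum_mul_sum, Fintype.sum_prod_type]
  have h' (u v : ι → ℝ) : (∑ i, u i) * ∑ i, v i = ∑ q : ι × ι, u q.2 * v q.1 := by
    rw [mul_comm, h]
    exact Finset.sum_congr rfl fun _ _ => mul_comm _ _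
  rw [two_mul]
  nth_rewrite 1 [dotProduct, dotProduct, dotProduct, dotProduct, h, h]
  rw [dotProduct, dotProduct, dotProduct, dotProduct, h', h', ← Finset.sum_sub_distrib,
    ← Finset.sum_sub_distrib, ← Finset.sum_add_distrib]
  exact Finset.sum_congr rfl fun _ _ => by simp only [wedge]; ring

lemma sum_wedge_sq [Fintype ι] (hx : x ⬝ᵥ x = 1) (v : ι → ℝ) :
    ∑ q, wedge x v q ^ 2 = 2 * (v ⬝ᵥ v - (x ⬝ᵥ v) ^ 2) := by
  simp only [pow_two (wedge _ _ _), sum_wedge_mul_wedge, hx, dotProduct_comm v x]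
  ring

-- Cauchy–Schwarz against the projection `1 - x xᵀ`, whose squared norm is `card ι - 1`.
lemma sq_sum_diag_le [Fintype ι] (hx : x ⬝ᵥ x = 1) (hH : ∀ l, x ⬝ᵥ H l = 0) :
    (∑ l, H l l) ^ 2 ≤ (Fintype.card ι - 1) * ∑ l, H l ⬝ᵥ H l := by
  classical
  set P : ι → ι → ℝ := fun l m => (Pi.single l 1 : ι → ℝ) m - x l * x m
  have hHP : ∑ q : ι × ι, P q.1 q.2 * H q.1 q.2 = ∑ l, H l l := by
    have (l m : ι) : P l m * H l m = (if m = l then H l m else 0) - x l * (x m * H l m) := by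
      simp only [P, Pi.single_apply]
      split_ifs <;> ring
    simp only [dotProduct] at hH
    simp only [Fintype.sum_prod_type, this, Finset.sum_sub_distrib, ← Finset.mul_sum, hH]
    simp
  have hPP : ∑ q : ι × ι, P q.1 q.2 ^ 2 = Fintype.card ι - 1 := by
    have (l m : ι) : P l m ^ 2 =
        (if m = l then 1 - 2 * (x m * x m) else 0) + x l * x l * (x m * x m) := by
      simp only [P, Pi.single_apply]
      split_ifs with h
      · rw [h]; ring
      · ring
    simp only [dotProduct] at hx
    simp only [Fintype.sum_prod_type, this, Finset.sum_add_distrib, Finset.sum_ite_eq',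
      Finset.mem_univ, if_true, Finset.sum_sub_distrib, ← Finset.mul_sum, hx, mul_one,
      Finset.sum_const, Finset.card_univ, nsmul_eq_mul]
    ring
  have h := Finset.sum_mul_sq_le_sq_mul_sq Finset.univ (fun q : ι × ι => P q.1 q.2)
    (fun q => H q.1 q.2)
  rw [hHP, hPP, Fintype.sum_prod_type] at h
  simpa only [dotProduct, ← pow_two] using h

variable [DecidableEq ι]

/-- The coordinate expression of the second derivatives along rotations, `L_q L_r f (x)`, where `p`
is the gradient and `F` the Hessian matrix of `f` at `x`. -/
def rotHess (x p : ι → ℝ) (F : ι → ι → ℝ) (q r : ι × ι) : ℝ :=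
  wedge x (fun l => wedge x (F l) r + wedge (Pi.single l 1) p r) q

lemma rotHess_add_rankOne (β : ℝ) (q r : ι × ι) :
    rotHess x p (fun l m => F l m + β * (p l * p m)) q r =
      rotHess x p F q r + β * (wedge x p q * wedge x p r) := by
  simp only [rotHess, wedge]
  ring

-- A radial change of the gradient and the Hessian is invisible on the sphere.
lemma rotHess_eq_of_radial_change (y : ι → ℝ) (c d : ℝ) (q r : ι × ι) :
    rotHess x (fun m => p m - d * x m)
        (fun l m => F l m - x l * y m - y l * x m + c * (x l * x m) -
          d * (Pi.single l 1 : ι → ℝ) m) q r = rotHess x p F q r := by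
  simp only [rotHess, wedge]
  ring

variable [Fintype ι]

lemma dotProduct_wedge_add_wedge (hH : ∀ l, x ⬝ᵥ H l = 0) (hsymm : ∀ l m, H l m = H m l)
    (r : ι × ι) :
    x ⬝ᵥ (fun l => wedge x (H l) r + wedge (Pi.single l 1) t r) = wedge x t r := by
  have hH' (m : ι) : ∑ l, x l * H l m = 0 :=
    (Finset.sum_congr rfl fun l _ => by rw [hsymm]).trans (hH m)
  have hterm (l : ι) : x l * (wedge x (H l) r + wedge (Pi.single l 1) t r) =
      x r.1 * (x l * H l r.2) - x r.2 * (x l * H l r.1) +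
        (x l * (Pi.single l 1 : ι → ℝ) r.1 * t r.2 -
          x l * (Pi.single l 1 : ι → ℝ) r.2 * t r.1) := by
    simp only [wedge]
    ring
  simp only [dotProduct, hterm, Finset.sum_add_distrib, Finset.sum_sub_distrib, ← Finset.mul_sum,
    ← Finset.sum_mul, hH', mul_zero, sub_zero, zero_add]
  simp only [Pi.single_apply, mul_ite, mul_one, mul_zero, Finset.sum_ite_eq, Finset.mem_univ,
    if_true, wedge]

lemma sum_sum_rotHess_sq (hx : x ⬝ᵥ x = 1) (ht : x ⬝ᵥ t = 0) (hH : ∀ l, x ⬝ᵥ H l = 0)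
    (hsymm : ∀ l m, H l m = H m l) :
    ∑ r, ∑ q, rotHess x t H q r ^ 2 =
      4 * (∑ l, H l ⬝ᵥ H l + (Fintype.card ι - 2) * (t ⬝ᵥ t)) := by
  set B : ι × ι → ι → ℝ := fun r l => wedge x (H l) r + wedge (Pi.single l 1) t r
  have hB (l : ι) : ∑ r, B r l ^ 2 = 2 * (H l ⬝ᵥ H l) + 2 * (t ⬝ᵥ t - t l * t l) +
      4 * (x l * (H l ⬝ᵥ t)) := by
    have hsq (r : ι × ι) : B r l ^ 2 = wedge x (H l) r ^ 2 +
        wedge (Pi.single l 1) t r * wedge (Pi.single l 1) t r +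
        2 * (wedge x (H l) r * wedge (Pi.single l 1) t r) := by
      simp only [B]
      ring
    simp only [hsq, Finset.sum_add_distrib, ← Finset.mul_sum, sum_wedge_sq hx,
      sum_wedge_mul_wedge, hH, ht, single_dotProduct, dotProduct_single, Pi.single_eq_same]
    ring
  have hcross : ∑ l, x l * (H l ⬝ᵥ t) = 0 := by
    simp only [dotProduct, Finset.mul_sum]
    rw [Finset.sum_comm]
    refine Finset.sum_eq_zero fun m _ => ?_
    rw [← zero_mul (t m), ← hH m, dotProduct, Finset.sum_mul]
    exact Finset.sum_congr rfl fun l _ => by rw [hsymm]; ring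
  calc ∑ r, ∑ q, rotHess x t H q r ^ 2 = 2 * ∑ l, ∑ r, B r l ^ 2 - 2 * ∑ r, wedge x t r ^ 2 := by
        rw [Finset.sum_comm (f := fun l r => B r l ^ 2), Finset.mul_sum, Finset.mul_sum,
          ← Finset.sum_sub_distrib]
        refine Finset.sum_congr rfl fun r _ => ?_
        have hr : ∑ q, rotHess x t H q r ^ 2 = 2 * (B r ⬝ᵥ B r - (x ⬝ᵥ B r) ^ 2) :=
          sum_wedge_sq hx (B r)
        rw [hr, dotProduct_wedge_add_wedge hH hsymm, mul_sub, dotProduct]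
        simp only [pow_two]
    _ = _ := by
        simp only [hB, sum_wedge_sq hx, ht, Finset.sum_add_distrib, Finset.sum_sub_distrib,
          ← Finset.mul_sum, hcross, Finset.sum_const, Finset.card_univ, nsmul_eq_mul,
          ← dotProduct.eq_1 t t]
        ring

lemma sum_rotHess_self (hx : x ⬝ᵥ x = 1) (ht : x ⬝ᵥ t = 0) (hH : ∀ l, x ⬝ᵥ H l = 0) :
    ∑ r, rotHess x t H r r = 2 * ∑ l, H l l := by
  have hterm (r : ι × ι) : rotHess x t H r r =
      x r.1 * x r.1 * H r.2 r.2 + H r.1 r.1 * (x r.2 * x r.2) - x r.1 * t r.1 - x r.2 * t r.2 -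
      x r.1 * (x r.2 * H r.1 r.2) - x r.2 * (x r.1 * H r.2 r.1) +
      2 * (if r.1 = r.2 then x r.1 * t r.1 else 0) := by
    obtain ⟨i, j⟩ := r
    rcases eq_or_ne i j with rfl | hij
    · simp [rotHess, wedge]; ring
    · simp [rotHess, wedge, hij, hij.symm]; ring
  have hswap : ∑ i, ∑ j, x j * (x i * H j i) = ∑ j, ∑ i, x j * (x i * H j i) := Finset.sum_comm
  simp only [dotProduct] at hx ht hH
  simp only [hterm, Fintype.sum_prod_type, Finset.sum_add_distrib, Finset.sum_sub_distrib, hswap,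
    Finset.sum_const, ← Finset.smul_sum, ← Finset.mul_sum, ← Finset.sum_mul, hx, hH, ht,
    Finset.sum_ite_eq, Finset.mem_univ, if_true, smul_zero, mul_zero, mul_one, one_mul, sub_zero]
  ring

lemma sq_sum_rotHess_self_le_of_tangential (hx : x ⬝ᵥ x = 1) (ht : x ⬝ᵥ t = 0)
    (hH : ∀ l, x ⬝ᵥ H l = 0) (hsymm : ∀ l m, H l m = H m l) :
    (1 / 2 * ∑ r, rotHess x t H r r) ^ 2 ≤ (Fintype.card ι - 1) *
      (1 / 4 * ∑ r, ∑ q, rotHess x t H q r ^ 2 - (Fintype.card ι - 2) * (t ⬝ᵥ t)) := by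
  rw [sum_rotHess_self hx ht hH, sum_sum_rotHess_sq hx ht hH hsymm]
  linarith [sq_sum_diag_le hx hH]

lemma sq_sum_rotHess_self_le (hx : x ⬝ᵥ x = 1) (hsymm : ∀ l m, F l m = F m l) :
    (1 / 2 * ∑ r, rotHess x p F r r) ^ 2 ≤ (Fintype.card ι - 1) *
      (1 / 4 * ∑ r, ∑ q, rotHess x p F q r ^ 2 -
        (Fintype.card ι - 2) * (1 / 2 * ∑ r, wedge x p r ^ 2)) := by
  set d := x ⬝ᵥ p
  set y : ι → ℝ := fun l => x ⬝ᵥ F l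
  have hsingle (l m : ι) : (Pi.single l 1 : ι → ℝ) m = (Pi.single m 1 : ι → ℝ) l := by
    simp only [Pi.single_apply, eq_comm]
  have ht : x ⬝ᵥ (fun m => p m - d * x m) = 0 := by
    change x ⬝ᵥ (p - d • x) = 0
    rw [dotProduct_sub, dotProduct_smul, hx, smul_eq_mul, mul_one, sub_self]
  have htt : (fun m => p m - d * x m) ⬝ᵥ (fun m => p m - d * x m) =
      1 / 2 * ∑ r, wedge x p r ^ 2 := by
    change (p - d • x) ⬝ᵥ (p - d • x) = _
    simp only [sum_wedge_sq hx, dotProduct_sub, sub_dotProduct, dotProduct_smul, smul_dotProduct,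
      hx, dotProduct_comm p x, smul_eq_mul, d]
    ring
  have hH (l : ι) : x ⬝ᵥ (fun m => F l m - x l * y m - y l * x m + (x ⬝ᵥ y + d) * (x l * x m) -
      d * (Pi.single l 1 : ι → ℝ) m) = 0 := by
    change x ⬝ᵥ (F l - x l • y - y l • x + (x ⬝ᵥ y + d) • x l • x - d • Pi.single l 1) = 0
    simp only [dotProduct_sub, dotProduct_add, dotProduct_smul, hx, dotProduct_single, smul_eq_mul,
      mul_one, y]
    ring
  have h := sq_sum_rotHess_self_le_of_tangential hx ht hH fun l m => by
    rw [hsymm l m, hsingle l m]; ring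
  rw [htt] at h
  simpa only [rotHess_eq_of_radial_change] using h

end CurvatureAlgebra

section GammaCalculus

variable {V : Type*} [NormedAddCommGroup V] [NormedSpace ℝ V] {ι : Type*} [Fintype ι]

/-- The carré du champ of the operator `sumSquares A`. -/
def carreDuChamp (A : ι → V →L[ℝ] V) (g h : V → ℝ) (x : V) : ℝ :=
  1 / 2 * ∑ a, lieDeriv (A a) g x * lieDeriv (A a) h x

/-- Half the sum of the squares of the linear vector fields `A a`. For the infinitesimal rotations
`rotGen`, where each coordinate plane occurs twice, this is the spherical Laplacian. -/
def sumSquares (A : ι → V →L[ℝ] V) (g : V → ℝ) (x : V) : ℝ :=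
  1 / 2 * ∑ a, lieDeriv (A a) (lieDeriv (A a) g) x

/-- The iterated carré du champ `Γ₂` of `sumSquares A`, in the form which Bochner's formula gives it
when the vector fields `A a` commute with `sumSquares A`. -/
def iteratedCarreDuChamp (A : ι → V →L[ℝ] V) (g : V → ℝ) (x : V) : ℝ :=
  1 / 2 * ∑ a, carreDuChamp A (lieDeriv (A a) g) (lieDeriv (A a) g) x

variable (A : ι → V →L[ℝ] V) {f g h : V → ℝ} {x : V} {k l : ℕ∞ω}

lemma contDiffAt_carreDuChamp (hg : ContDiffAt ℝ k g x) (hh : ContDiffAt ℝ k h x)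
    (hl : l + 1 ≤ k) : ContDiffAt ℝ l (carreDuChamp A g h) x :=
  contDiffAt_const.mul (ContDiffAt.sum fun a _ =>
    (contDiffAt_lieDeriv (A a) hg hl).mul (contDiffAt_lieDeriv (A a) hh hl))

lemma contDiffAt_sumSquares (hg : ContDiffAt ℝ k g x) (hl : l + 2 ≤ k) :
    ContDiffAt ℝ l (sumSquares A g) x :=
  contDiffAt_const.mul (ContDiffAt.sum fun a _ =>
    contDiffAt_lieDeriv (A a) (contDiffAt_lieDeriv (A a) (l := l + 1) hg
      (by rwa [add_assoc, one_add_one_eq_two])) le_rfl)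

lemma contDiffAt_iteratedCarreDuChamp (hg : ContDiffAt ℝ k g x) (hl : l + 2 ≤ k) :
    ContDiffAt ℝ l (iteratedCarreDuChamp A g) x :=
  contDiffAt_const.mul (ContDiffAt.sum fun a _ =>
    have ha : ContDiffAt ℝ (l + 1) (lieDeriv (A a) g) x :=
      contDiffAt_lieDeriv (A a) hg (by rwa [add_assoc, one_add_one_eq_two])
    contDiffAt_carreDuChamp A ha ha le_rfl)

lemma carreDuChamp_self_nonneg : 0 ≤ carreDuChamp A g g x :=
  mul_nonneg (by norm_num) (Finset.sum_nonneg fun _ _ => mul_self_nonneg _)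

lemma carreDuChamp_comm : carreDuChamp A g h x = carreDuChamp A h g x := by
  simp only [carreDuChamp, mul_comm]

lemma carreDuChamp_comp_left {φ : ℝ → ℝ} {φ' : ℝ} (hφ : HasDerivAt φ φ' (g x))
    (hg : DifferentiableAt ℝ g x) :
    carreDuChamp A (fun y => φ (g y)) h x = φ' * carreDuChamp A g h x := by
  simp only [carreDuChamp, lieDeriv_comp _ hφ hg, mul_assoc, ← Finset.mul_sum]
  ring

lemma carreDuChamp_comp_self {φ : ℝ → ℝ} {φ' : ℝ} (hφ : HasDerivAt φ φ' (g x))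
    (hg : DifferentiableAt ℝ g x) :
    carreDuChamp A (fun y => φ (g y)) (fun y => φ (g y)) x = φ' ^ 2 * carreDuChamp A g g x := by
  rw [carreDuChamp_comp_left A hφ hg, carreDuChamp_comm, carreDuChamp_comp_left A hφ hg, sq,
    mul_assoc]

lemma lieDeriv_carreDuChamp_self (B : V →L[ℝ] V) (hf : ContDiffAt ℝ 2 f x) :
    lieDeriv B (carreDuChamp A f f) x =
      ∑ a, lieDeriv (A a) f x * lieDeriv B (lieDeriv (A a) f) x := by
  have hd (a : ι) := differentiableAt_lieDeriv (A a) hf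
  unfold carreDuChamp
  rw [lieDeriv_const_mul B (.fun_sum fun a _ => (hd a).fun_mul (hd a)),
    lieDeriv_sum B fun a _ => (hd a).fun_mul (hd a)]
  simp only [lieDeriv_mul B (hd _) (hd _), Finset.sum_add_distrib]
  ring

lemma sumSquares_mul (hg : ContDiffAt ℝ 2 g x) (hh : ContDiffAt ℝ 2 h x) :
    sumSquares A (fun y => g y * h y) x =
      g x * sumSquares A h x + h x * sumSquares A g x + 2 * carreDuChamp A g h x := by
  have hterm (a : ι) : lieDeriv (A a) (lieDeriv (A a) fun y => g y * h y) x =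
      g x * lieDeriv (A a) (lieDeriv (A a) h) x + h x * lieDeriv (A a) (lieDeriv (A a) g) x +
        2 * (lieDeriv (A a) g x * lieDeriv (A a) h x) := by
    have hprod : lieDeriv (A a) (fun y => g y * h y) =ᶠ[𝓝 x]
        fun y => g y * lieDeriv (A a) h y + h y * lieDeriv (A a) g y := by
      filter_upwards [hg.eventually (by simp), hh.eventually (by simp)] with y hgy hhy
      exact lieDeriv_mul _ (hgy.differentiableAt two_ne_zero) (hhy.differentiableAt two_ne_zero)
    have dg := hg.differentiableAt two_ne_zero
    have dh := hh.differentiableAt two_ne_zero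
    have dg' := differentiableAt_lieDeriv (A a) hg
    have dh' := differentiableAt_lieDeriv (A a) hh
    rw [lieDeriv_congr _ hprod, lieDeriv_add _ (dg.fun_mul dh') (dh.fun_mul dg'),
      lieDeriv_mul _ dg dh', lieDeriv_mul _ dh dg']
    ring
  simp only [sumSquares, carreDuChamp, hterm, Finset.sum_add_distrib, ← Finset.mul_sum]
  ring

lemma sumSquares_exp (hf : ContDiffAt ℝ 2 f x) :
    sumSquares A (fun y => Real.exp (f y)) x =
      Real.exp (f x) * (sumSquares A f x + carreDuChamp A f f x) := by
  have hterm (a : ι) : lieDeriv (A a) (lieDeriv (A a) fun y => Real.exp (f y)) x =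
      Real.exp (f x) * (lieDeriv (A a) (lieDeriv (A a) f) x +
        lieDeriv (A a) f x * lieDeriv (A a) f x) := by
    have hexp : lieDeriv (A a) (fun y => Real.exp (f y)) =ᶠ[𝓝 x]
        fun y => Real.exp (f y) * lieDeriv (A a) f y := by
      filter_upwards [hf.eventually (by simp)] with y hy
      exact lieDeriv_exp _ (hy.differentiableAt two_ne_zero)
    have df := hf.differentiableAt two_ne_zero
    rw [lieDeriv_congr _ hexp, lieDeriv_mul _ df.exp (differentiableAt_lieDeriv (A a) hf),
      lieDeriv_exp _ df]
    ring
  simp only [sumSquares, carreDuChamp, hterm, ← Finset.mul_sum, Finset.sum_add_distrib]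
  ring

lemma sumSquares_congr (hgh : g =ᶠ[𝓝 x] h) : sumSquares A g x = sumSquares A h x := by
  have hterm (a : ι) : lieDeriv (A a) (lieDeriv (A a) g) x = lieDeriv (A a) (lieDeriv (A a) h) x :=
    lieDeriv_congr _ (hgh.eventuallyEq_nhds.mono fun _ hy => lieDeriv_congr _ hy)
  simp only [sumSquares, hterm]

lemma sumSquares_eq_mul_log (hf : ContDiffAt ℝ 2 f x) (h0 : 0 < f x) :
    sumSquares A f x = f x * (sumSquares A (fun y => Real.log (f y)) x +
      carreDuChamp A (fun y => Real.log (f y)) (fun y => Real.log (f y)) x) := by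
  have hexp : f =ᶠ[𝓝 x] fun y => Real.exp (Real.log (f y)) := by
    filter_upwards [hf.continuousAt.eventually (lt_mem_nhds h0)] with y hy
    rw [Real.exp_log hy]
  rw [sumSquares_congr A hexp, sumSquares_exp A (hf.log h0.ne'), Real.exp_log h0]

lemma sumSquares_const_mul (hg : ContDiffAt ℝ 2 g x) (c : ℝ) :
    sumSquares A (fun y => c * g y) x = c * sumSquares A g x := by
  have hterm (a : ι) : lieDeriv (A a) (lieDeriv (A a) fun y => c * g y) x =
      c * lieDeriv (A a) (lieDeriv (A a) g) x := by
    have hmul : lieDeriv (A a) (fun y => c * g y) =ᶠ[𝓝 x] fun y => c * lieDeriv (A a) g y := by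
      filter_upwards [hg.eventually (by simp)] with y hy
      exact lieDeriv_const_mul _ (hy.differentiableAt two_ne_zero) c
    rw [lieDeriv_congr _ hmul, lieDeriv_const_mul _ (differentiableAt_lieDeriv _ hg)]
  simp only [sumSquares, hterm, ← Finset.mul_sum]
  ring

lemma sumSquares_sum {κ : Type*} {s : Finset κ} {G : κ → V → ℝ}
    (hG : ∀ i ∈ s, ContDiffAt ℝ 2 (G i) x) :
    sumSquares A (fun y => ∑ i ∈ s, G i y) x = ∑ i ∈ s, sumSquares A (G i) x := by
  have hterm (a : ι) : lieDeriv (A a) (lieDeriv (A a) fun y => ∑ i ∈ s, G i y) x =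
      ∑ i ∈ s, lieDeriv (A a) (lieDeriv (A a) (G i)) x := by
    have hsum : lieDeriv (A a) (fun y => ∑ i ∈ s, G i y) =ᶠ[𝓝 x]
        fun y => ∑ i ∈ s, lieDeriv (A a) (G i) y := by
      filter_upwards [(Filter.eventually_all_finset s).2 fun i hi => (hG i hi).eventually (by simp)]
        with y hy
      exact lieDeriv_sum _ fun i hi => (hy i hi).differentiableAt two_ne_zero
    rw [lieDeriv_congr _ hsum, lieDeriv_sum _ fun i hi => differentiableAt_lieDeriv _ (hG i hi)]
  simp only [sumSquares, hterm]
  rw [← Finset.mul_sum, Finset.sum_comm]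

lemma lieDeriv_sumSquares (B : V →L[ℝ] V) (hg : ContDiffAt ℝ 3 g x) :
    lieDeriv B (sumSquares A g) x =
      1 / 2 * ∑ a, lieDeriv B (lieDeriv (A a) (lieDeriv (A a) g)) x := by
  have hd (a : ι) : DifferentiableAt ℝ (lieDeriv (A a) (lieDeriv (A a) g)) x :=
    differentiableAt_lieDeriv _ (contDiffAt_lieDeriv _ hg (by norm_num))
  unfold sumSquares
  rw [lieDeriv_const_mul B (.fun_sum fun a _ => hd a), lieDeriv_sum B fun a _ => hd a]

lemma lieDeriv_comp_sub_comp {B : V →L[ℝ] V} {C : ι → ι → ℝ} {a : ι}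
    (hC : B.comp (A a) - (A a).comp B = ∑ c, C a c • A c) (hg : ContDiffAt ℝ 2 g x) :
    lieDeriv (A a) (lieDeriv B g) x =
      lieDeriv B (lieDeriv (A a) g) x + ∑ c, C a c * lieDeriv (A c) g x := by
  rw [← sub_eq_iff_eq_add', lieDeriv_lieDeriv_sub_swap _ _ hg, hC]
  simp [lieDeriv]

-- This is the invariance of a Casimir element: the structure constants of the bracket with `B` are
-- antisymmetric, so the first order terms cancel in pairs.
lemma sumSquares_lieDeriv {B : V →L[ℝ] V} {C : ι → ι → ℝ} (hanti : ∀ a c, C a c = -C c a)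
    (hC : ∀ a, B.comp (A a) - (A a).comp B = ∑ c, C a c • A c) (hg : ContDiffAt ℝ 3 g x) :
    sumSquares A (lieDeriv B g) x = lieDeriv B (sumSquares A g) x := by
  have hg' (a : ι) : ContDiffAt ℝ 2 (lieDeriv (A a) g) x := contDiffAt_lieDeriv _ hg (by norm_num)
  have hd (a c : ι) : DifferentiableAt ℝ (fun y => C a c * lieDeriv (A c) g y) x :=
    ((hg' c).differentiableAt two_ne_zero).const_mul _
  have hterm (a : ι) : lieDeriv (A a) (lieDeriv (A a) (lieDeriv B g)) x =
      lieDeriv B (lieDeriv (A a) (lieDeriv (A a) g)) x +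
        (∑ c, C a c * lieDeriv (A c) (lieDeriv (A a) g) x +
          ∑ c, C a c * lieDeriv (A a) (lieDeriv (A c) g) x) := by
    have hcomm : lieDeriv (A a) (lieDeriv B g) =ᶠ[𝓝 x]
        fun y => lieDeriv B (lieDeriv (A a) g) y + ∑ c, C a c * lieDeriv (A c) g y :=
      ((hg.of_le (by norm_num)).eventually (by simp)).mono fun y hy =>
        lieDeriv_comp_sub_comp A (hC a) hy
    rw [lieDeriv_congr _ hcomm, lieDeriv_add _ (differentiableAt_lieDeriv B (hg' a))
      (.fun_sum fun c _ => hd a c), lieDeriv_comp_sub_comp A (hC a) (hg' a),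
      lieDeriv_sum _ fun c _ => hd a c, add_assoc]
    simp only [lieDeriv_const_mul _ ((hg' _).differentiableAt two_ne_zero)]
  have hcancel : ∑ a, ∑ c, C a c * lieDeriv (A c) (lieDeriv (A a) g) x =
      -∑ a, ∑ c, C a c * lieDeriv (A a) (lieDeriv (A c) g) x := by
    rw [Finset.sum_comm]
    simp only [← Finset.sum_neg_distrib, ← neg_mul, ← hanti]
  rw [lieDeriv_sumSquares A B hg, sumSquares]
  simp only [hterm, Finset.sum_add_distrib, hcancel, neg_add_cancel, add_zero]

lemma sumSquares_carreDuChamp_self (hf : ContDiffAt ℝ 3 f x)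
    (hcomm : ∀ a, sumSquares A (lieDeriv (A a) f) x = lieDeriv (A a) (sumSquares A f) x) :
    sumSquares A (carreDuChamp A f f) x = 2 * carreDuChamp A f (sumSquares A f) x +
      2 * iteratedCarreDuChamp A f x := by
  have hd (a : ι) : ContDiffAt ℝ 2 (lieDeriv (A a) f) x := contDiffAt_lieDeriv _ hf (by norm_num)
  have hexpand : sumSquares A (carreDuChamp A f f) x =
      1 / 2 * ∑ a, sumSquares A (fun y => lieDeriv (A a) f y * lieDeriv (A a) f y) x := by
    rw [← sumSquares_sum A fun a _ => (hd a).mul (hd a),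
      ← sumSquares_const_mul A (.sum fun a _ => (hd a).mul (hd a))]
    rfl
  rw [hexpand]
  simp only [sumSquares_mul A (hd _) (hd _), hcomm, Finset.sum_add_distrib, ← Finset.mul_sum]
  simp only [iteratedCarreDuChamp, carreDuChamp]
  ring

lemma sum_sum_sq_lieDeriv_lieDeriv_add (hf : ContDiffAt ℝ 2 f x) (β : ℝ) :
    1 / 4 * ∑ a, ∑ b, (lieDeriv (A b) (lieDeriv (A a) f) x +
        β * (lieDeriv (A b) f x * lieDeriv (A a) f x)) ^ 2 =
      iteratedCarreDuChamp A f x +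
        β * carreDuChamp A f (carreDuChamp A f f) x + β ^ 2 * carreDuChamp A f f x ^ 2 := by
  have hΓΓ : carreDuChamp A f (carreDuChamp A f f) x = 1 / 2 * ∑ a, ∑ b,
      lieDeriv (A b) (lieDeriv (A a) f) x * (lieDeriv (A b) f x * lieDeriv (A a) f x) := by
    rw [carreDuChamp, Finset.sum_comm]
    simp only [lieDeriv_carreDuChamp_self A _ hf, Finset.mul_sum]
    simp only [mul_comm, mul_left_comm]
  have hΓsq : carreDuChamp A f f x ^ 2 =
      1 / 4 * ∑ a, ∑ b, (lieDeriv (A b) f x * lieDeriv (A a) f x) ^ 2 := by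
    rw [Finset.sum_comm]
    simp only [carreDuChamp, mul_pow, ← pow_two, ← Finset.mul_sum, ← Finset.sum_mul]
    ring
  have hsq (a b : ι) : (lieDeriv (A b) (lieDeriv (A a) f) x +
      β * (lieDeriv (A b) f x * lieDeriv (A a) f x)) ^ 2 =
      lieDeriv (A b) (lieDeriv (A a) f) x * lieDeriv (A b) (lieDeriv (A a) f) x + 2 * β *
        (lieDeriv (A b) (lieDeriv (A a) f) x * (lieDeriv (A b) f x * lieDeriv (A a) f x)) +
      β ^ 2 * (lieDeriv (A b) f x * lieDeriv (A a) f x) ^ 2 := by ring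
  rw [hΓΓ, hΓsq]
  simp only [hsq, iteratedCarreDuChamp, carreDuChamp, Finset.sum_add_distrib, ← Finset.mul_sum]
  ring

namespace SphSmooth

variable {B : ι → E n →L[ℝ] E n} {g h : E n → ℝ}

lemma carreDuChamp (hg : SphSmooth k g) (hh : SphSmooth k h) (hl : l + 1 ≤ k) :
    SphSmooth l (carreDuChamp B g h) :=
  fun x hx => contDiffAt_carreDuChamp B (hg x hx) (hh x hx) hl

lemma sumSquares (hg : SphSmooth k g) (hl : l + 2 ≤ k) : SphSmooth l (sumSquares B g) :=
  fun x hx => contDiffAt_sumSquares B (hg x hx) hl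

lemma iteratedCarreDuChamp (hg : SphSmooth k g) (hl : l + 2 ≤ k) :
    SphSmooth l (iteratedCarreDuChamp B g) :=
  fun x hx => contDiffAt_iteratedCarreDuChamp B (hg x hx) hl

end SphSmooth

end GammaCalculus

local notation "Γ" => carreDuChamp rotGen
local notation "Δₛ" => sumSquares rotGen
local notation "Γ₂" => iteratedCarreDuChamp rotGen

section CurvatureDimension

open scoped Matrix

variable {f g : E n → ℝ} {x : E n}

lemma dotProduct_self_of_mem_sphere (hx : x ∈ 𝕊) : (x : Fin n → ℝ) ⬝ᵥ x = 1 := by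
  have h := EuclideanSpace.norm_sq_eq x
  rw [mem_sphere_zero_iff_norm.1 hx] at h
  simpa [dotProduct, pow_two] using h.symm

lemma lieDeriv_rotGen_eq_wedge (p : Fin n × Fin n) : lieDeriv (rotGen p) f x =
    wedge x (fun m => fderiv ℝ f x (EuclideanSpace.single m 1)) p := by
  simp [lieDeriv, rotGen_apply, wedge]

lemma lieDeriv_lieDeriv_rotGen_eq_rotHess (hf : ContDiffAt ℝ 2 f x) (q r : Fin n × Fin n) :
    lieDeriv (rotGen q) (lieDeriv (rotGen r) f) x =
      rotHess x (fun m => fderiv ℝ f x (EuclideanSpace.single m 1))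
        (fun l m => fderiv ℝ (fderiv ℝ f) x (EuclideanSpace.single l 1)
          (EuclideanSpace.single m 1)) q r := by
  rw [lieDeriv_lieDeriv _ _ hf]
  simp only [rotGen_apply, map_sub, map_smul, rotHess, wedge, FunLike.coe_sub, FunLike.coe_smul,
    Pi.sub_apply, Pi.smul_apply, smul_eq_mul, PiLp.single_apply, Pi.single_apply]
  ring

-- This is the Bakry–Émery condition `CD(n - 2, n - 1)` for the function `exp (β f)`, divided by
-- `(β exp (β f))²`.
lemma curvature_dimension (hx : x ∈ 𝕊) (hf : ContDiffAt ℝ 2 f x) (β : ℝ) :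
    (Δₛ f x + β * Γ f f x) ^ 2 ≤ ((n : ℝ) - 1) *
      (Γ₂ f x + β * Γ f (Γ f f) x + β ^ 2 * Γ f f x ^ 2 -
        ((n : ℝ) - 2) * Γ f f x) := by
  have h := sq_sum_rotHess_self_le (dotProduct_self_of_mem_sphere hx)
    (p := fun m => fderiv ℝ f x (EuclideanSpace.single m 1))
    (F := fun l m => fderiv ℝ (fderiv ℝ f) x (EuclideanSpace.single l 1)
        (EuclideanSpace.single m 1) + β * (fderiv ℝ f x (EuclideanSpace.single l 1) *
          fderiv ℝ f x (EuclideanSpace.single m 1)))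
    fun l m => by rw [(hf.isSymmSndFDerivAt (by simp)) (EuclideanSpace.single l 1), mul_comm
      (fderiv ℝ f x (EuclideanSpace.single l 1))]
  simp only [rotHess_add_rankOne, ← lieDeriv_lieDeriv_rotGen_eq_rotHess hf,
    ← lieDeriv_rotGen_eq_wedge, sum_sum_sq_lieDeriv_lieDeriv_add rotGen hf,
    Finset.sum_add_distrib, ← Finset.mul_sum, Fintype.card_fin] at h
  simpa only [sumSquares, carreDuChamp, mul_add, mul_left_comm β, ← pow_two] using h

lemma comp_rotGen_sub_rotGen_comp {B : E n →L[ℝ] E n} (hB : ∀ x y, ⟪B x, y⟫ = -⟪x, B y⟫)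
    (q : Fin n × Fin n) :
    B.comp (rotGen q) - (rotGen q).comp B = ∑ r : Fin n × Fin n,
      ((if q.1 = r.1 then B (EuclideanSpace.single q.2 1) r.2 else 0) +
        if q.2 = r.2 then B (EuclideanSpace.single q.1 1) r.1 else 0) • rotGen r := by
  have hcoord (i : Fin n) (y : E n) : (B y) i = -∑ j, B (EuclideanSpace.single i 1) j * y j := by
    have h := hB (EuclideanSpace.single i 1) y
    rw [EuclideanSpace.inner_single_left, PiLp.inner_apply] at h
    simp only [RCLike.inner_apply, conj_trivial, map_one, one_mul] at h
    simp [h, mul_comm]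
  ext y m
  simp only [sub_apply, ContinuousLinearMap.comp_apply, rotGen_apply q y,
    map_sub, map_smul, PiLp.sub_apply, PiLp.smul_apply, smul_eq_mul, rotGen_apply_coord,
    hcoord _ y, sum_apply, smul_apply, WithLp.ofLp_sum, Finset.sum_apply]
  simp only [mul_sub, mul_ite, add_mul, ite_mul, zero_mul, mul_zero, Finset.sum_sub_distrib,
    Fintype.sum_prod_type, Finset.sum_ite_eq, Finset.mem_univ, if_true, Finset.sum_add_distrib,
    Finset.sum_ite_irrel, Finset.sum_const_zero]
  simp only [eq_comm (a := m)]
  split_ifs <;> ring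

lemma sumSquares_rotGen_lieDeriv {B : E n →L[ℝ] E n} (hB : ∀ x y, ⟪B x, y⟫ = -⟪x, B y⟫)
    (hg : ContDiffAt ℝ 3 g x) : Δₛ (lieDeriv B g) x = lieDeriv B (Δₛ g) x := by
  have hskew (i j : Fin n) :
      B (EuclideanSpace.single i 1) j = -B (EuclideanSpace.single j 1) i := by
    have h := hB (EuclideanSpace.single i 1) (EuclideanSpace.single j 1)
    simpa [EuclideanSpace.inner_single_left, EuclideanSpace.inner_single_right] using h
  refine sumSquares_lieDeriv rotGen (fun q r => ?_) (comp_rotGen_sub_rotGen_comp hB) hg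
  rw [hskew q.2, hskew q.1]
  simp only [eq_comm (a := r.1), eq_comm (a := r.2)]
  split_ifs <;> ring

lemma sumSquares_rotGen_lieDeriv_rotGen (p : Fin n × Fin n) (hg : ContDiffAt ℝ 3 g x) :
    Δₛ (lieDeriv (rotGen p) g) x = lieDeriv (rotGen p) (Δₛ g) x :=
  sumSquares_rotGen_lieDeriv (fun x y => by
    rw [inner_rotGen_left, real_inner_comm, inner_rotGen_left]; ring) hg

end CurvatureDimension

section IntegrationByParts

variable {f g h : E n → ℝ}

lemma carreDuChamp_add_exp (hf : SphSmooth 2 f) {x : E n} (hx : x ∈ 𝕊) :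
    Γ h (fun y => Real.exp (f y)) x + h x * Δₛ (fun y => Real.exp (f y)) x =
      Real.exp (f x) * (Γ f h x + h x * (Δₛ f x + Γ f f x)) := by
  rw [sumSquares_exp rotGen (hf x hx), carreDuChamp_comm, carreDuChamp_comp_left rotGen
    (Real.hasDerivAt_exp _) (hf.differentiableAt two_ne_zero hx)]
  ring

variable [NeZero n]

lemma integrable_carreDuChamp_add (hg : SphSmooth 1 g) (hh : SphSmooth 2 h) :
    Integrable (fun x => Γ g h x + g x * Δₛ h x) (sphMeasure n) :=
  integrable_of_continuousOn_sphere
    ((hg.carreDuChamp (l := 0) (hh.of_le (by norm_num)) (by simp)).add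
      ((hg.of_le (by simp)).mul (hh.sumSquares (by simp)))).continuousOn

lemma integral_carreDuChamp_add (hg : SphSmooth 1 g) (hh : SphSmooth 2 h) :
    ∫ x, (Γ g h x + g x * Δₛ h x) ∂sphMeasure n = 0 := by
  have hLh (p : Fin n × Fin n) : SphSmooth 1 (lieDeriv (rotGen p) h) :=
    hh.lieDeriv (by norm_num) _
  have hdiv : ∀ x ∈ 𝕊, Γ g h x + g x * Δₛ h x =
      1 / 2 * ∑ p, lieDeriv (rotGen p) (fun y => g y * lieDeriv (rotGen p) h y) x :=
    fun x hx => by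
    simp only [lieDeriv_mul _ (hg.differentiableAt one_ne_zero hx)
      ((hLh _).differentiableAt one_ne_zero hx), Finset.sum_add_distrib, ← Finset.mul_sum,
      carreDuChamp, sumSquares]
    simp only [mul_comm (lieDeriv _ h x)]
    ring
  rw [integral_congr_sphere hdiv, integral_const_mul, integral_finsetSum _ fun p _ =>
    integrable_of_continuousOn_sphere ((hg.mul (hLh p)).lieDeriv (l := 0) (by simp) _).continuousOn]
  simp only [integral_lieDeriv_rotGen _ (hg.mul (hLh _)), Finset.sum_const_zero, mul_zero]

lemma integral_carreDuChamp (hg : SphSmooth 1 g) (hh : SphSmooth 2 h) :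
    ∫ x, Γ g h x ∂sphMeasure n = -∫ x, g x * Δₛ h x ∂sphMeasure n := by
  rw [eq_neg_iff_add_eq_zero, ← integral_carreDuChamp_add hg hh, integral_add]
  · exact integrable_of_continuousOn_sphere
      (hg.carreDuChamp (l := 0) (hh.of_le (by norm_num)) (by simp)).continuousOn
  · exact integrable_of_continuousOn_sphere
      (hg.continuousOn.mul (hh.sumSquares (l := 0) (by simp)).continuousOn)

lemma integrable_exp_mul_carreDuChamp_add (hf : SphSmooth 2 f) (hh : SphSmooth 1 h) :
    Integrable (fun x => Real.exp (f x) * (Γ f h x + h x * (Δₛ f x + Γ f f x)))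
      (sphMeasure n) :=
  (integrable_congr (ae_mem_sphere.mono fun _ => carreDuChamp_add_exp hf)).1
    (integrable_carreDuChamp_add hh hf.exp)

lemma integral_exp_mul_carreDuChamp_add (hf : SphSmooth 2 f) (hh : SphSmooth 1 h) :
    ∫ x, Real.exp (f x) * (Γ f h x + h x * (Δₛ f x + Γ f f x)) ∂sphMeasure n = 0 := by
  rw [← integral_congr_sphere fun x => carreDuChamp_add_exp hf, integral_carreDuChamp_add hh hf.exp]

lemma integral_exp_mul_iteratedCarreDuChamp_sub (hf : SphSmooth 3 f) :
    ∫ x, Real.exp (f x) * (Γ₂ f x -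
      (Δₛ f x ^ 2 + 3 / 2 * (Δₛ f x * Γ f f x) + 1 / 2 * Γ f f x ^ 2)) ∂sphMeasure n = 0 := by
  have hf2 : SphSmooth 2 f := hf.of_le (by norm_num)
  have hΓ2 : SphSmooth 2 (Γ f f) := hf.carreDuChamp hf (by norm_num)
  have hΓ : SphSmooth 1 (Γ f f) := hΓ2.of_le (by norm_num)
  have hΔ : SphSmooth 1 (Δₛ f) := hf.sumSquares (by norm_num)
  have hexp : SphSmooth 1 (fun x => Real.exp (f x)) := hf.exp.of_le (by norm_num)
  calc ∫ x, Real.exp (f x) * (Γ₂ f x -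
        (Δₛ f x ^ 2 + 3 / 2 * (Δₛ f x * Γ f f x) + 1 / 2 * Γ f f x ^ 2)) ∂sphMeasure n
      = ∫ x, (1 / 2 * (Γ (fun y => Real.exp (f y)) (Γ f f) x + Real.exp (f x) * Δₛ (Γ f f) x) +
          -1 / 2 * (Real.exp (f x) * (Γ f (Γ f f) x + Γ f f x * (Δₛ f x + Γ f f x))) +
          -1 * (Real.exp (f x) * (Γ f (Δₛ f) x + Δₛ f x * (Δₛ f x + Γ f f x)))) ∂sphMeasure n := by
        refine integral_congr_sphere fun x hx => ?_
        rw [sumSquares_carreDuChamp_self rotGen (hf x hx)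
          fun p => sumSquares_rotGen_lieDeriv_rotGen p (hf x hx), carreDuChamp_comp_left rotGen
          (Real.hasDerivAt_exp _) (hf.differentiableAt three_ne_zero hx)]
        ring
    _ = 0 := by
        rw [integral_linear_combination (integrable_carreDuChamp_add hexp hΓ2)
          (integrable_exp_mul_carreDuChamp_add hf2 hΓ)
          (integrable_exp_mul_carreDuChamp_add hf2 hΔ), integral_carreDuChamp_add hexp hΓ2,
          integral_exp_mul_carreDuChamp_add hf2 hΓ, integral_exp_mul_carreDuChamp_add hf2 hΔ]
        norm_num

end IntegrationByParts

section FisherInformation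

variable {f : E n → ℝ}

lemma curvature_dimension_of_three_le (hn : 3 ≤ n) {x : E n} (hx : x ∈ 𝕊)
    (hf : ContDiffAt ℝ 2 f x) :
    0 ≤ ((n : ℝ) - 2) * (Δₛ f x ^ 2 + 3 / 2 * (Δₛ f x * Γ f f x) + 1 / 2 * Γ f f x ^ 2 -
        ((n : ℝ) - 1) * Γ f f x) +
      ((n : ℝ) - 1) * (Γ₂ f x - (Δₛ f x ^ 2 + 3 / 2 * (Δₛ f x * Γ f f x) + 1 / 2 * Γ f f x ^ 2)) +
      ((n : ℝ) - 1) * (3 / (2 * (n + 1))) * (Γ f (Γ f f) x + Γ f f x * (Δₛ f x + Γ f f x)) := by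
  have hn' : (3 : ℝ) ≤ n := by exact_mod_cast hn
  have h := curvature_dimension hx hf (3 / (2 * (n + 1)))
  set β : ℝ := 3 / (2 * (n + 1)) with hβ
  have hβn : β * (n + 1) = 3 / 2 := by rw [hβ]; field_simp
  have hcoeff : 0 ≤ ((n : ℝ) - 1) * β - ((n : ℝ) - 2) * β ^ 2 - 1 / 2 := by
    have : ((n : ℝ) - 1) * β - ((n : ℝ) - 2) * β ^ 2 - 1 / 2 =
        ((n : ℝ) - 2) * (n - 5 / 4) / (n + 1) ^ 2 := by
      rw [hβ]; field_simp; ring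
    rw [this]
    exact div_nonneg (by nlinarith) (by positivity)
  linear_combination h + mul_nonneg hcoeff (sq_nonneg (Γ f f x)) - Δₛ f x * Γ f f x * hβn

-- With `f = log u` this bounds the Fisher information of `u` by its decay rate along the heat flow.
lemma integral_exp_mul_carreDuChamp_le (hn : 3 ≤ n) (hf : SphSmooth 3 f) :
    ((n : ℝ) - 1) * ∫ x, Real.exp (f x) * Γ f f x ∂sphMeasure n ≤
      ∫ x, Real.exp (f x) * (Δₛ f x ^ 2 + 3 / 2 * (Δₛ f x * Γ f f x) +
        1 / 2 * Γ f f x ^ 2) ∂sphMeasure n := by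
  have : NeZero n := ⟨by omega⟩
  have hn' : (3 : ℝ) ≤ n := by exact_mod_cast hn
  have hf2 : SphSmooth 2 f := hf.of_le (by norm_num)
  have hΓ : SphSmooth 1 (Γ f f) := hf.carreDuChamp hf (by norm_num)
  have cE := hf.exp.continuousOn
  have cΓ := hΓ.continuousOn
  have cΔ := (hf2.sumSquares (B := rotGen) (l := 0) (by simp)).continuousOn
  have cΓ₂ := (hf2.iteratedCarreDuChamp (B := rotGen) (l := 0) (by simp)).continuousOn
  set D : E n → ℝ := fun x => Δₛ f x ^ 2 + 3 / 2 * (Δₛ f x * Γ f f x) + 1 / 2 * Γ f f x ^ 2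
  have cD : ContinuousOn D 𝕊 := by fun_prop
  have iΓ : Integrable (fun x => Real.exp (f x) * Γ f f x) (sphMeasure n) :=
    integrable_of_continuousOn_sphere (cE.mul cΓ)
  have iD : Integrable (fun x => Real.exp (f x) * D x) (sphMeasure n) :=
    integrable_of_continuousOn_sphere (cE.mul cD)
  have iDΓ : Integrable (fun x => Real.exp (f x) * D x -
      ((n : ℝ) - 1) * (Real.exp (f x) * Γ f f x)) (sphMeasure n) := iD.sub (iΓ.const_mul _)
  have iΓ₂ : Integrable (fun x => Real.exp (f x) * (Γ₂ f x - D x)) (sphMeasure n) :=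
    integrable_of_continuousOn_sphere (cE.mul (cΓ₂.sub cD))
  have hnonneg : 0 ≤ ∫ x, (((n : ℝ) - 2) * (Real.exp (f x) * D x -
        ((n : ℝ) - 1) * (Real.exp (f x) * Γ f f x)) +
      ((n : ℝ) - 1) * (Real.exp (f x) * (Γ₂ f x - D x)) +
      ((n : ℝ) - 1) * (3 / (2 * (n + 1))) *
        (Real.exp (f x) * (Γ f (Γ f f) x + Γ f f x * (Δₛ f x + Γ f f x)))) ∂sphMeasure n := by
    refine integral_nonneg_of_ae (ae_mem_sphere.mono fun x hx => ?_)
    have h := mul_nonneg (Real.exp_pos (f x)).le (curvature_dimension_of_three_le hn hx (hf2 x hx))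
    change 0 ≤ (_ : ℝ)
    linear_combination h
  rw [integral_linear_combination iDΓ iΓ₂ (integrable_exp_mul_carreDuChamp_add hf2 hΓ),
    integral_exp_mul_iteratedCarreDuChamp_sub hf, integral_exp_mul_carreDuChamp_add hf2 hΓ,
    integral_sub iD (iΓ.const_mul _), integral_const_mul, mul_zero, mul_zero, add_zero,
    add_zero] at hnonneg
  exact sub_nonneg.1 (nonneg_of_mul_nonneg_right hnonneg (by linarith))

end FisherInformation

section TimeDependent

variable {V : Type*} [NormedAddCommGroup V] [NormedSpace ℝ V] (A : V →L[ℝ] V) {u v : ℝ → V → ℝ}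

lemma lieDeriv_prodMap_zero {t : ℝ} {x : V} (hu : DifferentiableAt ℝ (Function.uncurry u) (t, x)) :
    lieDeriv (ContinuousLinearMap.prodMap 0 A) (Function.uncurry u) (t, x) =
      lieDeriv A (u t) x := by
  have h := (hu.hasFDerivAt.comp x (hasFDerivAt_prodMk_right t x)).fderiv
  simp only [Function.comp_def, Function.uncurry_apply_pair] at h
  simp [lieDeriv, h]

lemma contDiff_uncurry_lieDeriv (hu : ContDiff ℝ ∞ (Function.uncurry u)) :
    ContDiff ℝ ∞ (Function.uncurry fun t => lieDeriv A (u t)) := by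
  have h : Function.uncurry (fun t => lieDeriv A (u t)) =
      lieDeriv (ContinuousLinearMap.prodMap 0 A) (Function.uncurry u) :=
    funext fun p => (lieDeriv_prodMap_zero A (hu.differentiable (by simp) p)).symm
  rw [h, contDiff_iff_contDiffAt]
  exact fun p => contDiffAt_lieDeriv _ hu.contDiffAt (by simp)

lemma hasDerivAt_lieDeriv (hu : ContDiff ℝ 2 (Function.uncurry u))
    (hv : ∀ t x, HasDerivAt (fun s => u s x) (v t x) t) (t : ℝ) (x : V) :
    HasDerivAt (fun s => lieDeriv A (u s) x) (lieDeriv A (v t) x) t := by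
  set D := fderiv ℝ (Function.uncurry u) with hD
  have hd (p : ℝ × V) : HasFDerivAt (Function.uncurry u) (D p) p :=
    (hu.differentiable two_ne_zero p).hasFDerivAt
  have hd₂ : HasFDerivAt D (fderiv ℝ D (t, x)) (t, x) :=
    ((hu.fderiv_right (m := 1) le_rfl).differentiable one_ne_zero _).hasFDerivAt
  have hspace (s : ℝ) : lieDeriv A (u s) x = D (s, x) (0, A x) := by
    rw [← lieDeriv_prodMap_zero A (hd _).differentiableAt]
    simp [lieDeriv, hD]
  have htime (y : V) : v t y = D (t, y) (1, 0) := by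
    have h := (hd (t, y)).comp_hasDerivAt t ((hasDerivAt_id t).prodMk (hasDerivAt_const t y))
    exact (hv t y).unique h
  have hD₂ (w : ℝ × V) : HasFDerivAt (fun q => D q w) ((fderiv ℝ D (t, x)).flip w) (t, x) := by
    simpa using hd₂.clm_apply (hasFDerivAt_const w (t, x))
  have hx : HasFDerivAt (v t) (((fderiv ℝ D (t, x)).flip (1, 0)).comp (.inr ℝ ℝ V)) x := by
    rw [funext htime]
    exact (hD₂ (1, 0)).comp x (hasFDerivAt_prodMk_right t x)
  have ht : HasDerivAt (fun s => D (s, x) (0, A x)) (fderiv ℝ D (t, x) (1, 0) (0, A x)) t := by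
    have h := ((hD₂ (0, A x)).comp t (hasFDerivAt_prodMk_left t x)).hasDerivAt
    simpa only [Function.comp_def, ContinuousLinearMap.comp_apply, ContinuousLinearMap.flip_apply,
      ContinuousLinearMap.inl_apply] using h
  rw [funext hspace, lieDeriv, hx.fderiv]
  exact ht.congr_deriv (hu.contDiffAt.isSymmSndFDerivAt (by simp) (1, 0) (0, A x))

end TimeDependent

section MaximumPrinciple

lemma nonpos_of_hasDerivAt_of_forall_le {φ φ' : ℝ → ℝ} {a c : ℝ} (hφ : ∀ s, HasDerivAt φ (φ' s) s)
    (hφ' : HasDerivAt φ' c a) (hmax : ∀ s, φ s ≤ φ a) : c ≤ 0 := by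
  by_contra! hc
  have hderiv : deriv φ = φ' := funext fun s => (hφ s).deriv
  have hM : IsLocalMax φ a := Eventually.of_forall hmax
  have hm : IsLocalMin φ a := isLocalMin_of_deriv_deriv_pos (by rwa [hderiv, hφ'.deriv])
    hM.deriv_eq_zero (hφ a).continuousAt
  have hconst : φ =ᶠ[𝓝 a] fun _ => φ a := hM.and hm |>.mono fun s hs => le_antisymm hs.1 hs.2
  have hzero : φ' =ᶠ[𝓝 a] fun _ => 0 := by simpa [hderiv] using hconst.deriv
  exact hc.ne' ((hφ'.congr_of_eventuallyEq hzero.symm).unique (hasDerivAt_const a 0))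

variable {g : E n → ℝ} {x : E n}

lemma sumSquares_rotGen_nonpos_of_forall_le (hg : SphSmooth 2 g) (hx : x ∈ 𝕊)
    (hmax : ∀ y ∈ 𝕊, g y ≤ g x) : Δₛ g x ≤ 0 := by
  refine mul_nonpos_of_nonneg_of_nonpos (by norm_num) (Finset.sum_nonpos fun p _ => ?_)
  have h₁ (s : ℝ) : HasDerivAt (fun s => g (rotFlow p s x))
      (lieDeriv (rotGen p) g (rotFlow p s x)) s :=
    hasDerivAt_comp_rotFlow p (hg.differentiableAt two_ne_zero (rotFlow_mem_sphere p s hx))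
  have h₂ := hasDerivAt_comp_rotFlow (g := lieDeriv (rotGen p) g) (s := 0) (x := x) p
    ((hg.lieDeriv (l := 1) (by norm_num) _).differentiableAt one_ne_zero
      (rotFlow_mem_sphere p 0 hx))
  rw [rotFlow_zero] at h₂
  exact nonpos_of_hasDerivAt_of_forall_le h₁ h₂ fun s => by
    simpa only [rotFlow_zero] using hmax _ (rotFlow_mem_sphere p s hx)

lemma nonneg_of_hasDerivAt_of_forall_mem_Icc_le {φ : ℝ → ℝ} {c t T : ℝ} (hφ : HasDerivAt φ c t)
    (ht : t ∈ Set.Ioc 0 T) (hmax : ∀ s ∈ Set.Icc 0 T, φ s ≤ φ t) : 0 ≤ c := by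
  have htan : -t ∈ posTangentConeAt (Set.Icc 0 T) t := by
    refine mem_posTangentConeAt_of_segment_subset ?_
    rw [add_neg_cancel]
    exact (convex_Icc 0 T).segment_subset ⟨ht.1.le, ht.2⟩ ⟨le_rfl, ht.1.le.trans ht.2⟩
  have h := IsLocalMaxOn.hasFDerivWithinAt_nonpos (IsMaxOn.localize hmax)
    hφ.hasFDerivAt.hasFDerivWithinAt htan
  simp only [ContinuousLinearMap.toSpanSingleton_apply, smul_eq_mul] at h
  nlinarith [ht.1]

variable {w w' : ℝ → E n → ℝ} {T M : ℝ}

lemma le_of_strict_subsolution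
    (hc : ContinuousOn (Function.uncurry w) (Set.Icc 0 T ×ˢ 𝕊))
    (hs : ∀ t ∈ Set.Icc 0 T, SphSmooth 2 (w t))
    (hd : ∀ t ∈ Set.Icc 0 T, ∀ x ∈ 𝕊, HasDerivAt (fun s => w s x) (w' t x) t)
    (hlt : ∀ t ∈ Set.Icc 0 T, ∀ x ∈ 𝕊, w' t x < Δₛ (w t) x)
    (h0 : ∀ x ∈ 𝕊, w 0 x ≤ M) {t : ℝ} (ht : t ∈ Set.Icc 0 T) (hx : x ∈ 𝕊) : w t x ≤ M := by
  obtain ⟨⟨t₁, x₁⟩, ⟨ht₁, hx₁⟩, hmax⟩ := (isCompact_Icc.prod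
    (isCompact_sphere (0 : E n) 1)).exists_isMaxOn ⟨(t, x), ht, hx⟩ hc
  have hle : ∀ s ∈ Set.Icc 0 T, ∀ y ∈ 𝕊, w s y ≤ w t₁ x₁ := fun s hs y hy =>
    hmax (show (s, y) ∈ Set.Icc 0 T ×ˢ 𝕊 from ⟨hs, hy⟩)
  refine (hle t ht x hx).trans ?_
  rcases ht₁.1.eq_or_lt with h | h
  · dsimp only at h
    exact h ▸ h0 x₁ hx₁
  · have hspace := sumSquares_rotGen_nonpos_of_forall_le (hs t₁ ht₁) hx₁ (hle t₁ ht₁)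
    have htime := nonneg_of_hasDerivAt_of_forall_mem_Icc_le (hd t₁ ht₁ x₁ hx₁) ⟨h, ht₁.2⟩
      fun s hs => hle s hs x₁ hx₁
    linarith [hlt t₁ ht₁ x₁ hx₁]

lemma le_of_subsolution
    (hc : ContinuousOn (Function.uncurry w) (Set.Icc 0 T ×ˢ 𝕊))
    (hs : ∀ t ∈ Set.Icc 0 T, SphSmooth 2 (w t))
    (hd : ∀ t ∈ Set.Icc 0 T, ∀ x ∈ 𝕊, HasDerivAt (fun s => w s x) (w' t x) t)
    (hle : ∀ t ∈ Set.Icc 0 T, ∀ x ∈ 𝕊, w' t x ≤ Δₛ (w t) x)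
    (h0 : ∀ x ∈ 𝕊, w 0 x ≤ M) {t : ℝ} (ht : t ∈ Set.Icc 0 T) (hx : x ∈ 𝕊) : w t x ≤ M := by
  have hstrict (ε : ℝ) (hε : 0 < ε) : w t x + t * -ε ≤ M := by
    refine le_of_strict_subsolution (w := fun t x => w t x + t * -ε)
      (w' := fun t x => w' t x + -ε) (hc.add (by fun_prop))
      (fun t ht => (hs t ht).add (SphSmooth.const _))
      (fun t ht x hx => (hd t ht x hx).fun_add (hasDerivAt_mul_const (-ε)))
      (fun t ht x hx => ?_) (by simpa using h0) ht hx
    have hΔ : Δₛ (fun y => w t y + t * -ε) x = Δₛ (w t) x := by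
      simp only [sumSquares, lieDeriv_add_const]
    linarith [hle t ht x hx]
  have h : Tendsto (fun ε : ℝ => w t x + t * -ε) (𝓝 0) (𝓝 (w t x + t * -0)) :=
    Continuous.tendsto (by fun_prop) 0
  rw [neg_zero, mul_zero, add_zero] at h
  exact le_of_tendsto (h.mono_left nhdsWithin_le_nhds)
    (eventually_nhdsWithin_of_forall (s := Set.Ioi 0) hstrict)

end MaximumPrinciple

section HeatFlow

/-- A smooth solution of the heat equation `∂ₜ u = Δₛ u` of the spherical Laplacian, for all times
and on the whole ambient space. Solutions in finite-dimensional rotation-invariant function spaces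
exist also for negative times. -/
structure IsHeatFlow (u : ℝ → E n → ℝ) : Prop where
  contDiff : ContDiff ℝ ∞ (Function.uncurry u)
  hasDerivAt : ∀ t x, HasDerivAt (fun s => u s x) (Δₛ (u t) x) t

variable {u : ℝ → E n → ℝ}

namespace IsHeatFlow

lemma contDiff_slice (hu : IsHeatFlow u) (t : ℝ) : ContDiff ℝ ∞ (u t) :=
  hu.contDiff.comp (contDiff_prodMk_right t)

lemma contDiffAt_three (hu : IsHeatFlow u) (t : ℝ) (x : E n) : ContDiffAt ℝ 3 (u t) x :=
  (hu.contDiff_slice t).contDiffAt.of_le (WithTop.coe_le_coe.2 le_top)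

lemma sphSmooth (hu : IsHeatFlow u) (t : ℝ) : SphSmooth 3 (u t) := fun x _ =>
  hu.contDiffAt_three t x

lemma lieDeriv_rotGen (hu : IsHeatFlow u) (p : Fin n × Fin n) :
    IsHeatFlow fun t => lieDeriv (rotGen p) (u t) where
  contDiff := contDiff_uncurry_lieDeriv _ hu.contDiff
  hasDerivAt t x := by
    rw [sumSquares_rotGen_lieDeriv_rotGen p (hu.contDiffAt_three t x)]
    exact hasDerivAt_lieDeriv _ (hu.contDiff.of_le (WithTop.coe_le_coe.2 le_top)) hu.hasDerivAt t x

lemma continuous_carreDuChamp (hu : IsHeatFlow u) {v : ℝ → E n → ℝ}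
    (hv : ContDiff ℝ ∞ (Function.uncurry v)) :
    Continuous (Function.uncurry fun t => Γ (u t) (v t)) :=
  continuous_const.mul (continuous_finsetSum _ fun p _ =>
    (contDiff_uncurry_lieDeriv (rotGen p) hu.contDiff).continuous.mul
      (contDiff_uncurry_lieDeriv (rotGen p) hv).continuous)

lemma contDiff_sumSquares (hu : IsHeatFlow u) : ContDiff ℝ ∞ (Function.uncurry fun t => Δₛ (u t)) :=
  contDiff_const.mul (ContDiff.sum fun p _ =>
    contDiff_uncurry_lieDeriv (rotGen p) (hu.lieDeriv_rotGen p).contDiff)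

lemma hasDerivAt_carreDuChamp (hu : IsHeatFlow u) (t : ℝ) (x : E n) :
    HasDerivAt (fun s => Γ (u s) (u s) x) (2 * Γ (u t) (Δₛ (u t)) x) t := by
  have h (p : Fin n × Fin n) : HasDerivAt (fun s => lieDeriv (rotGen p) (u s) x)
      (lieDeriv (rotGen p) (Δₛ (u t)) x) t := by
    rw [← sumSquares_rotGen_lieDeriv_rotGen p (hu.contDiffAt_three t x)]
    exact (hu.lieDeriv_rotGen p).hasDerivAt t x
  refine ((HasDerivAt.fun_sum fun p _ => (h p).fun_mul (h p)).const_mul (1 / 2)).congr_deriv ?_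
  simp only [carreDuChamp, Finset.sum_add_distrib, mul_comm (lieDeriv _ (Δₛ (u t)) x)]
  ring

lemma le_of_forall_le (hu : IsHeatFlow u) {m : ℝ} (h0 : ∀ x ∈ 𝕊, m ≤ u 0 x) {t : ℝ}
    (ht : 0 ≤ t) {x : E n} (hx : x ∈ 𝕊) : m ≤ u t x := by
  have hu2 (t : ℝ) : SphSmooth 2 (u t) := (hu.sphSmooth t).of_le (by norm_num)
  have h := le_of_subsolution (w := fun t x => -1 * u t x) (w' := fun t x => -1 * Δₛ (u t) x)
    (M := -m) (continuous_const.mul hu.contDiff.continuous).continuousOn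
    (fun t _ => (SphSmooth.const _).mul (hu2 t))
    (fun t _ x _ => (hu.hasDerivAt t x).const_mul _)
    (fun t _ x hx => (sumSquares_const_mul rotGen (hu2 t x hx) _).ge)
    (fun x hx => by linarith [h0 x hx]) ⟨ht, le_rfl⟩ hx
  linarith

lemma pos_of_forall_pos (hu : IsHeatFlow u) (h0 : ∀ x ∈ 𝕊, 0 < u 0 x) {t : ℝ}
    (ht : 0 ≤ t) {x : E n} (hx : x ∈ 𝕊) : 0 < u t x := by
  obtain ⟨y, hy, hmin⟩ := (isCompact_sphere (0 : E n) 1).exists_isMinOn ⟨x, hx⟩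
    (hu.sphSmooth 0).continuousOn
  exact (h0 y hy).trans_le (hu.le_of_forall_le (fun z hz => hmin hz) ht hx)

lemma carreDuChamp_le (hu : IsHeatFlow u) (hn : 2 ≤ n) {M : ℝ}
    (h0 : ∀ x ∈ 𝕊, Γ (u 0) (u 0) x ≤ M) {t : ℝ} (ht : 0 ≤ t) {x : E n} (hx : x ∈ 𝕊) :
    Γ (u t) (u t) x ≤ M * Real.exp (-(2 * ((n : ℝ) - 2) * t)) := by
  have hn' : (2 : ℝ) ≤ n := by exact_mod_cast hn
  set κ : ℝ := 2 * ((n : ℝ) - 2)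
  have hΓ (t : ℝ) : SphSmooth 2 (Γ (u t) (u t)) :=
    (hu.sphSmooth t).carreDuChamp (hu.sphSmooth t) (by norm_num)
  have hcurv (t : ℝ) (x : E n) (hx : x ∈ 𝕊) :
      κ * Γ (u t) (u t) x + 2 * Γ (u t) (Δₛ (u t)) x ≤ Δₛ (Γ (u t) (u t)) x := by
    rw [sumSquares_carreDuChamp_self rotGen (hu.contDiffAt_three t x)
      fun p => sumSquares_rotGen_lieDeriv_rotGen p (hu.contDiffAt_three t x)]
    have h := (sq_nonneg _).trans
      (curvature_dimension hx ((hu.contDiffAt_three t x).of_le (by norm_num)) 0)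
    have := nonneg_of_mul_nonneg_right h (by linarith)
    linarith
  have h := le_of_subsolution (w := fun t x => Real.exp (κ * t) * Γ (u t) (u t) x)
    (w' := fun t x => Real.exp (κ * t) * κ * Γ (u t) (u t) x +
      Real.exp (κ * t) * (2 * Γ (u t) (Δₛ (u t)) x)) (M := M)
    (Continuous.mul (by fun_prop) (hu.continuous_carreDuChamp hu.contDiff)).continuousOn
    (fun t _ => (SphSmooth.const _).mul (hΓ t))
    (fun t _ x _ => (hasDerivAt_const_mul κ).exp.fun_mul (hu.hasDerivAt_carreDuChamp t x))
    (fun t _ x hx => by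
      rw [sumSquares_const_mul rotGen (hΓ t x hx), mul_assoc, ← mul_add]
      exact mul_le_mul_of_nonneg_left (hcurv t x hx) (Real.exp_pos _).le)
    (fun x hx => by simpa using h0 x hx) ⟨ht, le_rfl⟩ hx
  rw [Real.exp_neg, ← div_eq_mul_inv, le_div_iff₀ (Real.exp_pos _)]
  linarith

end IsHeatFlow

lemma exists_isHeatFlow_sum {ι : Type*} [Fintype ι] {e : ι → E n → ℝ}
    (he : ∀ a, ContDiff ℝ ∞ (e a)) {m : ι → ι → ℝ} (hm : ∀ a x, Δₛ (e a) x = ∑ b, m a b * e b x)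
    (c₀ : ι → ℝ) : ∃ u : ℝ → E n → ℝ, IsHeatFlow u ∧ u 0 = fun x => ∑ a, c₀ a * e a x := by
  set L : (ι → ℝ) →L[ℝ] (ι → ℝ) :=
    ContinuousLinearMap.pi fun b => ∑ a, m a b • ContinuousLinearMap.proj a with hL
  set c : ℝ → ι → ℝ := fun t => NormedSpace.exp (t • L) c₀ with hc
  have hderiv (t : ℝ) : HasDerivAt c (L (c t)) t := by
    simpa using (hasDerivAt_exp_smul_const' (𝕂 := ℝ) L t).clm_apply (hasDerivAt_const t c₀)
  have hsmooth (b : ι) : ContDiff ℝ ∞ fun t => c t b := by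
    have h : ContDiff ℝ ∞ fun t : ℝ => NormedSpace.exp (t • L) c₀ b :=
      (contDiff_apply ℝ ℝ b).comp (((contDiff_iff_contDiffAt.2 fun A =>
        (NormedSpace.exp_analytic (𝕂 := ℝ) A).contDiffAt).comp
          (contDiff_id.smul contDiff_const)).clm_apply contDiff_const)
    exact h
  refine ⟨fun t x => ∑ a, c t a * e a x, ⟨?_, fun t x => ?_⟩, by simp [hc]⟩
  · exact ContDiff.sum fun a _ => ((hsmooth a).comp contDiff_fst).mul ((he a).comp contDiff_snd)
  · refine (HasDerivAt.fun_sum fun b _ =>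
      ((hasDerivAt_pi.1 (hderiv t)) b).mul_const (e b x)).congr_deriv ?_
    have hsum : Δₛ (fun y => ∑ a, c t a * e a y) x = ∑ a, c t a * Δₛ (e a) x := by
      have he2 (a : ι) : ContDiffAt ℝ 2 (e a) x := 
        (he a).contDiffAt.of_le (WithTop.coe_le_coe.2 le_top)
      rw [sumSquares_sum rotGen fun a _ => contDiffAt_const.mul (he2 a)]
      exact Finset.sum_congr rfl fun a _ => sumSquares_const_mul rotGen (he2 a) _
    simp only [hsum, hm, Finset.mul_sum]
    rw [Finset.sum_comm]
    simp [hL, Finset.sum_mul, mul_assoc, mul_left_comm]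

end HeatFlow

section InvariantSpace

variable {V ι : Type*} [NormedAddCommGroup V] [NormedSpace ℝ V]

/-- A space of smooth functions that is stable under the derivations along the linear vector fields
`A a`. -/
def IsLieInvariant (A : ι → V →L[ℝ] V) (W : Submodule ℝ (V → ℝ)) : Prop :=
  ∀ g ∈ W, ContDiff ℝ ∞ g ∧ ∀ a, lieDeriv (A a) g ∈ W

variable {A : ι → V →L[ℝ] V}

namespace IsLieInvariant

lemma span {s : Set (V → ℝ)}
    (hs : ∀ g ∈ s, ContDiff ℝ ∞ g ∧ ∀ a, lieDeriv (A a) g ∈ Submodule.span ℝ s) :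
    IsLieInvariant A (Submodule.span ℝ s) := by
  intro g hg
  induction hg using Submodule.span_induction with
  | mem g hg => exact hs g hg
  | zero =>
    refine ⟨contDiff_const, fun a => ?_⟩
    have h : lieDeriv (A a) (0 : V → ℝ) = 0 := funext fun _ => lieDeriv_const (A a) 0
    rw [h]
    exact Submodule.zero_mem _
  | add g h _ _ hg hh =>
    refine ⟨hg.1.add hh.1, fun a => ?_⟩
    have hadd : lieDeriv (A a) (g + h) = lieDeriv (A a) g + lieDeriv (A a) h := funext fun x =>
      lieDeriv_add (A a) (hg.1.differentiable (by simp) x) (hh.1.differentiable (by simp) x)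
    rw [hadd]
    exact Submodule.add_mem _ (hg.2 a) (hh.2 a)
  | smul r g _ hg =>
    refine ⟨contDiff_const.mul hg.1, fun a => ?_⟩
    have hsmul : lieDeriv (A a) (r • g) = r • lieDeriv (A a) g := funext fun x =>
      lieDeriv_const_mul (A a) (hg.1.differentiable (by simp) x) r
    rw [hsmul]
    exact Submodule.smul_mem _ _ (hg.2 a)

lemma one : IsLieInvariant A (1 : Submodule ℝ (V → ℝ)) := by
  rw [Submodule.one_eq_span]
  refine span fun g hg => ?_
  obtain rfl := Set.mem_singleton_iff.1 hg
  refine ⟨contDiff_const, fun a => ?_⟩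
  have h : lieDeriv (A a) (1 : V → ℝ) = 0 := funext fun _ => lieDeriv_const (A a) 1
  rw [h]
  exact Submodule.zero_mem _

lemma mul {W₁ W₂ : Submodule ℝ (V → ℝ)} (h₁ : IsLieInvariant A W₁) (h₂ : IsLieInvariant A W₂) :
    IsLieInvariant A (W₁ * W₂) := by
  rw [Submodule.mul_eq_span_mul_set]
  refine span ?_
  rw [← Submodule.mul_eq_span_mul_set]
  rintro _ ⟨g, hg, h, hh, rfl⟩
  refine ⟨(h₁ g hg).1.mul (h₂ h hh).1, fun a => ?_⟩
  have hmul : lieDeriv (A a) (g * h) = g * lieDeriv (A a) h + lieDeriv (A a) g * h :=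
    funext fun x => (lieDeriv_mul (A a) ((h₁ g hg).1.differentiable (by simp) x)
      ((h₂ h hh).1.differentiable (by simp) x)).trans (congrArg _ (mul_comm _ _))
  simp only [hmul]
  exact Submodule.add_mem _ (Submodule.mul_mem_mul hg ((h₂ h hh).2 a))
    (Submodule.mul_mem_mul ((h₁ g hg).2 a) hh)

lemma pow {W : Submodule ℝ (V → ℝ)} (hW : IsLieInvariant A W) (k : ℕ) :
    IsLieInvariant A (W ^ k) := by
  induction k with
  | zero => exact pow_zero W ▸ one
  | succ k ih => exact pow_succ W k ▸ ih.mul hW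

lemma sumSquares_mem [Fintype ι] {W : Submodule ℝ (V → ℝ)} (hW : IsLieInvariant A W) {g : V → ℝ}
    (hg : g ∈ W) : sumSquares A g ∈ W := by
  have h : sumSquares A g = (1 / 2 : ℝ) • ∑ a, lieDeriv (A a) (lieDeriv (A a) g) := by
    ext x
    simp [sumSquares]
  rw [h]
  exact W.smul_mem _ (W.sum_mem fun a _ => (hW _ ((hW g hg).2 a)).2 a)

end IsLieInvariant

lemma exists_isHeatFlow {W : Submodule ℝ (E n → ℝ)} [FiniteDimensional ℝ W]
    (hW : IsLieInvariant rotGen W) {g : E n → ℝ} (hg : g ∈ W) :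
    ∃ u : ℝ → E n → ℝ, IsHeatFlow u ∧ u 0 = g := by
  set b := Module.finBasis ℝ W
  have hrepr (w : W) (x : E n) : (w : E n → ℝ) x = ∑ i, b.repr w i * (b i : E n → ℝ) x := by
    have h : (w : E n → ℝ) x = ((∑ i, b.repr w i • b i : W) : E n → ℝ) x := by rw [b.sum_repr]
    rw [h, Submodule.coe_sum, Finset.sum_apply]
    rfl
  obtain ⟨u, hu, hu0⟩ := exists_isHeatFlow_sum (fun i => (hW _ (b i).2).1)
    (fun i => hrepr ⟨_, hW.sumSquares_mem (b i).2⟩) (b.repr ⟨g, hg⟩)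
  exact ⟨u, hu, hu0.trans (funext fun x => (hrepr ⟨g, hg⟩ x).symm)⟩

end InvariantSpace

section AffineCoordinates

/-- The affine coordinate functions on `E n`: the constant `1` and the linear coordinates. -/
def affineCoord : Option (Fin n) → E n → ℝ
  | none => fun _ => 1
  | some i => fun x => x i

/-- The space of affine functions on `E n`; its `k`-th power consists of the polynomials of degree
at most `k`. -/
def affineSpace (n : ℕ) : Submodule ℝ (E n → ℝ) := Submodule.span ℝ (Set.range affineCoord)

lemma affineCoord_mem_affineSpace (o : Option (Fin n)) : affineCoord o ∈ affineSpace n :=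
  Submodule.subset_span ⟨o, rfl⟩

lemma contDiff_affineCoord (o : Option (Fin n)) : ContDiff ℝ ∞ (affineCoord o) := by
  cases o with
  | none => exact contDiff_const
  | some i => exact (EuclideanSpace.proj i : E n →L[ℝ] ℝ).contDiff

lemma lieDeriv_affineCoord_some (A : E n →L[ℝ] E n) (i : Fin n) :
    lieDeriv A (affineCoord (some i)) =
      ∑ j, A (EuclideanSpace.single j 1) i • affineCoord (some j) := by
  ext x
  have h : fderiv ℝ (affineCoord (some i)) x = (EuclideanSpace.proj i : E n →L[ℝ] ℝ) :=
    (EuclideanSpace.proj i : E n →L[ℝ] ℝ).fderiv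
  have hx : x = ∑ j, x j • EuclideanSpace.single j (1 : ℝ) := by
    simpa using ((EuclideanSpace.basisFun (Fin n) ℝ).sum_repr x).symm
  conv_lhs => rw [lieDeriv, h, hx]
  simp [affineCoord, mul_comm]

lemma isLieInvariant_affineSpace {ι : Type*} (A : ι → E n →L[ℝ] E n) :
    IsLieInvariant A (affineSpace n) := by
  refine .span fun g hg => ?_
  obtain ⟨o, rfl⟩ := hg
  refine ⟨contDiff_affineCoord o, fun a => ?_⟩
  cases o with
  | none =>
    have h : lieDeriv (A a) (affineCoord none) = 0 := funext fun _ => lieDeriv_const (A a) 1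
    rw [h]
    exact Submodule.zero_mem _
  | some i =>
    rw [lieDeriv_affineCoord_some]
    exact Submodule.sum_mem _ fun j _ => Submodule.smul_mem _ _ (affineCoord_mem_affineSpace _)

lemma finiteDimensional_affineSpace_pow (k : ℕ) : FiniteDimensional ℝ ↥(affineSpace n ^ k) :=
  Module.Finite.iff_fg.2 (Submodule.FG.pow (Submodule.fg_span (Set.finite_range _)) k)

lemma one_add_inner_eq_sum_affineCoord (x y : E n) :
    1 + ⟪x, y⟫ = ∑ o : Option (Fin n), affineCoord o x * affineCoord o y := by
  rw [Fintype.sum_option, PiLp.inner_apply]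
  simp [affineCoord, mul_comm]

lemma prod_affineCoord_mem {k : ℕ} (φ : Fin k → Option (Fin n)) :
    (fun x => ∏ i, affineCoord (φ i) x) ∈ affineSpace n ^ k := by
  induction k with
  | zero =>
    simp only [Finset.univ_eq_empty, Finset.prod_empty, pow_zero]
    exact Submodule.one_le.1 le_rfl
  | succ k ih =>
    have hsucc : (fun x => ∏ i, affineCoord (φ i) x) =
        affineCoord (φ 0) * fun x => ∏ i : Fin k, affineCoord (φ i.succ) x := by
      ext x
      simp [Fin.prod_univ_succ]
    rw [pow_succ', hsucc]
    exact Submodule.mul_mem_mul (affineCoord_mem_affineSpace _) (ih _)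

lemma one_add_inner_pow_eq_sum (k : ℕ) (x y : E n) :
    (1 + ⟪x, y⟫) ^ k =
      ∑ φ : Fin k → Option (Fin n), (∏ i, affineCoord (φ i) x) * ∏ i, affineCoord (φ i) y := by
  simp only [one_add_inner_eq_sum_affineCoord, Fintype.sum_pow, Finset.prod_mul_distrib]

end AffineCoordinates

section GreatCircle

variable {V : Type*} [NormedAddCommGroup V] [InnerProductSpace ℝ V] {x y v : V}

lemma norm_sub_inner_smul_sq (hx : ‖x‖ = 1) (p : V) :
    ‖p - ⟪x, p⟫ • x‖ ^ 2 = ‖p‖ ^ 2 - ⟪x, p⟫ ^ 2 := by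
  rw [norm_sub_sq_real, inner_smul_right, norm_smul, hx, real_inner_comm, Real.norm_eq_abs, mul_one,
    sq_abs]
  ring

lemma exists_norm_eq_one_inner_eq_zero (hV : 2 ≤ Module.finrank ℝ V) (x : V) :
    ∃ v : V, ‖v‖ = 1 ∧ ⟪x, v⟫ = 0 := by
  have hfr : Module.finrank ℝ (ℝ ∙ x) < Module.finrank ℝ V :=
    ((finrank_span_le_card {x}).trans (by simp)).trans_lt (lt_of_lt_of_le one_lt_two hV)
  have hne : (ℝ ∙ x)ᗮ ≠ ⊥ := fun h => by
    rw [Submodule.orthogonal_eq_bot_iff] at h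
    rw [h, finrank_top] at hfr
    exact lt_irrefl _ hfr
  obtain ⟨w, hw, hw0⟩ := Submodule.exists_mem_ne_zero_of_ne_bot hne
  refine ⟨‖w‖⁻¹ • w, by simp [norm_smul, hw0], ?_⟩
  rw [inner_smul_right, Submodule.mem_orthogonal_singleton_iff_inner_right.1 hw, mul_zero]

/-- The point at angle `s` of the unit-speed circle through `x` with initial velocity `v`, where `x`
and `v` are orthonormal. -/
def greatCircle (x v : V) (s : ℝ) : V := Real.cos s • x + Real.sin s • v

lemma norm_greatCircle (hx : ‖x‖ = 1) (hv : ‖v‖ = 1) (hxv : ⟪x, v⟫ = 0) (s : ℝ) :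
    ‖greatCircle x v s‖ = 1 := by
  rw [← sq_eq_sq₀ (norm_nonneg _) zero_le_one, greatCircle, norm_add_sq_real]
  simp [norm_smul, inner_smul_left, inner_smul_right, hx, hv, hxv]

lemma inner_greatCircle_add_pi_div_two (hx : ‖x‖ = 1) (hv : ‖v‖ = 1) (hxv : ⟪x, v⟫ = 0) (s : ℝ) :
    ⟪greatCircle x v s, greatCircle x v (s + Real.pi / 2)⟫ = 0 := by
  simp only [greatCircle, Real.cos_add_pi_div_two, Real.sin_add_pi_div_two, inner_add_left,
    inner_add_right, real_inner_smul_left, real_inner_smul_right, real_inner_self_eq_norm_sq, hx,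
    hv, hxv, real_inner_comm x v]
  ring

lemma hasDerivAt_greatCircle (s : ℝ) :
    HasDerivAt (greatCircle x v) (greatCircle x v (s + Real.pi / 2)) s := by
  rw [greatCircle, Real.cos_add_pi_div_two, Real.sin_add_pi_div_two]
  exact ((Real.hasDerivAt_cos s).smul_const x).add ((Real.hasDerivAt_sin s).smul_const v)

lemma exists_greatCircle_eq (hV : 2 ≤ Module.finrank ℝ V) (hx : ‖x‖ = 1) (hy : ‖y‖ = 1) :
    ∃ v : V, ∃ φ ∈ Set.Icc 0 Real.pi, ‖v‖ = 1 ∧ ⟪x, v⟫ = 0 ∧ greatCircle x v φ = y := by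
  set c := ⟪x, y⟫ with hc
  have hc1 : |c| ≤ 1 := by simpa [hx, hy] using abs_real_inner_le_norm x y
  have hr : ‖y - c • x‖ = √(1 - c ^ 2) := by
    rw [← Real.sqrt_sq (norm_nonneg (y - c • x)), norm_sub_inner_smul_sq hx, hy, ← hc, one_pow]
  have hox : ⟪x, y - c • x⟫ = 0 := by
    rw [inner_sub_right, inner_smul_right, real_inner_self_eq_norm_sq, hx, ← hc]
    ring
  obtain ⟨v, hv, hxv, hyv⟩ : ∃ v : V, ‖v‖ = 1 ∧ ⟪x, v⟫ = 0 ∧ y - c • x = ‖y - c • x‖ • v := by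
    by_cases h0 : y - c • x = 0
    · obtain ⟨v, hv, hxv⟩ := exists_norm_eq_one_inner_eq_zero hV x
      exact ⟨v, hv, hxv, by simp [h0]⟩
    · refine ⟨‖y - c • x‖⁻¹ • (y - c • x), by simp [norm_smul, h0], ?_, ?_⟩
      · rw [inner_smul_right, hox, mul_zero]
      · rw [smul_smul, mul_inv_cancel₀ (norm_ne_zero_iff.2 h0), one_smul]
  refine ⟨v, Real.arccos c, ⟨Real.arccos_nonneg c, Real.arccos_le_pi c⟩, hv, hxv, ?_⟩
  rw [greatCircle, Real.cos_arccos (abs_le.1 hc1).1 (abs_le.1 hc1).2, Real.sin_arccos, ← hr, ← hyv]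
  abel

end GreatCircle

section SphericalGradient

open scoped Matrix

variable {g h : E n → ℝ} {x y : E n}

lemma gradient_apply (g : E n → ℝ) (x : E n) (i : Fin n) :
    gradient g x i = fderiv ℝ g x (EuclideanSpace.single i 1) := by
  rw [← inner_gradient_left, EuclideanSpace.inner_single_right]
  simp

lemma carreDuChamp_rotGen_eq_inner_sgrad (hx : x ∈ 𝕊) : Γ g h x = ⟪sgrad g x, gradient h x⟫ := by
  have hinner (u v : E n) : ⟪u, v⟫ = (u : Fin n → ℝ) ⬝ᵥ v := by
    simp [PiLp.inner_apply, dotProduct, mul_comm]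
  have hwedge (f : E n → ℝ) (p : Fin n × Fin n) :
      lieDeriv (rotGen p) f x = wedge x (gradient f x).ofLp p := by
    simp only [lieDeriv_rotGen_eq_wedge, ← gradient_apply]
  rw [sgrad, inner_sub_left, real_inner_smul_left, hinner, hinner, hinner]
  simp only [carreDuChamp, hwedge, sum_wedge_mul_wedge, dotProduct_self_of_mem_sphere hx]
  ring

lemma carreDuChamp_rotGen_self (hx : x ∈ 𝕊) :
    Γ g g x = ‖gradient g x‖ ^ 2 - ⟪x, gradient g x⟫ ^ 2 := by
  rw [carreDuChamp_rotGen_eq_inner_sgrad hx, sgrad, inner_sub_left, real_inner_smul_left,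
    real_inner_self_eq_norm_sq, real_inner_comm x, sq ⟪x, _⟫]

lemma carreDuChamp_rotGen_self_le (hx : x ∈ 𝕊) : Γ g g x ≤ ‖gradient g x‖ ^ 2 := by
  rw [carreDuChamp_rotGen_self hx]
  linarith [sq_nonneg ⟪x, gradient g x⟫]

lemma fderiv_sq_le_carreDuChamp (hx : x ∈ 𝕊) {v : E n} (hv : ‖v‖ = 1) (hxv : ⟪x, v⟫ = 0) :
    (fderiv ℝ g x v) ^ 2 ≤ Γ g g x := by
  have h : fderiv ℝ g x v = ⟪gradient g x - ⟪x, gradient g x⟫ • x, v⟫ := by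
    rw [inner_sub_left, real_inner_smul_left, hxv, mul_zero, sub_zero, inner_gradient_left]
  rw [carreDuChamp_rotGen_self hx, ← norm_sub_inner_smul_sq (mem_sphere_zero_iff_norm.1 hx), h,
    sq_le_sq, abs_norm]
  simpa [hv] using abs_real_inner_le_norm (gradient g x - ⟪x, gradient g x⟫ • x) v

lemma abs_sub_le_of_carreDuChamp_le (hn : 2 ≤ n) (hg : SphSmooth 1 g) {M : ℝ} (hM : 0 ≤ M)
    (h : ∀ x ∈ 𝕊, Γ g g x ≤ M ^ 2) (hx : x ∈ 𝕊) (hy : y ∈ 𝕊) :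
    |g y - g x| ≤ M * Real.pi := by
  rw [mem_sphere_zero_iff_norm] at hx hy
  obtain ⟨v, φ, hφ, hv, hxv, rfl⟩ := exists_greatCircle_eq (by simpa using hn) hx hy
  set γ := greatCircle x v
  have hγ (s : ℝ) : γ s ∈ 𝕊 := mem_sphere_zero_iff_norm.2 (norm_greatCircle hx hv hxv s)
  have hderiv (s : ℝ) :
      HasDerivAt (fun s => g (γ s)) (fderiv ℝ g (γ s) (γ (s + Real.pi / 2))) s :=
    (hg.differentiableAt one_ne_zero (hγ s)).hasFDerivAt.comp_hasDerivAt s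
      (hasDerivAt_greatCircle s)
  have hbound (s : ℝ) : ‖fderiv ℝ g (γ s) (γ (s + Real.pi / 2))‖ ≤ M :=
    abs_le_of_sq_le_sq ((fderiv_sq_le_carreDuChamp (hγ s) (norm_greatCircle hx hv hxv _)
      (inner_greatCircle_add_pi_div_two hx hv hxv s)).trans (h _ (hγ s))) hM
  have hmean := convex_univ.norm_image_sub_le_of_norm_hasDerivWithin_le
    (fun s _ => (hderiv s).hasDerivWithinAt) (fun s _ => hbound s) (Set.mem_univ 0)
    (Set.mem_univ φ)
  have h0 : γ 0 = x := by simp [γ, greatCircle]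
  rw [h0, sub_zero, Real.norm_eq_abs, Real.norm_eq_abs, abs_of_nonneg hφ.1] at hmean
  exact hmean.trans (mul_le_mul_of_nonneg_left hφ.2 hM)

end SphericalGradient

section Entropy

variable {α : Type*} {m : MeasurableSpace α}

/-- The entropy of a positive function `g` with respect to a probability measure `μ`. -/
def entropy (μ : Measure α) (g : α → ℝ) : ℝ :=
  ∫ x, g x * Real.log (g x) ∂μ - (∫ x, g x ∂μ) * Real.log (∫ x, g x ∂μ)

lemma integral_pos_of_ae_pos {μ : Measure α} [NeZero μ] {g : α → ℝ} (hg : Integrable g μ)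
    (h0 : ∀ᵐ x ∂μ, 0 < g x) : 0 < ∫ x, g x ∂μ := by
  refine (integral_nonneg_of_ae (h0.mono fun _ hx => hx.le)).lt_of_ne' fun h => ?_
  obtain ⟨x, hx, hx0⟩ :=
    (h0.and ((integral_eq_zero_iff_of_nonneg_ae (h0.mono fun _ hx => hx.le) hg).1 h)).exists
  exact hx.ne' hx0

lemma mul_log_le {u c : ℝ} (hu : 0 < u) (hc : 0 < c) :
    u * Real.log u ≤ u * Real.log c + (u - c) + (u - c) ^ 2 / c := by
  have h := mul_le_mul_of_nonneg_left (Real.log_le_sub_one_of_pos (div_pos hu hc)) hu.le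
  rw [Real.log_div hu.ne' hc.ne'] at h
  have : (u - c) ^ 2 / c = u * (u / c - 1) - (u - c) := by field_simp
  linarith

lemma entropy_le_of_abs_sub_le {μ : Measure α} [IsProbabilityMeasure μ] {g : α → ℝ} {C : ℝ}
    (hg : Integrable g μ) (hglog : Integrable (fun x => g x * Real.log (g x)) μ)
    (h0 : ∀ᵐ x ∂μ, 0 < g x) (hC : ∀ᵐ x ∂μ, |g x - ∫ y, g y ∂μ| ≤ C) :
    entropy μ g ≤ C ^ 2 / ∫ x, g x ∂μ := by
  set c := ∫ x, g x ∂μ with hc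
  have hc0 : 0 < c := integral_pos_of_ae_pos hg h0
  have hcent : Integrable (fun x => g x - c) μ := hg.sub (integrable_const c)
  have hlin : Integrable (fun x => g x * Real.log c + (g x - c)) μ := (hg.mul_const _).add hcent
  have hle : ∫ x, g x * Real.log (g x) ∂μ ≤
      ∫ x, (g x * Real.log c + (g x - c) + C ^ 2 / c) ∂μ := by
    refine integral_mono_ae hglog (hlin.fun_add (integrable_const _)) ?_
    filter_upwards [h0, hC] with x hx hxC
    have hsq : (g x - c) ^ 2 ≤ C ^ 2 := sq_le_sq' (by linarith [abs_le.1 hxC]) (abs_le.1 hxC).2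
    exact (mul_log_le hx hc0).trans (by gcongr)
  rw [integral_add hlin (integrable_const _), integral_add (hg.mul_const _) hcent,
    integral_sub hg (integrable_const c), integral_mul_const, ← hc] at hle
  simp only [integral_const, probReal_univ, smul_eq_mul, one_mul, sub_self, add_zero] at hle
  unfold entropy
  linarith

end Entropy

-- With `J` the dissipation of `Φ`, exponential decay of `J` controls `Φ` by `J`.
lemma sub_le_div_of_hasDerivAt {c : ℝ} (hc : 0 < c) {Φ J J' : ℝ → ℝ}
    (hΦ : ContinuousOn Φ (Set.Ici 0)) (hJ : ContinuousOn J (Set.Ici 0))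
    (hΦ' : ∀ t, 0 < t → HasDerivAt Φ (-J t) t) (hJ' : ∀ t, 0 < t → HasDerivAt J (J' t) t)
    (hle : ∀ t, 0 < t → J' t ≤ -c * J t) {t : ℝ} (ht : 0 ≤ t) :
    Φ 0 - Φ t ≤ (J 0 - J t) / c := by
  have hderiv (t : ℝ) (ht : 0 < t) :
      HasDerivAt (fun t => Φ t - J t / c) (-J t - J' t / c) t :=
    (hΦ' t ht).sub ((hJ' t ht).div_const c)
  have hmono : MonotoneOn (fun t => Φ t - J t / c) (Set.Ici 0) := by
    refine monotoneOn_of_deriv_nonneg (convex_Ici 0) (hΦ.sub (hJ.div_const c))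
      (fun t ht => ?_) fun t ht => ?_ <;> rw [interior_Ici] at ht
    · exact (hderiv t ht).differentiableAt.differentiableWithinAt
    · have := (div_le_iff₀ hc).2 ((hle t ht).trans_eq (by ring : _ = -J t * c))
      rw [(hderiv t ht).deriv]
      linarith
  have := hmono (Set.mem_Ici.2 le_rfl) ht ht
  rw [sub_div]
  linarith

section FisherInformation

variable {u : E n → ℝ}

lemma integral_log_add_one_mul_sumSquares [NeZero n] (hu : SphSmooth 2 u)
    (h0 : ∀ x ∈ 𝕊, 0 < u x) :
    ∫ x, (Real.log (u x) + 1) * Δₛ u x ∂sphMeasure n = -∫ x, Γ u u x / u x ∂sphMeasure n := by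
  have hlog : SphSmooth 1 fun y => Real.log (u y) + 1 :=
    ((hu.log h0).of_le (by norm_num)).add (.const 1)
  rw [← neg_eq_iff_eq_neg, ← integral_carreDuChamp hlog hu]
  refine integral_congr_sphere fun x hx => ?_
  rw [carreDuChamp_comp_left rotGen (φ := fun s => Real.log s + 1)
    ((Real.hasDerivAt_log (h0 x hx).ne').add_const 1) (hu.differentiableAt two_ne_zero hx),
    inv_mul_eq_div]

lemma carreDuChamp_log_left {h : E n → ℝ} {x : E n} (hu : DifferentiableAt ℝ u x)
    (h0 : u x ≠ 0) : Γ (fun y => Real.log (u y)) h x = Γ u h x / u x := by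
  rw [carreDuChamp_comp_left rotGen (Real.hasDerivAt_log h0) hu, inv_mul_eq_div]

lemma carreDuChamp_log_self {x : E n} (hu : DifferentiableAt ℝ u x) (h0 : u x ≠ 0) :
    Γ (fun y => Real.log (u y)) (fun y => Real.log (u y)) x = Γ u u x / u x ^ 2 := by
  rw [carreDuChamp_comp_self rotGen (Real.hasDerivAt_log h0) hu, inv_pow, inv_mul_eq_div]

lemma fisher_integrand_deriv_eq {x : E n} (hu : ContDiffAt ℝ 2 u x) (h0 : 0 < u x)
    {v : E n → ℝ} (hv : v = fun y => Real.log (u y)) :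
    (2 * Γ u (Δₛ u) x * u x - Γ u u x * Δₛ u x) / u x ^ 2 =
      2 * (Γ (Δₛ u) v x + Δₛ u x * Δₛ v x) -
        2 * (Real.exp (v x) * (Δₛ v x ^ 2 + 3 / 2 * (Δₛ v x * Γ v v x) +
          1 / 2 * Γ v v x ^ 2)) := by
  have hd : DifferentiableAt ℝ u x := hu.differentiableAt two_ne_zero
  have hne : u x ≠ 0 := h0.ne'
  have hΓ : Γ u u x = u x ^ 2 * Γ v v x := by
    rw [hv, carreDuChamp_log_self hd hne, mul_div_cancel₀ _ (pow_ne_zero 2 hne)]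
  have hΓΔ : Γ u (Δₛ u) x = u x * Γ (Δₛ u) v x := by
    rw [carreDuChamp_comm rotGen (g := Δₛ u), hv, carreDuChamp_log_left hd hne,
      mul_div_cancel₀ _ hne]
  have hΔ : Δₛ u x = u x * (Δₛ v x + Γ v v x) := by rw [hv, ← sumSquares_eq_mul_log rotGen hu h0]
  have hexp : Real.exp (v x) = u x := by rw [hv, Real.exp_log h0]
  rw [hΓ, hΓΔ, hexp, hΔ]
  field_simp
  ring

lemma integral_fisher_deriv_le (hn : 3 ≤ n) (hu : SphSmooth 3 u) (h0 : ∀ x ∈ 𝕊, 0 < u x) :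
    ∫ x, (2 * Γ u (Δₛ u) x * u x - Γ u u x * Δₛ u x) / u x ^ 2 ∂sphMeasure n ≤
      -(2 * ((n : ℝ) - 1)) * ∫ x, Γ u u x / u x ∂sphMeasure n := by
  have : NeZero n := ⟨by omega⟩
  set v : E n → ℝ := fun y => Real.log (u y) with hv
  have hvs : SphSmooth 3 v := hu.log h0
  have hv2 : SphSmooth 2 v := hvs.of_le (by norm_num)
  have hΔu : SphSmooth 1 (Δₛ u) := hu.sumSquares (by norm_num)
  have hΔv : SphSmooth 1 (Δₛ v) := hvs.sumSquares (by norm_num)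
  have hΓv : SphSmooth 1 (Γ v v) := hv2.carreDuChamp hv2 (by norm_num)
  have hint : Integrable (fun x => Real.exp (v x) * (Δₛ v x ^ 2 +
      3 / 2 * (Δₛ v x * Γ v v x) + 1 / 2 * Γ v v x ^ 2)) (sphMeasure n) :=
    integrable_of_continuousOn_sphere (hvs.continuousOn.rexp.mul
      (((hΔv.continuousOn.pow 2).add (continuousOn_const.mul (hΔv.mul hΓv).continuousOn)).add
        (continuousOn_const.mul (hΓv.continuousOn.pow 2))))
  have hfisher : ∫ x, Real.exp (v x) * Γ v v x ∂sphMeasure n =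
      ∫ x, Γ u u x / u x ∂sphMeasure n := integral_congr_sphere fun x hx => by
    have hne := (h0 x hx).ne'
    rw [hv, carreDuChamp_log_self (hu.differentiableAt three_ne_zero hx) hne,
      Real.exp_log (h0 x hx)]
    field_simp
  have hdiss := integral_exp_mul_carreDuChamp_le hn hvs
  rw [integral_congr_sphere fun x hx =>
    fisher_integrand_deriv_eq ((hu x hx).of_le (by norm_num)) (h0 x hx) hv,
    integral_sub ((integrable_carreDuChamp_add hΔu hv2).const_mul 2) (hint.const_mul 2),
    integral_const_mul, integral_const_mul, integral_carreDuChamp_add hΔu hv2, ← hfisher]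
  linarith

end FisherInformation

section EntropyDecay

lemma closedBall_self_subset_Ici (t : ℝ) : closedBall t t ⊆ Set.Ici 0 := fun s hs => by
  rw [Real.closedBall_eq_Icc] at hs
  simpa using hs.1

lemma continuousOn_slice {F : ℝ → E n → ℝ} {s : Set ℝ}
    (hF : ContinuousOn (Function.uncurry F) (s ×ˢ 𝕊)) {t : ℝ} (ht : t ∈ s) : ContinuousOn (F t) 𝕊 :=
  hF.comp (f := fun x => (t, x)) (by fun_prop) fun _ hx => ⟨ht, hx⟩

variable {u : ℝ → E n → ℝ}

namespace IsHeatFlow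

lemma integral_eq (hu : IsHeatFlow u) [NeZero n] (t : ℝ) :
    ∫ x, u t x ∂sphMeasure n = ∫ x, u 0 x ∂sphMeasure n := by
  have hmean (t : ℝ) : ∫ x, Δₛ (u t) x ∂sphMeasure n = 0 := by
    have h := integral_carreDuChamp_add (SphSmooth.const 1) ((hu.sphSmooth t).of_le (by norm_num))
    simpa [carreDuChamp, lieDeriv_const] using h
  have hderiv (t : ℝ) : HasDerivAt (fun t => ∫ x, u t x ∂sphMeasure n) 0 t := by
    rw [← hmean t]
    exact hasDerivAt_integral_of_ae_mem_isCompact (isCompact_sphere 0 1) ae_mem_sphere one_pos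
      (fun t _ => (hu.sphSmooth t).continuousOn) hu.contDiff_sumSquares.continuous.continuousOn
      fun t _ x _ => hu.hasDerivAt t x
  exact is_const_of_deriv_eq_zero (fun s => (hderiv s).differentiableAt)
    (fun s => (hderiv s).deriv) t 0

lemma abs_sub_integral_le (hu : IsHeatFlow u) [NeZero n] (hn : 2 ≤ n) {M : ℝ} (hM : 0 ≤ M)
    (h0 : ∀ x ∈ 𝕊, Γ (u 0) (u 0) x ≤ M ^ 2) {t : ℝ} (ht : 0 ≤ t) {x : E n} (hx : x ∈ 𝕊) :
    |u t x - ∫ y, u t y ∂sphMeasure n| ≤ M * Real.exp (-(((n : ℝ) - 2) * t)) * Real.pi := by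
  set K := M * Real.exp (-(((n : ℝ) - 2) * t)) with hK
  have hΓ : ∀ y ∈ 𝕊, Γ (u t) (u t) y ≤ K ^ 2 := fun y hy => by
    refine (hu.carreDuChamp_le hn h0 ht hy).trans_eq ?_
    rw [hK, mul_pow, ← Real.exp_nat_mul]
    congr 2
    push_cast
    ring
  have hosc : ∀ y ∈ 𝕊, ‖u t x - u t y‖ ≤ K * Real.pi := fun y hy =>
    abs_sub_le_of_carreDuChamp_le hn ((hu.sphSmooth t).of_le (by norm_num))
      (mul_nonneg hM (Real.exp_pos _).le) hΓ hy hx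
  have hle := norm_integral_le_of_norm_le_const (ae_mem_sphere.mono hosc)
  rw [integral_sub (integrable_const _)
    (integrable_of_continuousOn_sphere (hu.sphSmooth t).continuousOn)] at hle
  simpa using hle

lemma ne_zero_of_mem (hu : IsHeatFlow u) (h0 : ∀ x ∈ 𝕊, 0 < u 0 x) {p : ℝ × E n}
    (hp : p ∈ Set.Ici (0 : ℝ) ×ˢ 𝕊) : u p.1 p.2 ≠ 0 :=
  (hu.pos_of_forall_pos h0 hp.1 hp.2).ne'

lemma continuousOn_log (hu : IsHeatFlow u) (h0 : ∀ x ∈ 𝕊, 0 < u 0 x) :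
    ContinuousOn (Function.uncurry fun t x => Real.log (u t x)) (Set.Ici 0 ×ˢ 𝕊) :=
  hu.contDiff.continuous.continuousOn.log fun _ hp => hu.ne_zero_of_mem h0 hp

lemma continuousOn_mul_log (hu : IsHeatFlow u) (h0 : ∀ x ∈ 𝕊, 0 < u 0 x) :
    ContinuousOn (Function.uncurry fun t x => u t x * Real.log (u t x)) (Set.Ici 0 ×ˢ 𝕊) :=
  hu.contDiff.continuous.continuousOn.mul (hu.continuousOn_log h0)

lemma continuousOn_fisher (hu : IsHeatFlow u) (h0 : ∀ x ∈ 𝕊, 0 < u 0 x) :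
    ContinuousOn (Function.uncurry fun t x => Γ (u t) (u t) x / u t x) (Set.Ici 0 ×ˢ 𝕊) :=
  (hu.continuous_carreDuChamp hu.contDiff).continuousOn.div hu.contDiff.continuous.continuousOn
    fun _ hp => hu.ne_zero_of_mem h0 hp

lemma hasDerivAt_integral_mul_log [NeZero n] (hu : IsHeatFlow u)
    (h0 : ∀ x ∈ 𝕊, 0 < u 0 x) {t : ℝ} (ht : 0 < t) :
    HasDerivAt (fun t => ∫ x, u t x * Real.log (u t x) ∂sphMeasure n)
      (-∫ x, Γ (u t) (u t) x / u t x ∂sphMeasure n) t := by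
  have hball := closedBall_self_subset_Ici t
  rw [← integral_log_add_one_mul_sumSquares ((hu.sphSmooth t).of_le (by norm_num))
    fun x hx => hu.pos_of_forall_pos h0 ht.le hx]
  refine hasDerivAt_integral_of_ae_mem_isCompact
    (f' := fun t x => (Real.log (u t x) + 1) * Δₛ (u t) x) (isCompact_sphere 0 1) ae_mem_sphere ht
    (fun s hs => continuousOn_slice (hu.continuousOn_mul_log h0) (hball hs)) ?_ fun s hs x hx => ?_
  · exact (((hu.continuousOn_log h0).add continuousOn_const).mul
      hu.contDiff_sumSquares.continuous.continuousOn).mono (Set.prod_mono hball subset_rfl)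
  · have hne : u s x ≠ 0 := hu.ne_zero_of_mem h0 (p := (s, x)) ⟨hball hs, hx⟩
    refine ((hu.hasDerivAt s x).fun_mul ((hu.hasDerivAt s x).log hne)).congr_deriv ?_
    field_simp

lemma hasDerivAt_integral_fisher [NeZero n] (hu : IsHeatFlow u)
    (h0 : ∀ x ∈ 𝕊, 0 < u 0 x) {t : ℝ} (ht : 0 < t) :
    HasDerivAt (fun t => ∫ x, Γ (u t) (u t) x / u t x ∂sphMeasure n)
      (∫ x, (2 * Γ (u t) (Δₛ (u t)) x * u t x - Γ (u t) (u t) x * Δₛ (u t) x) / u t x ^ 2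
        ∂sphMeasure n) t := by
  have hball := closedBall_self_subset_Ici t
  have hcont := hu.contDiff.continuous
  refine hasDerivAt_integral_of_ae_mem_isCompact
    (f' := fun t x => (2 * Γ (u t) (Δₛ (u t)) x * u t x - Γ (u t) (u t) x * Δₛ (u t) x) /
      u t x ^ 2) (isCompact_sphere 0 1) ae_mem_sphere ht
    (fun s hs => continuousOn_slice (hu.continuousOn_fisher h0) (hball hs)) ?_ fun s hs x hx =>
      (hu.hasDerivAt_carreDuChamp s x).fun_div (hu.hasDerivAt s x)
        (hu.ne_zero_of_mem h0 (p := (s, x)) ⟨hball hs, hx⟩)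
  refine ContinuousOn.div (Continuous.continuousOn ?_) (hcont.pow 2).continuousOn fun p hp =>
    pow_ne_zero 2 (hu.ne_zero_of_mem h0 (Set.prod_mono hball subset_rfl hp))
  exact ((continuous_const.mul (hu.continuous_carreDuChamp hu.contDiff_sumSquares)).mul hcont).sub
    ((hu.continuous_carreDuChamp hu.contDiff).mul hu.contDiff_sumSquares.continuous)

lemma exists_tendsto_zero_entropy_le (hu : IsHeatFlow u) (h0 : ∀ x ∈ 𝕊, 0 < u 0 x) (hn : 3 ≤ n) :
    ∃ C : ℝ → ℝ, Tendsto C atTop (𝓝 0) ∧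
      ∀ t, 0 ≤ t → entropy (sphMeasure n) (u t) ≤ C t := by
  have : NeZero n := ⟨by omega⟩
  have hn' : (3 : ℝ) ≤ n := by exact_mod_cast hn
  obtain ⟨M, hM⟩ := (isCompact_sphere (0 : E n) 1).exists_bound_of_continuousOn
    (hu.continuous_carreDuChamp hu.contDiff |>.comp (Continuous.prodMk_right 0)).continuousOn
  have hΓ : ∀ x ∈ 𝕊, Γ (u 0) (u 0) x ≤ √M ^ 2 := fun x hx => by
    rw [Real.sq_sqrt ((norm_nonneg _).trans (hM x hx))]
    exact (le_abs_self _).trans (hM x hx)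
  refine ⟨fun t => (√M * Real.exp (-(((n : ℝ) - 2) * t)) * Real.pi) ^ 2 /
    ∫ x, u 0 x ∂sphMeasure n, ?_, fun t ht => ?_⟩
  · have hexp : Tendsto (fun t : ℝ => Real.exp (-(((n : ℝ) - 2) * t))) atTop (𝓝 0) :=
      Real.tendsto_exp_neg_atTop_nhds_zero.comp (tendsto_id.const_mul_atTop (by linarith))
    simpa using (((hexp.const_mul √M).mul_const Real.pi).pow 2).div_const
      (∫ x, u 0 x ∂sphMeasure n)
  · rw [← hu.integral_eq t]
    exact entropy_le_of_abs_sub_le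
      (integrable_of_continuousOn_sphere (hu.sphSmooth t).continuousOn)
      (integrable_of_continuousOn_sphere (continuousOn_slice (hu.continuousOn_mul_log h0) ht))
      (ae_mem_sphere.mono fun x hx => hu.pos_of_forall_pos h0 ht hx)
      (ae_mem_sphere.mono fun x hx =>
        hu.abs_sub_integral_le (by omega) (Real.sqrt_nonneg M) hΓ ht hx)

lemma entropy_le (hu : IsHeatFlow u) (h0 : ∀ x ∈ 𝕊, 0 < u 0 x) (hn : 3 ≤ n) :
    entropy (sphMeasure n) (u 0) ≤
      (∫ x, Γ (u 0) (u 0) x / u 0 x ∂sphMeasure n) / (2 * ((n : ℝ) - 1)) := by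
  have : NeZero n := ⟨by omega⟩
  have hn' : (3 : ℝ) ≤ n := by exact_mod_cast hn
  have hc : 0 < 2 * ((n : ℝ) - 1) := by linarith
  have hcont {F : ℝ → E n → ℝ} (hF : ContinuousOn (Function.uncurry F) (Set.Ici 0 ×ˢ 𝕊)) :=
    continuousOn_integral_of_ae_mem_isCompact isClosed_Ici (isCompact_sphere 0 1)
      ae_mem_sphere hF
  obtain ⟨C, hC, hle⟩ := hu.exists_tendsto_zero_entropy_le h0 hn
  refine sub_nonpos.1 (ge_of_tendsto hC ((eventually_ge_atTop 0).mono fun t ht => ?_))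
  have hdecay := sub_le_div_of_hasDerivAt hc (hcont (hu.continuousOn_mul_log h0))
    (hcont (hu.continuousOn_fisher h0)) (fun s hs => hu.hasDerivAt_integral_mul_log h0 hs)
    (fun s hs => hu.hasDerivAt_integral_fisher h0 hs)
    (fun s hs => integral_fisher_deriv_le hn (hu.sphSmooth s)
      fun x hx => hu.pos_of_forall_pos h0 hs.le hx) ht
  have hfisher : 0 ≤ (∫ x, Γ (u t) (u t) x / u t x ∂sphMeasure n) / (2 * ((n : ℝ) - 1)) :=
    div_nonneg (integral_nonneg_of_ae (ae_mem_sphere.mono fun x hx =>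
      div_nonneg (carreDuChamp_self_nonneg rotGen) (hu.pos_of_forall_pos h0 ht hx).le)) hc.le
  have hent := hle t ht
  unfold entropy at hent ⊢
  rw [hu.integral_eq t] at hent
  rw [sub_div] at hdecay
  linarith

end IsHeatFlow

end EntropyDecay

section Zonal

variable {h : E n → ℝ} {x y : E n} {k : ℕ}

lemma one_add_inner_nonneg (hx : x ∈ 𝕊) (hy : y ∈ 𝕊) : 0 ≤ 1 + ⟪x, y⟫ := by
  have := neg_le_of_abs_le (abs_real_inner_le_norm x y)
  rw [mem_sphere_zero_iff_norm.1 hx, mem_sphere_zero_iff_norm.1 hy] at this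
  linarith

lemma one_add_inner_lt (hx : x ∈ 𝕊) (hy : y ∈ 𝕊) (hne : y ≠ x) : 1 + ⟪x, y⟫ < 1 + ⟪x, x⟫ := by
  rw [mem_sphere_zero_iff_norm] at hx hy
  have := (inner_lt_one_iff_real_of_norm_eq_one hx hy).2 hne.symm
  rw [real_inner_self_eq_norm_sq, hx]
  linarith

/-- The total mass of the zonal kernel `(1 + ⟪x, y⟫) ^ k` for any `x` on the sphere, written as an
average over `x` to avoid choosing a base point. -/
def zonalMass (n k : ℕ) : ℝ :=
  ∫ x, ∫ y : E n, (1 + ⟪x, y⟫) ^ k ∂sphMeasure n ∂sphMeasure n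

/-- The average of `h` with respect to the normalized zonal kernel, which concentrates around `x` as
`k → ∞`. It is a polynomial in `x`, and averaging commutes with rotations. -/
def zonalAvg (k : ℕ) (h : E n → ℝ) (x : E n) : ℝ :=
  (zonalMass n k)⁻¹ * ∫ y, (1 + ⟪x, y⟫) ^ k * h y ∂sphMeasure n

lemma integral_comp_inner_eq (hxy : ‖x‖ = ‖y‖) (φ : ℝ → ℝ) :
    ∫ z, φ ⟪x, z⟫ ∂sphMeasure n = ∫ z, φ ⟪y, z⟫ ∂sphMeasure n := by
  set R : E n ≃ₗᵢ[ℝ] E n := (ℝ ∙ (x - y))ᗮ.reflection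
  have hRx : R x = y := Submodule.reflection_sub hxy
  rw [← integral_comp_isometry R fun z => φ ⟪y, z⟫]
  simp only [← hRx, R.inner_map_map]

lemma zonalAvg_rotFlow (p : Fin n × Fin n) (s : ℝ) :
    zonalAvg k h (rotFlow p s x) = zonalAvg k (fun y => h (rotFlow p s y)) x := by
  have hR : ∫ y, (1 + ⟪rotFlow p s x, y⟫) ^ k * h y ∂sphMeasure n =
      ∫ y, (1 + ⟪rotFlow p s x, rotFlow p s y⟫) ^ k * h (rotFlow p s y) ∂sphMeasure n :=
    (integral_comp_rotFlow p s _).symm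
  rw [zonalAvg, hR]
  simp only [inner_rotFlow, zonalAvg]

variable [NeZero n]

lemma integral_one_add_inner_pow (k : ℕ) (hx : x ∈ 𝕊) :
    ∫ y, (1 + ⟪x, y⟫) ^ k ∂sphMeasure n = zonalMass n k := by
  have hconst : ∀ z ∈ 𝕊, ∫ y, (1 + ⟪z, y⟫) ^ k ∂sphMeasure n =
      ∫ y, (1 + ⟪x, y⟫) ^ k ∂sphMeasure n := fun z hz =>
    integral_comp_inner_eq
      ((mem_sphere_zero_iff_norm.1 hz).trans (mem_sphere_zero_iff_norm.1 hx).symm) fun s =>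
        (1 + s) ^ k
  rw [zonalMass, integral_congr_sphere hconst]
  simp

lemma zonalMass_pos (hx : x ∈ 𝕊) (k : ℕ) : 0 < zonalMass n k := by
  have hcont : Continuous fun y : E n => (1 + ⟪x, y⟫) ^ k := by fun_prop
  rw [← integral_one_add_inner_pow k hx, integral_pos_iff_support_of_nonneg_ae
    (ae_mem_sphere.mono fun y hy => pow_nonneg (one_add_inner_nonneg hx hy) k)
    (integrable_of_continuousOn_sphere hcont.continuousOn)]
  refine sphMeasure_pos_of_isOpen (x := x) (isOpen_ne_fun hcont continuous_const) ?_ hx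
  change (1 + ⟪x, x⟫) ^ k ≠ 0
  rw [real_inner_self_eq_norm_sq]
  positivity

lemma tendsto_zonalAvg (hh : ContinuousOn h 𝕊) (hx : x ∈ 𝕊) :
    Tendsto (fun k => zonalAvg k h x) atTop (𝓝 (h x)) := by
  have hrestrict : (sphMeasure n).restrict 𝕊 = sphMeasure n :=
    Measure.restrict_eq_self_of_ae_mem ae_mem_sphere
  have hlim :=
    tendsto_setIntegral_pow_smul_of_unique_maximum_of_isCompact_of_measure_nhdsWithin_pos
      (μ := sphMeasure n) (c := fun y => 1 + ⟪x, y⟫) (isCompact_sphere 0 1)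
      (fun O hO hxO => by
        rw [← Measure.restrict_apply' isClosed_sphere.measurableSet, hrestrict]
        exact sphMeasure_pos_of_isOpen hO hxO hx)
      (by fun_prop) (fun y hy => one_add_inner_lt hx hy) (fun y hy => one_add_inner_nonneg hx hy)
      (by rw [real_inner_self_eq_norm_sq]; positivity) hx
      (hh.integrableOn_compact (isCompact_sphere 0 1)) (hh x hx)
  simpa only [hrestrict, integral_one_add_inner_pow _ hx, smul_eq_mul, zonalAvg] using hlim

lemma zonalAvg_const (c : ℝ) (hx : x ∈ 𝕊) : zonalAvg k (fun _ : E n => c) x = c := by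
  rw [zonalAvg, integral_mul_const, integral_one_add_inner_pow k hx,
    inv_mul_cancel_left₀ (zonalMass_pos hx k).ne']

lemma zonalAvg_mono {h₁ h₂ : E n → ℝ} (hh₁ : ContinuousOn h₁ 𝕊) (hh₂ : ContinuousOn h₂ 𝕊)
    (hle : ∀ y ∈ 𝕊, h₁ y ≤ h₂ y) (hx : x ∈ 𝕊) : zonalAvg k h₁ x ≤ zonalAvg k h₂ x := by
  refine mul_le_mul_of_nonneg_left (integral_mono_sphere (by fun_prop) (by fun_prop) fun y hy => ?_)
    (inv_nonneg.2 (zonalMass_pos hx k).le)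
  exact mul_le_mul_of_nonneg_left (hle y hy) (pow_nonneg (one_add_inner_nonneg hx hy) k)

lemma zonalAvg_mem_Icc (hh : ContinuousOn h 𝕊) {a b : ℝ} (hab : Set.MapsTo h 𝕊 (Set.Icc a b)) :
    Set.MapsTo (zonalAvg k h) 𝕊 (Set.Icc a b) := fun _ hx =>
  ⟨(zonalAvg_const (k := k) a hx).ge.trans
      (zonalAvg_mono continuousOn_const hh (fun _ hy => (hab hy).1) hx),
    (zonalAvg_mono hh continuousOn_const (fun _ hy => (hab hy).2) hx).trans
      (zonalAvg_const b hx).le⟩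

lemma zonalAvg_mem_affineSpace_pow (hh : ContinuousOn h 𝕊) :
    zonalAvg k h ∈ affineSpace n ^ k := by
  have hexpand : zonalAvg k h = (zonalMass n k)⁻¹ • ∑ φ : Fin k → Option (Fin n),
      (∫ y, (∏ i, affineCoord (φ i) y) * h y ∂sphMeasure n) •
        fun x => ∏ i, affineCoord (φ i) x := by
    ext x
    have hint (φ : Fin k → Option (Fin n)) : Integrable (fun y => (∏ i, affineCoord (φ i) x) *
        ((∏ i, affineCoord (φ i) y) * h y)) (sphMeasure n) :=
      (integrable_of_continuousOn_sphere ((continuous_finsetProd _ fun i _ =>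
        (contDiff_affineCoord _).continuous).continuousOn.mul hh)).const_mul _
    simp only [zonalAvg, one_add_inner_pow_eq_sum, Finset.sum_mul, mul_assoc, Pi.smul_apply,
      Finset.sum_apply, smul_eq_mul]
    rw [integral_finsetSum _ fun φ _ => hint φ]
    simp only [integral_const_mul, mul_comm]
  rw [hexpand]
  exact Submodule.smul_mem _ _ (Submodule.sum_mem _ fun φ _ =>
    Submodule.smul_mem _ _ (prod_affineCoord_mem φ))

lemma contDiff_zonalAvg (hh : ContinuousOn h 𝕊) : ContDiff ℝ ∞ (zonalAvg k h) :=
  ((isLieInvariant_affineSpace rotGen).pow k _ (zonalAvg_mem_affineSpace_pow hh)).1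

lemma lieDeriv_rotGen_zonalAvg (hh : SphSmooth 1 h) (p : Fin n × Fin n) :
    lieDeriv (rotGen p) (zonalAvg k h) x = zonalAvg k (lieDeriv (rotGen p) h) x := by
  have hleft : HasDerivAt (fun s => zonalAvg k h (rotFlow p s x))
      (lieDeriv (rotGen p) (zonalAvg k h) x) 0 := by
    simpa only [rotFlow_zero] using hasDerivAt_comp_rotFlow (s := 0) (x := x) p
      ((contDiff_zonalAvg (k := k) hh.continuousOn).differentiable (by simp) (rotFlow p 0 x))
  have hright := (hasDerivAt_integral_of_ae_mem_isCompact
    (f := fun s y => (1 + ⟪x, y⟫) ^ k * h (rotFlow p s y))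
    (f' := fun s y => (1 + ⟪x, y⟫) ^ k * lieDeriv (rotGen p) h (rotFlow p s y)) (t₀ := 0)
    (isCompact_sphere (0 : E n) 1) ae_mem_sphere one_pos
    (fun s _ => ContinuousOn.mul (by fun_prop) (hh.continuousOn.comp
      (rotFlow p s).continuous.continuousOn fun y hy => rotFlow_mem_sphere p s hy))
    (ContinuousOn.mul (by fun_prop)
      ((hh.lieDeriv (l := 0) (by simp) _).continuousOn.comp (continuous_rotFlow p).continuousOn
        fun q hq => rotFlow_mem_sphere p q.1 hq.2))
    (fun s _ y hy => (hasDerivAt_comp_rotFlow p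
      (hh.differentiableAt one_ne_zero (rotFlow_mem_sphere p s hy))).const_mul _)).const_mul
        (zonalMass n k)⁻¹
  simp only [zonalAvg_rotFlow] at hleft
  simp only [rotFlow_zero] at hright
  exact hleft.unique hright

lemma carreDuChamp_zonalAvg (hh : SphSmooth 1 h) :
    Γ (zonalAvg k h) (zonalAvg k h) x =
      1 / 2 * ∑ p, zonalAvg k (lieDeriv (rotGen p) h) x ^ 2 := by
  simp only [carreDuChamp, lieDeriv_rotGen_zonalAvg hh, sq]

lemma tendsto_carreDuChamp_zonalAvg (hh : SphSmooth 1 h) (hx : x ∈ 𝕊) :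
    Tendsto (fun k => Γ (zonalAvg k h) (zonalAvg k h) x) atTop (𝓝 (Γ h h x)) := by
  simp only [carreDuChamp_zonalAvg hh]
  simp only [carreDuChamp, ← sq]
  exact (tendsto_finsetSum _ fun p _ => (tendsto_zonalAvg
    (hh.lieDeriv (l := 0) (by simp) _).continuousOn hx).pow 2).const_mul _

lemma exists_forall_carreDuChamp_zonalAvg_le (hh : SphSmooth 1 h) :
    ∃ C, ∀ k, ∀ x ∈ 𝕊, Γ (zonalAvg k h) (zonalAvg k h) x ≤ C := by
  have hcont (p : Fin n × Fin n) : ContinuousOn (lieDeriv (rotGen p) h) 𝕊 :=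
    (hh.lieDeriv (l := 0) (by simp) _).continuousOn
  choose D hD using fun p => (isCompact_sphere (0 : E n) 1).exists_bound_of_continuousOn (hcont p)
  refine ⟨1 / 2 * ∑ p, D p ^ 2, fun k x hx => ?_⟩
  rw [carreDuChamp_zonalAvg hh]
  gcongr 1 / 2 * ∑ p, ?_ with p
  have hIcc := zonalAvg_mem_Icc (k := k) (hcont p) (fun y hy => abs_le.1 (hD p y hy)) hx
  exact sq_le_sq' hIcc.1 hIcc.2

end Zonal

section LogSobolev

variable {h : E n → ℝ}

lemma entropy_zonalAvg_le (hn : 3 ≤ n) (hh : ContinuousOn h 𝕊) (k : ℕ)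
    (h0 : ∀ x ∈ 𝕊, 0 < zonalAvg k h x) :
    entropy (sphMeasure n) (zonalAvg k h) ≤
      (∫ x, Γ (zonalAvg k h) (zonalAvg k h) x / zonalAvg k h x ∂sphMeasure n) /
        (2 * ((n : ℝ) - 1)) := by
  have : NeZero n := ⟨by omega⟩
  have := finiteDimensional_affineSpace_pow (n := n) k
  obtain ⟨u, hu, hu0⟩ := exists_isHeatFlow ((isLieInvariant_affineSpace rotGen).pow k)
    (zonalAvg_mem_affineSpace_pow (k := k) hh)
  rw [← hu0] at h0 ⊢
  exact hu.entropy_le h0 hn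

-- The logarithmic Sobolev inequality on the sphere; heat flows from polynomial data are available
-- by finite-dimensional linear algebra, and general data are approximated by zonal averages.
lemma entropy_le_integral_carreDuChamp_div (hn : 3 ≤ n) (hh : SphSmooth 1 h)
    (h0 : ∀ x ∈ 𝕊, 0 < h x) :
    entropy (sphMeasure n) h ≤
      (∫ x, Γ h h x / h x ∂sphMeasure n) / (2 * ((n : ℝ) - 1)) := by
  have : NeZero n := ⟨by omega⟩
  have hcont := hh.continuousOn
  obtain ⟨m, hm, hmh⟩ := (isCompact_sphere (0 : E n) 1).exists_forall_le' hcont h0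
  obtain ⟨M, hM⟩ := (isCompact_sphere (0 : E n) 1).exists_bound_of_continuousOn hcont
  obtain ⟨C, hC⟩ := exists_forall_carreDuChamp_zonalAvg_le hh
  have hIcc (k : ℕ) : Set.MapsTo (zonalAvg k h) 𝕊 (Set.Icc m M) :=
    zonalAvg_mem_Icc hcont fun x hx => ⟨hmh x hx, (le_abs_self _).trans (hM x hx)⟩
  have hsmooth (k : ℕ) : SphSmooth 1 (zonalAvg k h) := fun x _ =>
    ((contDiff_zonalAvg hcont).of_le (WithTop.coe_le_coe.2 le_top)).contDiffAt
  have hlim : ∀ x ∈ 𝕊, Tendsto (fun k => (zonalAvg k h x, Γ (zonalAvg k h) (zonalAvg k h) x)) atTop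
      (𝓝 (h x, Γ h h x)) := fun x hx =>
    (tendsto_zonalAvg hcont hx).prodMk_nhds (tendsto_carreDuChamp_zonalAvg hh hx)
  have hmaps (k : ℕ) : Set.MapsTo (fun x => (zonalAvg k h x, Γ (zonalAvg k h) (zonalAvg k h) x)) 𝕊
      (Set.Icc m M ×ˢ Set.Icc 0 C) := fun x hx =>
    ⟨hIcc k hx, carreDuChamp_self_nonneg _, hC k x hx⟩
  have hmem : Set.MapsTo (fun x => (h x, Γ h h x)) 𝕊 (Set.Icc m M ×ˢ Set.Icc 0 C) := fun x hx =>
    (isClosed_Icc.prod isClosed_Icc).mem_of_tendsto (hlim x hx)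
      (Eventually.of_forall fun k => hmaps k hx)
  have htend {φ : ℝ × ℝ → ℝ} (hφ : ContinuousOn φ (Set.Icc m M ×ˢ Set.Icc 0 C)) :=
    tendsto_integral_comp_of_ae_mem_isCompact (μ := sphMeasure n) (isCompact_sphere 0 1)
      ae_mem_sphere (isCompact_Icc.prod isCompact_Icc) hφ
      (fun k => (hsmooth k).continuousOn.prodMk
        ((hsmooth k).carreDuChamp (l := 0) (hsmooth k) (by simp)).continuousOn) hmaps hmem hlim
  refine le_of_tendsto_of_tendsto' (b := (atTop : Filter ℕ)) (Tendsto.sub ?_ ?_)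
    (Tendsto.div_const ?_ _) fun k => entropy_zonalAvg_le hn hcont k fun x hx =>
      hm.trans_le (hIcc k hx).1
  · exact htend (Real.continuous_mul_log.comp continuous_fst).continuousOn
  · exact (Real.continuous_mul_log.tendsto _).comp (htend continuous_fst.continuousOn)
  · exact htend (continuous_snd.continuousOn.div continuous_fst.continuousOn fun q hq =>
      (hm.trans_le hq.1.1).ne')

end LogSobolev

section Poincare

lemma le_one_add_mul_log_one_add {y : ℝ} (hy : |y| ≤ 1 / 2) :
    y + y ^ 2 / 2 - 4 * |y| ^ 3 ≤ (1 + y) * Real.log (1 + y) := by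
  have htaylor := Real.abs_log_sub_add_sum_range_le (x := -y) (by rw [abs_neg]; linarith) 2
  simp only [Finset.sum_range_succ, Finset.sum_range_zero, abs_neg, sub_neg_eq_add] at htaylor
  have hrem : |y| ^ 3 / (1 - |y|) ≤ 2 * |y| ^ 3 := by
    rw [div_le_iff₀ (by linarith)]
    nlinarith [pow_nonneg (abs_nonneg y) 3]
  have hlog : y - y ^ 2 / 2 - 2 * |y| ^ 3 ≤ Real.log (1 + y) := by
    have := (abs_le.1 (htaylor.trans hrem)).1
    norm_num at this
    linarith
  have hcube : y ^ 3 ≤ |y| ^ 3 := by rw [← abs_pow]; exact le_abs_self _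
  have hy' := abs_le.1 hy
  nlinarith [mul_le_mul_of_nonneg_left hlog (by linarith : 0 ≤ 1 + y), pow_nonneg (abs_nonneg y) 3]

lemma le_entropy_one_add_mul {α : Type*} {m : MeasurableSpace α} {μ : Measure α}
    [IsProbabilityMeasure μ] {g : α → ℝ} {ε M : ℝ} (hε : 0 ≤ ε) (hM : ∀ᵐ x ∂μ, |g x| ≤ M)
    (hεM : ε * M ≤ 1 / 2) (hg : Integrable g μ) (hg2 : Integrable (fun x => g x ^ 2) μ)
    (hlog : Integrable (fun x => (1 + ε * g x) * Real.log (1 + ε * g x)) μ)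
    (h0 : ∫ x, g x ∂μ = 0) :
    ε ^ 2 / 2 * ∫ x, g x ^ 2 ∂μ - 4 * (ε * M) ^ 3 ≤ entropy μ (fun x => 1 + ε * g x) := by
  have hmean : ∫ x, (1 + ε * g x) ∂μ = 1 := by
    rw [integral_add (integrable_const _) (hg.const_mul ε), integral_const_mul, h0]
    simp
  have hquad : Integrable (fun x => ε * g x + ε ^ 2 / 2 * g x ^ 2) μ :=
    (hg.const_mul ε).add (hg2.const_mul _)
  have hint : ∫ x, (ε * g x + ε ^ 2 / 2 * g x ^ 2 - 4 * (ε * M) ^ 3) ∂μ =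
      ε ^ 2 / 2 * ∫ x, g x ^ 2 ∂μ - 4 * (ε * M) ^ 3 := by
    rw [integral_sub hquad (integrable_const _), integral_add (hg.const_mul ε) (hg2.const_mul _),
      integral_const_mul, integral_const_mul, h0]
    simp
  rw [entropy, hmean, Real.log_one, mul_zero, sub_zero, ← hint]
  refine integral_mono_ae (hquad.sub (integrable_const _)) hlog ?_
  filter_upwards [hM] with x hx
  have hx' : |ε * g x| ≤ ε * M := by
    rw [abs_mul, abs_of_nonneg hε]
    exact mul_le_mul_of_nonneg_left hx hε
  have hpow := pow_le_pow_left₀ (abs_nonneg _) hx' 3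
  have hle := le_one_add_mul_log_one_add (hx'.trans hεM)
  rw [mul_pow] at hle
  linarith

lemma le_of_forall_small_sub_le_div {a b c M : ℝ}
    (h : ∀ ε : ℝ, 0 < ε → ε * M < 1 / 2 → a - c * ε ≤ b / (1 - ε * M)) : a ≤ b := by
  have hleft : Tendsto (fun ε : ℝ => a - c * ε) (𝓝[>] 0) (𝓝 a) :=
    ((by fun_prop : Continuous fun ε : ℝ => a - c * ε).tendsto' 0 a (by simp)).mono_left
      nhdsWithin_le_nhds
  have hmul : Tendsto (fun ε : ℝ => ε * M) (𝓝[>] 0) (𝓝 0) :=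
    ((continuous_mul_const M).tendsto' 0 0 (zero_mul M)).mono_left nhdsWithin_le_nhds
  have hright : Tendsto (fun ε : ℝ => b / (1 - ε * M)) (𝓝[>] 0) (𝓝 b) := by
    have h := (tendsto_const_nhds (x := b)).div (hmul.const_sub 1) (by simp)
    rwa [sub_zero, div_one] at h
  refine le_of_tendsto_of_tendsto hleft hright ?_
  filter_upwards [hmul.eventually_lt_const one_half_pos, self_mem_nhdsWithin] with ε hεM hε
    using h ε hε hεM

variable [NeZero n] {g : E n → ℝ}

lemma sub_le_integral_carreDuChamp_div {M ε : ℝ} (hn : 3 ≤ n) (hg : SphSmooth 1 g)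
    (h0 : ∫ x, g x ∂sphMeasure n = 0) (hM : ∀ x ∈ 𝕊, |g x| ≤ M) (hε : 0 < ε)
    (hεM : ε * M < 1 / 2) :
    (n - 1) * ∫ x, g x ^ 2 ∂sphMeasure n - 8 * (n - 1) * M ^ 3 * ε ≤
      (∫ x, Γ g g x ∂sphMeasure n) / (1 - ε * M) := by
  have hN : (0 : ℝ) < n - 1 := by
    have : (3 : ℝ) ≤ n := mod_cast hn
    linarith
  have hlow : ∀ x ∈ 𝕊, 1 - ε * M ≤ 1 + ε * g x := fun x hx => by
    nlinarith [(abs_le.1 (hM x hx)).1]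
  have hpos : ∀ x ∈ 𝕊, 0 < 1 + ε * g x := fun x hx => by linarith [hlow x hx]
  have hs : SphSmooth 1 (fun x => 1 + ε * g x) :=
    (SphSmooth.const 1).add ((SphSmooth.const ε).mul hg)
  have hcont := hg.continuousOn
  have hentropy := le_entropy_one_add_mul hε.le (ae_mem_sphere.mono hM) hεM.le
    (integrable_of_continuousOn_sphere hcont) (integrable_of_continuousOn_sphere (by fun_prop))
    (integrable_of_continuousOn_sphere (hs.continuousOn.mul
      (hs.continuousOn.log fun x hx => (hpos x hx).ne'))) h0
  have hfisher : ∫ x, Γ (fun x => 1 + ε * g x) (fun x => 1 + ε * g x) x / (1 + ε * g x)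
      ∂sphMeasure n ≤ ε ^ 2 * ((∫ x, Γ g g x ∂sphMeasure n) / (1 - ε * M)) := by
    have hΓ : ContinuousOn (Γ g g) 𝕊 := (hg.carreDuChamp (l := 0) hg (by simp)).continuousOn
    rw [← integral_div, ← integral_const_mul]
    refine integral_mono_sphere ((hs.carreDuChamp (l := 0) hs (by simp)).continuousOn.div
      hs.continuousOn fun x hx => (hpos x hx).ne') (by fun_prop) fun x hx => ?_
    rw [carreDuChamp_comp_self rotGen (φ := fun y => 1 + ε * y)
      (((hasDerivAt_id (g x)).const_mul ε).const_add 1) (hg.differentiableAt one_ne_zero hx),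
      mul_one, mul_div_assoc]
    exact mul_le_mul_of_nonneg_left (div_le_div_of_nonneg_left (carreDuChamp_self_nonneg rotGen)
      (by linarith) (hlow x hx)) (sq_nonneg ε)
  have hlsi := (hentropy.trans (entropy_le_integral_carreDuChamp_div hn hs hpos)).trans
    (div_le_div_of_nonneg_right hfisher (by positivity))
  rw [le_div_iff₀ (by positivity)] at hlsi
  refine le_of_mul_le_mul_left (le_of_eq_of_le ?_ hlsi) (pow_pos hε 2)
  ring

-- Linearize the logarithmic Sobolev inequality at the constant function `1`.
lemma mul_integral_sq_le_integral_carreDuChamp (hn : 3 ≤ n) (hg : SphSmooth 1 g)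
    (h0 : ∫ x, g x ∂sphMeasure n = 0) :
    (n - 1) * ∫ x, g x ^ 2 ∂sphMeasure n ≤ ∫ x, Γ g g x ∂sphMeasure n := by
  obtain ⟨M, hM⟩ := (isCompact_sphere (0 : E n) 1).exists_bound_of_continuousOn hg.continuousOn
  exact le_of_forall_small_sub_le_div fun ε hε hεM =>
    sub_le_integral_carreDuChamp_div hn hg h0 hM hε hεM

end Poincare

section Herbst

open ProbabilityTheory

-- The hypothesis says that `k t / t`, whose limit at `0` is `k' 0`, is nonincreasing.
lemma le_mul_deriv_zero {k k' : ℝ → ℝ} {T : ℝ} (hT : 0 < T)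
    (hk : ∀ t ∈ Set.Icc 0 T, HasDerivAt k (k' t) t)
    (h0 : k 0 = 0) (h : ∀ t ∈ Set.Ioo 0 T, t * k' t ≤ k t) : k T ≤ T * k' 0 := by
  have hderiv : ∀ t ∈ Set.Ioc 0 T, HasDerivAt (fun t => k t / t) ((k' t * t - k t * 1) / t ^ 2) t :=
    fun t ht => (hk t ⟨ht.1.le, ht.2⟩).fun_div (hasDerivAt_id t) ht.1.ne'
  have hanti : AntitoneOn (fun t => k t / t) (Set.Ioc 0 T) := by
    refine antitoneOn_of_deriv_nonpos (convex_Ioc 0 T)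
      (fun t ht => (hderiv t ht).continuousAt.continuousWithinAt) ?_ ?_ <;>
      rw [interior_Ioc] <;> intro t ht
    · exact (hderiv t ⟨ht.1, ht.2.le⟩).differentiableAt.differentiableWithinAt
    · rw [(hderiv t ⟨ht.1, ht.2.le⟩).deriv]
      refine div_nonpos_of_nonpos_of_nonneg ?_ (sq_nonneg t)
      linarith [h t ht]
  have hlim : Tendsto (fun t => k t / t) (𝓝[>] 0) (𝓝 (k' 0)) := by
    have hslope := (hasDerivAt_iff_tendsto_slope_zero.1 (hk 0 ⟨le_rfl, hT.le⟩)).mono_left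
      (nhdsWithin_mono (0 : ℝ) fun t (ht : 0 < t) => ht.ne')
    refine hslope.congr fun t => ?_
    simp only [zero_add, h0, sub_zero, smul_eq_mul, div_eq_inv_mul]
  rw [← div_le_iff₀' hT]
  refine ge_of_tendsto hlim ?_
  filter_upwards [Ioo_mem_nhdsGT hT] with t ht
  exact hanti ⟨ht.1, ht.2.le⟩ ⟨hT, le_rfl⟩ ht.2.le

section General

variable {α : Type*} {m : MeasurableSpace α} {μ : Measure α} {f g u : α → ℝ} {a t T : ℝ}

lemma entropy_exp_mul [NeZero μ] (ht : t ∈ interior (integrableExpSet u μ)) :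
    entropy μ (fun x => Real.exp (t * u x)) =
      (t * deriv (cgf u μ) t - cgf u μ t) * mgf u μ t := by
  have hpos : 0 < mgf u μ t :=
    mgf_pos' (NeZero.ne μ) (interior_subset (s := integrableExpSet u μ) ht)
  rw [deriv_cgf ht, sub_mul, mul_assoc, div_mul_cancel₀ _ hpos.ne', entropy, cgf,
    mul_comm (Real.log _), ← integral_const_mul]
  simp only [Real.log_exp, mgf]
  congr 2 with x
  ring

lemma hasDerivAt_cgf (ht : t ∈ interior (integrableExpSet u μ)) :
    HasDerivAt (cgf u μ) (deriv (cgf u μ) t) t :=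
  (analyticAt_cgf ht).differentiableAt.hasDerivAt

-- Gibbs variational principle: `∫ (g - f) ∂(μ.tilted f)` is `∫ g ∂(μ.tilted f) - log ∫ exp f ∂μ`
-- minus the relative entropy of `μ.tilted f` with respect to `μ`.
lemma integral_sub_tilted_le [NeZero μ] (hf : Integrable (fun x => Real.exp (f x)) μ)
    (hg : Integrable (fun x => Real.exp (g x)) μ)
    (hgf : Integrable (fun x => g x - f x) (μ.tilted f)) :
    ∫ x, (g x - f x) ∂μ.tilted f ≤
      Real.log (∫ x, Real.exp (g x) ∂μ) - Real.log (∫ x, Real.exp (f x) ∂μ) := by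
  have := isProbabilityMeasure_tilted hf
  have hexp : Integrable (fun x => Real.exp (g x - f x)) (μ.tilted f) := by
    rw [integrable_tilted_iff hf]
    simpa only [smul_eq_mul, ← Real.exp_add, add_sub_cancel] using hg
  have hjensen := convexOn_exp.map_integral_le Real.continuous_exp.continuousOn isClosed_univ
    (by simp) hgf hexp
  rw [← Real.log_div (integral_exp_pos hg).ne' (integral_exp_pos hf).ne']
  refine (Real.le_log_iff_exp_le (div_pos (integral_exp_pos hg) (integral_exp_pos hf))).2
    (hjensen.trans_eq ?_)
  rw [integral_exp_tilted]
  simp only [Pi.add_apply, add_sub_cancel]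

variable [IsProbabilityMeasure μ]

lemma cgf_le_of_mul_deriv_sub_le (hT : 0 < T)
    (hu : ∀ t ∈ Set.Icc 0 T, t ∈ interior (integrableExpSet u μ))
    (h : ∀ t ∈ Set.Ioo 0 T, t * deriv (cgf u μ) t - cgf u μ t ≤ a * t ^ 2) :
    cgf u μ T ≤ T * ∫ x, u x ∂μ + a * T ^ 2 := by
  have hle := le_mul_deriv_zero (k := fun t => cgf u μ t - a * t ^ 2)
    (k' := fun t => deriv (cgf u μ) t - a * (2 * t)) hT
    (fun t ht => (hasDerivAt_cgf (hu t ht)).fun_sub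
      (((hasDerivAt_pow 2 t).const_mul a).congr_deriv (by norm_num)))
    (by simp) fun t ht => by linear_combination h t ht
  rw [deriv_cgf_zero (hu 0 ⟨le_rfl, hT.le⟩)] at hle
  simp only [probReal_univ, div_one, mul_zero, sub_zero] at hle
  linarith

lemma cgf_mul_le_of_mul_deriv_sub_le (hT : 0 < T)
    (hu : ∀ t ∈ Set.Icc 0 T, t ∈ interior (integrableExpSet u μ))
    (h : ∀ t ∈ Set.Ioo 0 T,
      t * deriv (cgf u μ) t - cgf u μ t ≤ a * t ^ 2 * deriv (cgf u μ) t) :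
    cgf u μ T * (1 - a * T) ≤ T * ∫ x, u x ∂μ := by
  have hle := le_mul_deriv_zero (k := fun t => cgf u μ t * (1 - a * t))
    (k' := fun t => deriv (cgf u μ) t * (1 - a * t) + cgf u μ t * (-(a * 1))) hT
    (fun t ht => (hasDerivAt_cgf (hu t ht)).mul (((hasDerivAt_id t).const_mul a).const_sub 1))
    (by simp) fun t ht => by linear_combination h t ht
  rw [deriv_cgf_zero (hu 0 ⟨le_rfl, hT.le⟩)] at hle
  simpa using hle

end General

variable [NeZero n] {f u v w : E n → ℝ} {s t : ℝ}

lemma mem_interior_integrableExpSet (hu : ContinuousOn u 𝕊) (t : ℝ) :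
    t ∈ interior (integrableExpSet u (sphMeasure n)) := by
  have : integrableExpSet u (sphMeasure n) = Set.univ :=
    Set.eq_univ_of_forall fun t => integrable_of_continuousOn_sphere (by fun_prop)
  rw [this, interior_univ]
  exact Set.mem_univ t

lemma integrable_tilted_of_continuousOn (hu : ContinuousOn u 𝕊) (hv : ContinuousOn v 𝕊) :
    Integrable v ((sphMeasure n).tilted u) :=
  (integrable_tilted_iff (integrable_of_continuousOn_sphere (by fun_prop)) v).2
    (integrable_of_continuousOn_sphere (by fun_prop))

lemma integral_tilted_mono (hu : ContinuousOn u 𝕊) (hv : ContinuousOn v 𝕊)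
    (hw : ContinuousOn w 𝕊) (h : ∀ x ∈ 𝕊, v x ≤ w x) :
    ∫ x, v x ∂(sphMeasure n).tilted u ≤ ∫ x, w x ∂(sphMeasure n).tilted u :=
  integral_mono_ae (integrable_tilted_of_continuousOn hu hv)
    (integrable_tilted_of_continuousOn hu hw)
    ((tilted_absolutelyContinuous _ _).ae_le (ae_mem_sphere.mono h))

lemma mul_deriv_cgf_sub_cgf_le (hn : 3 ≤ n) (hu : SphSmooth 1 u) (t : ℝ) :
    t * deriv (cgf u (sphMeasure n)) t - cgf u (sphMeasure n) t ≤
      t ^ 2 / (2 * (n - 1)) * ∫ x, Γ u u x ∂(sphMeasure n).tilted (fun x => t * u x) := by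
  have hc := hu.continuousOn
  have hlsi := entropy_le_integral_carreDuChamp_div hn
    (((SphSmooth.const t).mul hu).exp) fun x _ => Real.exp_pos _
  have hmgf : 0 < mgf u (sphMeasure n) t :=
    mgf_pos (integrable_of_continuousOn_sphere (by fun_prop))
  have hfisher : ∫ x, Γ (fun x => Real.exp (t * u x)) (fun x => Real.exp (t * u x)) x /
      Real.exp (t * u x) ∂sphMeasure n = t ^ 2 * mgf u (sphMeasure n) t *
        ∫ x, Γ u u x ∂(sphMeasure n).tilted (fun x => t * u x) := by
    rw [integral_tilted_mul_eq_mgf, ← integral_const_mul]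
    refine integral_congr_sphere fun x hx => ?_
    have hderiv : HasDerivAt (fun y => Real.exp (t * y)) (Real.exp (t * u x) * (t * 1)) (u x) :=
      ((hasDerivAt_id (u x)).const_mul t).exp
    rw [carreDuChamp_comp_self rotGen hderiv (hu.differentiableAt one_ne_zero hx), smul_eq_mul]
    field_simp
  rw [hfisher, entropy_exp_mul (mem_interior_integrableExpSet hc t)] at hlsi
  refine le_of_mul_le_mul_right (hlsi.trans_eq ?_) hmgf
  ring

lemma cgf_mul_le_of_carreDuChamp_le (hn : 3 ≤ n) (hw : SphSmooth 1 w)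
    (h : ∀ x ∈ 𝕊, Γ w w x ≤ 4 * w x) (ht : 0 < t) :
    cgf w (sphMeasure n) t * (1 - 2 / (n - 1) * t) ≤ t * ∫ x, w x ∂sphMeasure n := by
  have hc := hw.continuousOn
  refine cgf_mul_le_of_mul_deriv_sub_le ht (fun t _ => mem_interior_integrableExpSet hc t)
    fun t _ => ?_
  have hΓ : ContinuousOn (Γ w w) 𝕊 := (hw.carreDuChamp (l := 0) hw (by simp)).continuousOn
  have hmono := integral_tilted_mono (u := fun x => t * w x) (by fun_prop) hΓ (by fun_prop) h
  rw [integral_const_mul, integral_tilted_mul_self (mem_interior_integrableExpSet hc t)] at hmono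
  have hN : (0 : ℝ) < n - 1 := sub_pos.2 (mod_cast (by lia : 1 < n))
  calc t * deriv (cgf w (sphMeasure n)) t - cgf w (sphMeasure n) t
      ≤ t ^ 2 / (2 * (n - 1)) * ∫ x, Γ w w x ∂(sphMeasure n).tilted (fun x => t * w x) :=
        mul_deriv_cgf_sub_cgf_le hn hw t
    _ ≤ t ^ 2 / (2 * (n - 1)) * (4 * deriv (cgf w (sphMeasure n)) t) := by gcongr
    _ = 2 / (n - 1) * t ^ 2 * deriv (cgf w (sphMeasure n)) t := by field_simp; norm_num

lemma mul_deriv_cgf_sub_cgf_le_cgf (hn : 3 ≤ n) (hf : SphSmooth 1 f) (hw : ContinuousOn w 𝕊)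
    (hfw : ∀ x ∈ 𝕊, Γ f f x ≤ w x) (t : ℝ) :
    t * deriv (cgf f (sphMeasure n)) t - cgf f (sphMeasure n) t ≤
      cgf w (sphMeasure n) (t ^ 2 / (n - 1)) := by
  have hc := hf.continuousOn
  have hN : (0 : ℝ) < n - 1 := sub_pos.2 (mod_cast (by lia : 1 < n))
  have hΓ : ContinuousOn (Γ f f) 𝕊 := (hf.carreDuChamp (l := 0) hf (by simp)).continuousOn
  have hmono := integral_tilted_mono (u := fun x => t * f x) (by fun_prop) hΓ hw hfw
  have hherbst := (mul_deriv_cgf_sub_cgf_le hn hf t).trans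
    (mul_le_mul_of_nonneg_left hmono (by positivity))
  have hgibbs := integral_sub_tilted_le (μ := sphMeasure n) (f := fun x => t * f x)
    (g := fun x => t ^ 2 / (n - 1) * w x) (integrable_of_continuousOn_sphere (by fun_prop))
    (integrable_of_continuousOn_sphere (by fun_prop))
    (integrable_tilted_of_continuousOn (by fun_prop) (by fun_prop))
  rw [integral_sub (integrable_tilted_of_continuousOn (by fun_prop) (by fun_prop))
    (integrable_tilted_of_continuousOn (by fun_prop) (by fun_prop)), integral_const_mul,
    integral_const_mul, integral_tilted_mul_self (mem_interior_integrableExpSet hc t)] at hgibbs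
  change _ ≤ cgf w (sphMeasure n) _ - cgf f (sphMeasure n) _ at hgibbs
  have hhalf : t ^ 2 / (2 * (n - 1)) * ∫ x, w x ∂(sphMeasure n).tilted (fun x => t * f x) =
      (t ^ 2 / (n - 1) * ∫ x, w x ∂(sphMeasure n).tilted (fun x => t * f x)) / 2 := by field_simp
  linarith

lemma mgf_le_exp_integral (hn : 3 ≤ n) (hf : SphSmooth 1 f) (hw : SphSmooth 1 w)
    (h0 : ∫ x, f x ∂sphMeasure n = 0) (hfw : ∀ x ∈ 𝕊, Γ f f x ≤ w x)
    (h : ∀ x ∈ 𝕊, Γ w w x ≤ 4 * w x) :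
    mgf f (sphMeasure n) ((n - 1) / 2) ≤ Real.exp ((n - 1) / 2 * ∫ x, w x ∂sphMeasure n) := by
  have hN : (0 : ℝ) < n - 1 := sub_pos.2 (mod_cast (by lia : 1 < n))
  have hc := hf.continuousOn
  have hmem := mem_interior_integrableExpSet hc
  set N : ℝ := n - 1
  set W := ∫ x, w x ∂sphMeasure n
  have hW : 0 ≤ W := integral_nonneg_of_ae (ae_mem_sphere.mono fun x hx =>
    (carreDuChamp_self_nonneg rotGen).trans (hfw x hx))
  have hcgf : ∀ t ∈ Set.Ioo 0 (N / 2),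
      t * deriv (cgf f (sphMeasure n)) t - cgf f (sphMeasure n) t ≤ 2 * W / N * t ^ 2 := by
    intro t ht
    have ht0 : 0 < t := ht.1
    have hs : 2 / N * (t ^ 2 / N) ≤ 1 / 2 := by
      rw [div_mul_div_comm, div_le_div_iff₀ (by positivity) two_pos]
      nlinarith [ht.2]
    have hselfbound := cgf_mul_le_of_carreDuChamp_le hn hw h (t := t ^ 2 / N) (by positivity)
    have hsW : 0 ≤ t ^ 2 / N * W := by positivity
    have hdouble : cgf w (sphMeasure n) (t ^ 2 / N) ≤ 2 * (t ^ 2 / N * W) := by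
      by_contra! hlt
      nlinarith
    exact (mul_deriv_cgf_sub_cgf_le_cgf hn hf hw.continuousOn hfw t).trans
      (hdouble.trans_eq (by ring))
  rw [← exp_cgf (integrable_of_continuousOn_sphere (by fun_prop)), Real.exp_le_exp]
  refine (cgf_le_of_mul_deriv_sub_le (by positivity) (fun t _ => hmem t) hcgf).trans_eq ?_
  rw [h0]
  field_simp
  ring

end Herbst

section Gradient

variable {k l : ℕ∞ω} {f : E n → ℝ} {x : E n}

lemma contDiffAt_gradient (hf : ContDiffAt ℝ k f x) (hl : l + 1 ≤ k) :
    ContDiffAt ℝ l (gradient f) x :=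
  (InnerProductSpace.toDual ℝ (E n)).symm.toContinuousLinearEquiv.contDiff.contDiffAt.comp x
    (hf.fderiv_right hl)

lemma hasFDerivAt_gradient (hf : ContDiffAt ℝ 2 f x) : HasFDerivAt (gradient f) (hess f x) x :=
  ((contDiffAt_gradient (l := 1) hf (by norm_num)).differentiableAt one_ne_zero).hasFDerivAt

lemma continuousOn_gradient (hf : SphSmooth 1 f) : ContinuousOn (gradient f) 𝕊 := fun x hx =>
  (contDiffAt_gradient (l := 0) (hf x hx) (by simp)).continuousAt.continuousWithinAt

lemma continuousOn_sgrad (hf : SphSmooth 1 f) : ContinuousOn (sgrad f) 𝕊 := by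
  have hcont := continuousOn_gradient hf
  unfold sgrad
  fun_prop

lemma continuousOn_hess (hf : SphSmooth 2 f) : ContinuousOn (hess f) 𝕊 := fun x hx =>
  ((contDiffAt_gradient (l := 1) (hf x hx) (by norm_num)).fderiv_right
    (m := 0) (by simp)).continuousAt.continuousWithinAt

lemma continuousOn_hsNormSq_hess (hf : SphSmooth 2 f) :
    ContinuousOn (fun x => hsNormSq (hess f x)) 𝕊 :=
  continuousOn_finsetSum _ fun _ _ =>
    (((continuousOn_hess hf).clm_apply continuousOn_const).norm).pow 2

namespace SphSmooth

lemma gradient_apply (hf : SphSmooth k f) (hl : l + 1 ≤ k) (i : Fin n) :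
    SphSmooth l (fun x => gradient f x i) := fun x hx =>
  (EuclideanSpace.proj i : E n →L[ℝ] ℝ).contDiff.contDiffAt.comp x
    (contDiffAt_gradient (hf x hx) hl)

lemma norm_gradient_sq (hf : SphSmooth k f) (hl : l + 1 ≤ k) :
    SphSmooth l (fun x => ‖gradient f x‖ ^ 2) := fun x hx =>
  (contDiffAt_gradient (hf x hx) hl).norm_sq ℝ

end SphSmooth

lemma carreDuChamp_norm_gradient_sq_le (hf : ContDiffAt ℝ 2 f x) (hx : x ∈ 𝕊)
    (hop : ‖hess f x‖ ≤ 1) :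
    Γ (fun y => ‖gradient f y‖ ^ 2) (fun y => ‖gradient f y‖ ^ 2) x ≤ 4 * ‖gradient f x‖ ^ 2 := by
  have hnorm : ‖fderiv ℝ (fun y => ‖gradient f y‖ ^ 2) x‖ ≤ 2 * ‖gradient f x‖ := by
    rw [(hasFDerivAt_gradient hf).norm_sq.fderiv, ← Nat.cast_smul_eq_nsmul ℝ, norm_smul]
    refine mul_le_mul (by simp) ((ContinuousLinearMap.opNorm_comp_le _ _).trans ?_)
      (norm_nonneg _) zero_le_two
    rw [innerSL_apply_norm]
    exact mul_le_of_le_one_right (norm_nonneg _) hop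
  calc Γ (fun y => ‖gradient f y‖ ^ 2) (fun y => ‖gradient f y‖ ^ 2) x
      ≤ ‖gradient (fun y => ‖gradient f y‖ ^ 2) x‖ ^ 2 := carreDuChamp_rotGen_self_le hx
    _ ≤ (2 * ‖gradient f x‖) ^ 2 := by
        refine pow_le_pow_left₀ (norm_nonneg _) ?_ 2
        rwa [gradient, LinearIsometryEquiv.norm_map]
    _ = 4 * ‖gradient f x‖ ^ 2 := by ring

lemma sum_carreDuChamp_gradient_apply_le (hf : ContDiffAt ℝ 2 f x) (hx : x ∈ 𝕊) :
    ∑ i, Γ (fun y => gradient f y i) (fun y => gradient f y i) x ≤ hsNormSq (hess f x) := by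
  have hcoord (i : Fin n) (v : E n) :
      fderiv ℝ (fun y => gradient f y i) x v = hess f x v i :=
    congrArg (fun A => A v)
      ((EuclideanSpace.proj i : E n →L[ℝ] ℝ).hasFDerivAt.comp x (hasFDerivAt_gradient hf)).fderiv
  calc ∑ i, Γ (fun y => gradient f y i) (fun y => gradient f y i) x
      ≤ ∑ i, ‖gradient (fun y => gradient f y i) x‖ ^ 2 :=
        Finset.sum_le_sum fun _ _ => carreDuChamp_rotGen_self_le hx
    _ = hsNormSq (hess f x) := by
        simp only [hsNormSq, EuclideanSpace.real_norm_sq_eq, gradient_apply, ← hcoord]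
        exact Finset.sum_comm

end Gradient

section LinearFunctions

variable {f : E n → ℝ}

lemma sphSmooth_inner {k : ℕ∞ω} (v : E n) : SphSmooth k (fun x => ⟪v, x⟫) := fun _ _ =>
  (innerSL ℝ v).contDiff.contDiffAt

lemma gradient_inner (v x : E n) : gradient (fun y => ⟪v, y⟫) x = v :=
  HasGradientAt.gradient (innerSL ℝ v).hasFDerivAt

lemma lieDeriv_inner_apply (A B : E n →L[ℝ] E n) (v x : E n) :
    lieDeriv A (fun y => ⟪v, B y⟫) x = ⟪v, B (A x)⟫ := by
  exact congrArg (fun L : E n →L[ℝ] ℝ => L (A x)) ((innerSL ℝ v).comp B).fderiv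

lemma sumSquares_rotGen_inner (v x : E n) :
    Δₛ (fun y => ⟪v, y⟫) x = -((n - 1) * ⟪v, x⟫) := by
  have hfirst (p : Fin n × Fin n) :
      lieDeriv (rotGen p) (fun y => ⟪v, y⟫) = fun y => ⟪v, rotGen p y⟫ :=
    funext fun y => lieDeriv_inner_apply _ (.id ℝ (E n)) v y
  have hinner (p : Fin n × Fin n) (y : E n) : ⟪v, rotGen p y⟫ = y p.1 * v p.2 - y p.2 * v p.1 := by
    rw [real_inner_comm, inner_rotGen_left]
  have hsum : ⟪v, x⟫ = ∑ i, x i * v i := by simp [PiLp.inner_apply]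
  simp only [sumSquares, hfirst, lieDeriv_inner_apply]
  simp only [hinner, rotGen_apply_coord, Fintype.sum_prod_type, sub_mul, ite_mul, zero_mul,
    Finset.sum_sub_distrib, Finset.sum_ite_eq, Finset.sum_ite_eq', Finset.mem_univ, if_true, hsum,
    Finset.sum_const, Finset.card_univ, Fintype.card_fin, nsmul_eq_mul, ← Finset.mul_sum]
  ring

lemma inner_sgrad (f : E n → ℝ) (x v : E n) :
    ⟪sgrad f x, v⟫ = ⟪v, gradient f x⟫ - ⟪v, x⟫ * ⟪x, gradient f x⟫ := by
  rw [sgrad, inner_sub_left, real_inner_smul_left, real_inner_comm v, real_inner_comm x,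
    real_inner_comm v x]
  ring

variable [NeZero n]

lemma integral_inner_sgrad (hf : SphSmooth 1 f) (v : E n) :
    ∫ x, ⟪sgrad f x, v⟫ ∂sphMeasure n = (n - 1) * ∫ x, ⟪v, x⟫ * f x ∂sphMeasure n := by
  have hΓ : ∀ x ∈ 𝕊, ⟪sgrad f x, v⟫ = Γ f (fun y => ⟪v, y⟫) x := fun x hx => by
    rw [carreDuChamp_rotGen_eq_inner_sgrad hx, gradient_inner]
  rw [integral_congr_sphere hΓ, integral_carreDuChamp hf (sphSmooth_inner v), ← integral_neg,
    ← integral_const_mul]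
  simp only [sumSquares_rotGen_inner]
  congr 1 with x
  ring

lemma integral_inner_sq (v : E n) :
    n * ∫ x, ⟪v, x⟫ ^ 2 ∂sphMeasure n = ‖v‖ ^ 2 := by
  have h := integral_inner_sgrad (sphSmooth_inner v) v
  simp only [inner_sgrad, gradient_inner, real_inner_self_eq_norm_sq] at h
  simp only [real_inner_comm v, ← sq] at h
  rw [integral_sub (integrable_const _) (integrable_of_continuousOn_sphere (by fun_prop)),
    integral_const, probReal_univ, one_smul] at h
  linarith

end LinearFunctions

section MeanGradient

variable [NeZero n] {f : E n → ℝ}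

/-- The average over the sphere of the Euclidean gradient of `f`. -/
def meanGradient (f : E n → ℝ) : E n := ∫ x, gradient f x ∂sphMeasure n

lemma integrable_gradient (hf : SphSmooth 1 f) : Integrable (gradient f) (sphMeasure n) :=
  integrable_of_continuousOn_sphere (continuousOn_gradient hf)

lemma integral_gradient_apply (hf : SphSmooth 1 f) (i : Fin n) :
    ∫ x, gradient f x i ∂sphMeasure n = meanGradient f i :=
  (EuclideanSpace.proj i : E n →L[ℝ] ℝ).integral_comp_comm (integrable_gradient hf)

lemma integral_norm_gradient_sq (hf : SphSmooth 1 f) :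
    ∫ x, ‖gradient f x‖ ^ 2 ∂sphMeasure n =
      ‖meanGradient f‖ ^ 2 + ∫ x, ‖gradient f x - meanGradient f‖ ^ 2 ∂sphMeasure n := by
  have hcont := continuousOn_gradient hf
  set m := meanGradient f with hm
  have hexpand (x : E n) : ‖gradient f x - m‖ ^ 2 =
      ‖gradient f x‖ ^ 2 - (2 * ⟪m, gradient f x⟫ - ‖m‖ ^ 2) := by
    rw [norm_sub_sq_real, real_inner_comm m]
    ring
  simp only [hexpand]
  rw [integral_sub, integral_sub, integral_const_mul, integral_inner (integrable_gradient hf),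
    ← meanGradient, ← hm, real_inner_self_eq_norm_sq, integral_const, probReal_univ, one_smul]
  · ring
  all_goals exact integrable_of_continuousOn_sphere (by fun_prop)

lemma norm_meanGradient_sq_le (hf : SphSmooth 1 f)
    (hlin : ∀ v : E n, ∫ x, ⟪v, x⟫ * f x ∂sphMeasure n = 0) :
    (n - 1) ^ 2 * ‖meanGradient f‖ ^ 2 ≤
      n * ∫ x, ‖gradient f x - meanGradient f‖ ^ 2 ∂sphMeasure n := by
  have hcont := continuousOn_gradient hf
  have horth := integral_inner_sgrad hf (meanGradient f)
  have hmean := integral_inner (𝕜 := ℝ) (integrable_gradient hf) (meanGradient f)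
  rw [← meanGradient] at hmean
  have hsq := integral_inner_sq (meanGradient f)
  set m := meanGradient f
  have hsgrad := continuousOn_sgrad hf
  have hpoint : ∀ x ∈ 𝕊, 2 * (n - 1) * (⟪m, gradient f x⟫ - ⟪sgrad f x, m⟫ - ⟪m, x⟫ ^ 2) ≤
      (n - 1) ^ 2 * ⟪m, x⟫ ^ 2 + ‖gradient f x - m‖ ^ 2 := fun x hx => by
    have hradial : ⟪x, gradient f x - m⟫ ^ 2 ≤ ‖gradient f x - m‖ ^ 2 := by
      rw [sq_le_sq, abs_norm]
      simpa [mem_sphere_zero_iff_norm.1 hx] using abs_real_inner_le_norm x (gradient f x - m)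
    rw [inner_sub_right, real_inner_comm m x] at hradial
    rw [inner_sgrad]
    nlinarith [sq_nonneg ((n - 1) * ⟪m, x⟫ - (⟪x, gradient f x⟫ - ⟪m, x⟫))]
  have hint := integral_mono_sphere (by fun_prop) (by fun_prop) hpoint
  rw [integral_const_mul, integral_sub, integral_sub, integral_add, integral_const_mul, horth, hlin,
    hmean, real_inner_self_eq_norm_sq, ← hsq] at hint
  · rw [← hsq]
    linarith [mul_le_mul_of_nonneg_left hint (Nat.cast_nonneg (α := ℝ) n)]
  all_goals exact integrable_of_continuousOn_sphere (by fun_prop)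

lemma integral_carreDuChamp_self_le (hf : SphSmooth 1 f)
    (hlin : ∀ v : E n, ∫ x, ⟪v, x⟫ * f x ∂sphMeasure n = 0) (v : E n) :
    ∫ x, Γ f f x ∂sphMeasure n ≤ ∫ x, ‖gradient f x - v‖ ^ 2 ∂sphMeasure n := by
  have hcont := continuousOn_gradient hf
  have hΓ : ContinuousOn (Γ f f) 𝕊 := (hf.carreDuChamp (l := 0) hf (by simp)).continuousOn
  have hsgrad := continuousOn_sgrad hf
  have hpoint : ∀ x ∈ 𝕊, Γ f f x ≤ ‖gradient f x - v‖ ^ 2 + 2 * ⟪sgrad f x, v⟫ := fun x hx => by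
    have h := sq_nonneg ‖v - ⟪x, gradient f x⟫ • x‖
    rw [norm_sub_sq_real, norm_smul, mem_sphere_zero_iff_norm.1 hx, mul_one, Real.norm_eq_abs,
      sq_abs, real_inner_smul_right] at h
    rw [carreDuChamp_rotGen_self hx, norm_sub_sq_real, inner_sgrad, real_inner_comm v]
    linarith
  calc ∫ x, Γ f f x ∂sphMeasure n
      ≤ ∫ x, (‖gradient f x - v‖ ^ 2 + 2 * ⟪sgrad f x, v⟫) ∂sphMeasure n :=
        integral_mono_sphere hΓ (by fun_prop) hpoint
    _ = ∫ x, ‖gradient f x - v‖ ^ 2 ∂sphMeasure n := by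
        rw [integral_add (integrable_of_continuousOn_sphere (by fun_prop))
          (integrable_of_continuousOn_sphere (by fun_prop)), integral_const_mul,
          integral_inner_sgrad hf, hlin, mul_zero, mul_zero, add_zero]

lemma mul_integral_norm_gradient_sub_sq_le (hf : SphSmooth 2 f) {c : ℝ}
    (hpoincare : ∀ g : E n → ℝ, SphSmooth 1 g → ∫ x, g x ∂sphMeasure n = 0 →
      c * ∫ x, g x ^ 2 ∂sphMeasure n ≤ ∫ x, Γ g g x ∂sphMeasure n) :
    c * ∫ x, ‖gradient f x - meanGradient f‖ ^ 2 ∂sphMeasure n ≤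
      ∫ x, hsNormSq (hess f x) ∂sphMeasure n := by
  set m := meanGradient f with hm
  have hs (i : Fin n) : SphSmooth 1 (fun x => gradient f x i) := hf.gradient_apply (by norm_num) i
  have hcont (i : Fin n) := (hs i).continuousOn
  have hΓ (i : Fin n) : ContinuousOn (Γ (fun x => gradient f x i) (fun x => gradient f x i)) 𝕊 :=
    ((hs i).carreDuChamp (l := 0) (hs i) (by simp)).continuousOn
  have hcoord (i : Fin n) : c * ∫ x, (gradient f x i - m i) ^ 2 ∂sphMeasure n ≤
      ∫ x, Γ (fun x => gradient f x i) (fun x => gradient f x i) x ∂sphMeasure n := by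
    have hmean : ∫ x, (gradient f x i + -m i) ∂sphMeasure n = 0 := by
      rw [integral_add (integrable_of_continuousOn_sphere (hcont i)) (integrable_const _),
        integral_gradient_apply (hf.of_le (by norm_num)), integral_const,
        probReal_univ, one_smul, ← hm, add_neg_cancel]
    have h := hpoincare _ ((hs i).add (.const (-m i))) hmean
    simp only [carreDuChamp, lieDeriv_add_const] at h
    simpa only [carreDuChamp, ← sub_eq_add_neg] using h
  calc c * ∫ x, ‖gradient f x - m‖ ^ 2 ∂sphMeasure n
      = ∑ i, c * ∫ x, (gradient f x i - m i) ^ 2 ∂sphMeasure n := by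
        rw [← Finset.mul_sum, ← integral_finsetSum _ fun i _ =>
          integrable_of_continuousOn_sphere (by fun_prop)]
        simp only [EuclideanSpace.real_norm_sq_eq, PiLp.sub_apply]
    _ ≤ ∑ i, ∫ x, Γ (fun x => gradient f x i) (fun x => gradient f x i) x ∂sphMeasure n :=
        Finset.sum_le_sum fun i _ => hcoord i
    _ = ∫ x, ∑ i, Γ (fun x => gradient f x i) (fun x => gradient f x i) x ∂sphMeasure n :=
        (integral_finsetSum _ fun i _ => integrable_of_continuousOn_sphere (hΓ i)).symm
    _ ≤ ∫ x, hsNormSq (hess f x) ∂sphMeasure n :=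
        integral_mono_sphere (continuousOn_finsetSum _ fun i _ => hΓ i)
          (continuousOn_hsNormSq_hess hf) fun x hx =>
            sum_carreDuChamp_gradient_apply_le (hf x hx) hx

end MeanGradient

section ExponentialMoments

open ProbabilityTheory

variable {α : Type*} {m : MeasurableSpace α} {μ : Measure α} {X : α → ℝ} {s t : ℝ}

lemma mgf_abs_le_add (hpos : s ∈ integrableExpSet X μ) (hneg : -s ∈ integrableExpSet X μ) :
    mgf (fun x => |X x|) μ s ≤ mgf X μ s + mgf X μ (-s) := by
  rw [mgf, mgf, mgf, ← integral_add hpos hneg]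
  refine integral_mono (integrable_exp_mul_abs hpos hneg) (hpos.add hneg) fun x => ?_
  calc Real.exp (s * |X x|) ≤ Real.exp |s * X x| := by
        rw [abs_mul]
        gcongr
        exact le_abs_self s
    _ ≤ Real.exp (s * X x) + Real.exp (-s * X x) := by
        rw [neg_mul]
        exact Real.exp_abs_le _

lemma mgf_mul_le_rpow [IsProbabilityMeasure μ] (ht : t ∈ Set.Icc 0 1)
    (hs : s ∈ integrableExpSet X μ) : mgf X μ (t * s) ≤ mgf X μ s ^ t := by
  have hts : t * s ∈ integrableExpSet X μ := by
    simpa using convex_integrableExpSet hs (by simp [integrableExpSet] : (0 : ℝ) ∈ _)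
      ht.1 (sub_nonneg.2 ht.2) (add_sub_cancel t 1)
  have hexp (x : α) : Real.exp (t * s * X x) = Real.exp (s * X x) ^ t := by
    rw [← Real.exp_mul, mul_comm (s * X x), mul_assoc]
  simp only [mgf, hexp]
  refine (Real.concaveOn_rpow ht.1 ht.2).le_map_integral
    (Real.continuous_rpow_const ht.1).continuousOn isClosed_Ici
    (ae_of_all _ fun x => (Real.exp_pos _).le) hs ?_
  simpa only [integrableExpSet, Set.mem_ofPred_eq, Function.comp_def, ← hexp] using hts

lemma mgf_abs_le_two [IsProbabilityMeasure μ] {b : ℝ}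
    (hpos : s ∈ integrableExpSet X μ) (hneg : -s ∈ integrableExpSet X μ)
    (hmpos : mgf X μ s ≤ Real.exp (2 * b ^ 2)) (hmneg : mgf X μ (-s) ≤ Real.exp (2 * b ^ 2)) :
    mgf (fun x => |X x|) μ ((1 + 4 * b ^ 2)⁻¹ * s) ≤ 2 := by
  have hb : 0 < 1 + 4 * b ^ 2 := by positivity
  have ht : (1 + 4 * b ^ 2)⁻¹ ∈ Set.Icc (0 : ℝ) 1 :=
    ⟨by positivity, inv_le_one_of_one_le₀ (by linarith [sq_nonneg b])⟩
  set t := (1 + 4 * b ^ 2)⁻¹ with ht_def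
  calc mgf (fun x => |X x|) μ (t * s)
      ≤ mgf (fun x => |X x|) μ s ^ t := mgf_mul_le_rpow ht (integrable_exp_mul_abs hpos hneg)
    _ ≤ Real.exp (Real.log 2 + 2 * b ^ 2) ^ t := by
        refine Real.rpow_le_rpow mgf_nonneg ?_ ht.1
        rw [Real.exp_add, Real.exp_log two_pos, two_mul]
        exact (mgf_abs_le_add hpos hneg).trans (add_le_add hmpos hmneg)
    _ ≤ Real.exp (Real.log 2) := by
        rw [← Real.exp_mul, Real.exp_le_exp, ht_def, mul_inv_le_iff₀ hb]
        nlinarith [Real.log_two_gt_d9, sq_nonneg b]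
    _ = 2 := Real.exp_log two_pos

end ExponentialMoments

section DimensionAtLeastThree

open ProbabilityTheory

variable [NeZero n] {f : E n → ℝ}

lemma mul_integral_norm_gradient_sq_le (hn : 3 ≤ n) (hf : SphSmooth 2 f)
    (hlin : ∀ v : E n, ∫ x, ⟪v, x⟫ * f x ∂sphMeasure n = 0) :
    (n - 1) * ∫ x, ‖gradient f x‖ ^ 2 ∂sphMeasure n ≤
      4 * ∫ x, hsNormSq (hess f x) ∂sphMeasure n := by
  have hn' : (3 : ℝ) ≤ n := mod_cast hn
  have hf1 : SphSmooth 1 f := hf.of_le (by norm_num)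
  have hvar := mul_integral_norm_gradient_sub_sq_le hf fun _ hg h0 =>
    mul_integral_sq_le_integral_carreDuChamp hn hg h0
  have hmean := norm_meanGradient_sq_le hf1 hlin
  rw [integral_norm_gradient_sq hf1]
  set S := ∫ x, ‖gradient f x - meanGradient f‖ ^ 2 ∂sphMeasure n
  have hS : 0 ≤ S := integral_nonneg fun x => sq_nonneg _
  have hmS : ‖meanGradient f‖ ^ 2 ≤ 3 * S := by
    have hn2 : (n : ℝ) ≤ 3 * (n - 1) ^ 2 := by nlinarith
    refine le_of_mul_le_mul_left (hmean.trans ?_) (pow_pos (by linarith : (0 : ℝ) < n - 1) 2)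
    linarith [mul_le_mul_of_nonneg_right hn2 hS]
  linarith [mul_le_mul_of_nonneg_left hmS (by linarith : (0 : ℝ) ≤ n - 1)]

lemma mgf_le_exp_two_mul_sq (hn : 3 ≤ n) (hf : SphSmooth 2 f)
    (hmean : ∫ x, f x ∂sphMeasure n = 0)
    (hlin : ∀ v : E n, ∫ x, ⟪v, x⟫ * f x ∂sphMeasure n = 0) {b : ℝ}
    (hop : ∀ x ∈ 𝕊, ‖hess f x‖ ≤ 1) (hHS : ∫ x, hsNormSq (hess f x) ∂sphMeasure n ≤ b ^ 2) :
    mgf f (sphMeasure n) ((n - 1) / 2) ≤ Real.exp (2 * b ^ 2) ∧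
      mgf f (sphMeasure n) (-((n - 1) / 2)) ≤ Real.exp (2 * b ^ 2) := by
  have hf1 : SphSmooth 1 f := hf.of_le (by norm_num)
  have hexp : Real.exp ((n - 1) / 2 * ∫ x, ‖gradient f x‖ ^ 2 ∂sphMeasure n) ≤
      Real.exp (2 * b ^ 2) :=
    Real.exp_le_exp.2 (by linarith [mul_integral_norm_gradient_sq_le hn hf hlin])
  have hherbst : ∀ g : E n → ℝ, SphSmooth 1 g → ∫ x, g x ∂sphMeasure n = 0 →
      (∀ x ∈ 𝕊, Γ g g x ≤ ‖gradient f x‖ ^ 2) →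
      mgf g (sphMeasure n) ((n - 1) / 2) ≤ Real.exp (2 * b ^ 2) := fun g hg h0 hΓ =>
    (mgf_le_exp_integral hn hg (hf.norm_gradient_sq (by norm_num)) h0 hΓ fun x hx =>
      carreDuChamp_norm_gradient_sq_le (hf x hx) hx (hop x hx)).trans hexp
  have hΓ : ∀ x ∈ 𝕊, Γ f f x ≤ ‖gradient f x‖ ^ 2 := fun x hx => carreDuChamp_rotGen_self_le hx
  refine ⟨hherbst f hf1 hmean hΓ, mgf_neg (X := f) ▸ hherbst (-f) hf1.neg ?_ fun x hx => ?_⟩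
  · rw [integral_neg', hmean, neg_zero]
  · have hneg : Γ (-f) (-f) x = Γ f f x := by
      simpa [Pi.neg_def] using carreDuChamp_comp_self rotGen (hasDerivAt_neg (f x))
        (hf1.differentiableAt one_ne_zero hx)
    exact hneg.trans_le (hΓ x hx)

lemma integral_exp_abs_le_of_three_le (hn : 3 ≤ n) (hf : SphSmooth 2 f)
    (hmean : ∫ x, f x ∂sphMeasure n = 0)
    (hlin : ∀ v : E n, ∫ x, ⟪v, x⟫ * f x ∂sphMeasure n = 0) {b : ℝ}
    (hop : ∀ x ∈ 𝕊, ‖hess f x‖ ≤ 1) (hHS : ∫ x, hsNormSq (hess f x) ∂sphMeasure n ≤ b ^ 2) :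
    ∫ x, Real.exp ((n - 1) / (2 * (1 + 4 * b ^ 2)) * |f x|) ∂sphMeasure n ≤ 2 := by
  have hmem := mem_interior_integrableExpSet hf.continuousOn
  obtain ⟨hpos, hneg⟩ := mgf_le_exp_two_mul_sq hn hf hmean hlin hop hHS
  have h := mgf_abs_le_two (interior_subset (hmem _)) (interior_subset (hmem _)) hpos hneg
  rwa [inv_mul_eq_div, div_div] at h

end DimensionAtLeastThree

section CauchySchwarz

variable {α : Type*} {m : MeasurableSpace α} {μ : Measure α} {u v : α → ℝ}

lemma sq_integral_mul_le (huu : Integrable (fun x => u x ^ 2) μ)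
    (huv : Integrable (fun x => u x * v x) μ) (hvv : Integrable (fun x => v x ^ 2) μ) :
    (∫ x, u x * v x ∂μ) ^ 2 ≤ (∫ x, u x ^ 2 ∂μ) * ∫ x, v x ^ 2 ∂μ := by
  have hquad (t : ℝ) : 0 ≤ (∫ x, u x ^ 2 ∂μ) * (t * t) + (2 * ∫ x, u x * v x ∂μ) * t +
      ∫ x, v x ^ 2 ∂μ := by
    have h : 0 ≤ ∫ x, (t ^ 2 * u x ^ 2 + 2 * t * (u x * v x) + 1 * v x ^ 2) ∂μ :=
      integral_nonneg fun x => (sq_nonneg (t * u x + v x)).trans_eq (by ring)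
    rw [integral_linear_combination huu huv hvv] at h
    linarith
  have h := discrim_le_zero hquad
  rw [discrim] at h
  linarith

end CauchySchwarz

section Circle

local notation "R₀₁" => rotFlow ((0, 1) : Fin 2 × Fin 2)

lemma rotFlow_rotFlow (p : Fin n × Fin n) (s t : ℝ) (x : E n) :
    rotFlow p s (rotFlow p t x) = rotFlow p (s + t) x := by
  simp only [rotFlow_apply, map_add, map_smul, map_neg, rotGen_rotGen_rotGen, Real.cos_add,
    Real.sin_add]
  module

lemma periodic_rotFlow (p : Fin n × Fin n) (x : E n) :
    Function.Periodic (fun s => rotFlow p s x) (2 * Real.pi) := fun s => by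
  simp only [rotFlow_apply, Real.sin_add_two_pi, Real.cos_add_two_pi]

variable {g : E 2 → ℝ} {x y : E 2}

lemma rotFlow_two_apply (s : ℝ) (x : E 2) :
    R₀₁ s x = !₂[Real.cos s * x 0 - Real.sin s * x 1, Real.cos s * x 1 + Real.sin s * x 0] := by
  ext m
  fin_cases m <;> simp [rotFlow_apply, rotGen_apply_coord] <;> ring

lemma sq_add_sq_of_mem_sphere (hx : x ∈ 𝕊) : x 0 ^ 2 + x 1 ^ 2 = 1 := by
  rw [← Fin.sum_univ_two (fun i => x i ^ 2), ← EuclideanSpace.real_norm_sq_eq,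
    mem_sphere_zero_iff_norm.1 hx, one_pow]

lemma exists_rotFlow_two_eq (hx : x ∈ 𝕊) (hy : y ∈ 𝕊) : ∃ s, R₀₁ s x = y := by
  have hx2 := sq_add_sq_of_mem_sphere hx
  have hy2 := sq_add_sq_of_mem_sphere hy
  set z : ℂ := ⟨x 0 * y 0 + x 1 * y 1, x 0 * y 1 - x 1 * y 0⟩ with hz
  have hnorm : ‖z‖ = 1 := by
    rw [← sq_eq_sq₀ (norm_nonneg _) zero_le_one, Complex.sq_norm, Complex.normSq_mk]
    linear_combination (y 0 ^ 2 + y 1 ^ 2) * hx2 + hy2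
  refine ⟨z.arg, ?_⟩
  rw [rotFlow_two_apply, Complex.cos_arg (norm_pos_iff.1 (hnorm ▸ one_pos)), Complex.sin_arg,
    hnorm, div_one, div_one, hz]
  ext m
  fin_cases m <;> simp
  · linear_combination y 0 * hx2
  · linear_combination y 1 * hx2

lemma continuous_comp_rotFlow {p : Fin n × Fin n} {h : E n → ℝ} (hh : ContinuousOn h 𝕊) {x : E n}
    (hx : x ∈ 𝕊) : Continuous fun s => h (rotFlow p s x) :=
  hh.comp_continuous
    (continuous_iff_continuousAt.2 fun s => (hasDerivAt_rotFlow p s x).continuousAt)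
    fun s => rotFlow_mem_sphere p s hx

lemma integral_rotFlow_two_eq_of_mem_sphere (g : E 2 → ℝ) (hx : x ∈ 𝕊) (hy : y ∈ 𝕊) :
    ∫ s in (0 : ℝ)..(2 * Real.pi), g (R₀₁ s y) = ∫ s in (0 : ℝ)..(2 * Real.pi), g (R₀₁ s x) := by
  obtain ⟨t, rfl⟩ := exists_rotFlow_two_eq hx hy
  have hper : Function.Periodic (fun s => g (R₀₁ s x)) (2 * Real.pi) :=
    (periodic_rotFlow _ x).comp g
  simp only [rotFlow_rotFlow]
  rw [intervalIntegral.integral_comp_add_right fun s => g (R₀₁ s x), zero_add,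
    add_comm (2 * Real.pi), hper.intervalIntegral_add_eq t 0, zero_add]

lemma integral_interval_rotFlow_swap [NeZero n] (p : Fin n × Fin n) {h : E n → ℝ}
    (hh : ContinuousOn h 𝕊) (T : ℝ) :
    ∫ x, (∫ s in (0 : ℝ)..T, h (rotFlow p s x)) ∂sphMeasure n = T * ∫ x, h x ∂sphMeasure n := by
  have hint : Integrable (Function.uncurry fun s x => h (rotFlow p s x))
      ((volume.restrict (Set.uIoc 0 T)).prod (sphMeasure n)) := by
    refine integrable_of_ae_mem_isCompact (K := Set.uIcc 0 T ×ˢ 𝕊)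
      (isCompact_uIcc.prod (isCompact_sphere 0 1)) ?_
      (hh.comp (continuous_rotFlow p).continuousOn fun q hq => rotFlow_mem_sphere p q.1 hq.2)
    exact (Measure.quasiMeasurePreserving_fst.ae ((ae_restrict_mem measurableSet_uIoc).mono
      fun _ hs => Set.uIoc_subset_uIcc hs)).and
        (Measure.quasiMeasurePreserving_snd.ae ae_mem_sphere)
  rw [← intervalIntegral_integral_swap hint]
  simp only [integral_comp_rotFlow, intervalIntegral.integral_const, sub_zero, smul_eq_mul]

lemma integral_rotFlow_two (hg : ContinuousOn g 𝕊) (hx : x ∈ 𝕊) :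
    ∫ s in (0 : ℝ)..(2 * Real.pi), g (R₀₁ s x) = 2 * Real.pi * ∫ y, g y ∂sphMeasure 2 := by
  rw [← integral_interval_rotFlow_swap (0, 1) hg,
    integral_congr_sphere fun y hy => integral_rotFlow_two_eq_of_mem_sphere g hx hy]
  simp

lemma carreDuChamp_rotGen_two (y : E 2) : Γ g g y = lieDeriv (rotGen (0, 1)) g y ^ 2 := by
  have hdiag (i : Fin 2) : lieDeriv (rotGen (i, i)) g y = 0 := by simp [lieDeriv, rotGen_apply]
  have hswap : lieDeriv (rotGen (1, 0)) g y = -lieDeriv (rotGen (0, 1)) g y :=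
    congrFun (lieDeriv_rotGen_swap (0, 1)) y
  simp only [carreDuChamp, Fintype.sum_prod_type, Fin.sum_univ_two, hdiag, hswap]
  ring

-- Wirtinger's inequality in the supremum norm: integrate by parts against the sawtooth `s - π`.
lemma integral_sub_pi_mul_lieDeriv_rotFlow (hg : SphSmooth 1 g) (hx : x ∈ 𝕊) :
    ∫ s in (0 : ℝ)..(2 * Real.pi), (s - Real.pi) * lieDeriv (rotGen (0, 1)) g (R₀₁ s x) =
      2 * Real.pi * (g x - ∫ y, g y ∂sphMeasure 2) := by
  have hL : ContinuousOn (lieDeriv (rotGen (0, 1)) g) 𝕊 :=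
    (hg.lieDeriv (l := 0) (by simp) _).continuousOn
  have h := intervalIntegral.integral_mul_deriv_eq_deriv_mul (a := 0) (b := 2 * Real.pi)
    (fun s _ => (hasDerivAt_id s).sub_const Real.pi)
    (fun s _ => hasDerivAt_comp_rotFlow (0, 1)
      (hg.differentiableAt one_ne_zero (rotFlow_mem_sphere (0, 1) s hx)))
    intervalIntegrable_const ((continuous_comp_rotFlow hL hx).intervalIntegrable _ _)
  have hend : R₀₁ (2 * Real.pi) x = x := by simpa using periodic_rotFlow (0, 1) x 0
  simp only [id_eq, one_mul, hend, rotFlow_zero, integral_rotFlow_two hg.continuousOn hx] at h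
  rw [h]
  ring

lemma sq_sub_integral_le (hg : SphSmooth 1 g) (hx : x ∈ 𝕊) :
    (g x - ∫ y, g y ∂sphMeasure 2) ^ 2 ≤ Real.pi ^ 2 / 3 * ∫ y, Γ g g y ∂sphMeasure 2 := by
  have hL : ContinuousOn (lieDeriv (rotGen (0, 1)) g) 𝕊 :=
    (hg.lieDeriv (l := 0) (by simp) _).continuousOn
  have hv := continuous_comp_rotFlow (p := (0, 1)) hL hx
  have hcs := sq_integral_mul_le (μ := volume.restrict (Set.Ioc 0 (2 * Real.pi)))
    (u := fun s => s - Real.pi) (v := fun s => lieDeriv (rotGen (0, 1)) g (R₀₁ s x))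
    (Continuous.integrableOn_Ioc (by fun_prop)) (Continuous.integrableOn_Ioc (by fun_prop))
    (Continuous.integrableOn_Ioc (by fun_prop))
  simp only [← intervalIntegral.integral_of_le Real.two_pi_pos.le] at hcs
  have hsq : ∫ s in (0 : ℝ)..(2 * Real.pi), (s - Real.pi) ^ 2 = 2 * Real.pi ^ 3 / 3 := by
    rw [intervalIntegral.integral_comp_sub_right fun s => s ^ 2, integral_pow]
    norm_num
    ring
  have horbit := integral_rotFlow_two (hL.pow 2) hx
  simp only [Pi.pow_apply] at horbit
  rw [integral_sub_pi_mul_lieDeriv_rotFlow hg hx, hsq, horbit] at hcs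
  simp only [carreDuChamp_rotGen_two]
  refine le_of_mul_le_mul_left ?_ (by positivity : 0 < (2 * Real.pi) ^ 2)
  linarith

lemma mul_integral_sq_le_integral_carreDuChamp_of_two (hg : SphSmooth 1 g)
    (h0 : ∫ x, g x ∂sphMeasure 2 = 0) :
    3 / Real.pi ^ 2 * ∫ x, g x ^ 2 ∂sphMeasure 2 ≤ ∫ x, Γ g g x ∂sphMeasure 2 := by
  have h := integral_mono_sphere (hg.continuousOn.pow 2) continuousOn_const fun x hx => by
    simpa [h0] using sq_sub_integral_le hg hx
  rw [integral_const, probReal_univ, one_smul] at h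
  rwa [← inv_div, inv_mul_le_iff₀ (by positivity)]

lemma abs_le_of_two (hg : SphSmooth 2 g) (hmean : ∫ x, g x ∂sphMeasure 2 = 0)
    (hlin : ∀ v : E 2, ∫ x, ⟪v, x⟫ * g x ∂sphMeasure 2 = 0) {b : ℝ} (hb : 0 ≤ b)
    (hHS : ∫ x, hsNormSq (hess g x) ∂sphMeasure 2 ≤ b ^ 2) (hx : x ∈ 𝕊) :
    |g x| ≤ Real.pi ^ 2 / 3 * b := by
  have hg1 : SphSmooth 1 g := hg.of_le (by norm_num)
  have hvar := mul_integral_norm_gradient_sub_sq_le hg fun h hh h0 =>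
    mul_integral_sq_le_integral_carreDuChamp_of_two hh h0
  have hΓ := integral_carreDuChamp_self_le hg1 hlin (meanGradient g)
  have h := sq_sub_integral_le hg1 hx
  rw [hmean, sub_zero] at h
  refine abs_le_of_sq_le_sq ?_ (by positivity)
  rw [← inv_div, inv_mul_le_iff₀ (by positivity)] at hvar
  calc g x ^ 2 ≤ Real.pi ^ 2 / 3 * ∫ y, Γ g g y ∂sphMeasure 2 := h
    _ ≤ Real.pi ^ 2 / 3 * (Real.pi ^ 2 / 3 * b ^ 2) := by
        gcongr
        exact (hΓ.trans hvar).trans (by gcongr)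
    _ = (Real.pi ^ 2 / 3 * b) ^ 2 := by ring

lemma integral_exp_abs_le_of_two (hg : SphSmooth 2 g) (hmean : ∫ x, g x ∂sphMeasure 2 = 0)
    (hlin : ∀ v : E 2, ∫ x, ⟪v, x⟫ * g x ∂sphMeasure 2 = 0) {b : ℝ} (hb : 0 ≤ b)
    (hHS : ∫ x, hsNormSq (hess g x) ∂sphMeasure 2 ≤ b ^ 2) :
    ∫ x, Real.exp (1 / (2 * (1 + 4 * b ^ 2)) * |g x|) ∂sphMeasure 2 ≤ 2 := by
  have hcont := hg.continuousOn
  have hpi : Real.pi ^ 2 / 3 ≤ 3.31 := by nlinarith [Real.pi_lt_d2, Real.pi_pos]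
  have hbound : ∀ x ∈ 𝕊, Real.exp (1 / (2 * (1 + 4 * b ^ 2)) * |g x|) ≤ 2 := fun x hx => by
    have hgx : |g x| ≤ 3.31 * b := (abs_le_of_two hg hmean hlin hb hHS hx).trans (by gcongr)
    rw [← Real.le_log_iff_exp_le two_pos, one_div, inv_mul_le_iff₀ (by positivity)]
    nlinarith [Real.log_two_gt_d9, sq_nonneg (2 * b - 1), sq_nonneg b]
  simpa using integral_mono_sphere (by fun_prop) continuousOn_const hbound

end Circle

section Reduction

variable {f : E n → ℝ} {x : E n}

lemma gradient_sub_norm_sq (hf : DifferentiableAt ℝ f x) (a : ℝ) :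
    gradient (fun y => f y - a / 2 * (‖y‖ ^ 2 - 1)) x = gradient f x - a • x := by
  have hquad := ((hasFDerivAt_id x).norm_sq.sub_const 1).const_mul (a / 2)
  refine HasGradientAt.gradient <| (hf.hasGradientAt.hasFDerivAt.fun_sub hquad).congr_fderiv <|
    ContinuousLinearMap.ext fun v => ?_
  simp
  ring

lemma hess_sub_norm_sq (hf : ContDiffAt ℝ 2 f x) (a : ℝ) :
    hess (fun y => f y - a / 2 * (‖y‖ ^ 2 - 1)) x =
      hess f x - a • ContinuousLinearMap.id ℝ (E n) := by
  have hgrad : gradient (fun y => f y - a / 2 * (‖y‖ ^ 2 - 1)) =ᶠ[𝓝 x]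
      fun y => gradient f y - a • y := by
    filter_upwards [hf.eventually (by simp)] with y hy
    exact gradient_sub_norm_sq (hy.differentiableAt two_ne_zero) a
  rw [hess, hgrad.fderiv_eq]
  exact ((hasFDerivAt_gradient hf).fun_sub ((hasFDerivAt_id x).const_smul a)).fderiv

lemma integral_exp_abs_le_two (hn : 2 ≤ n) (hf : SphSmooth 2 f)
    (hmean : ∫ x, f x ∂sphMeasure n = 0) (hlin : ∀ v : E n, ∫ x, ⟪v, x⟫ * f x ∂sphMeasure n = 0)
    {b : ℝ} (hb : 0 ≤ b) (hop : ∀ x ∈ 𝕊, ‖hess f x‖ ≤ 1)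
    (hHS : ∫ x, hsNormSq (hess f x) ∂sphMeasure n ≤ b ^ 2) :
    ∫ x, Real.exp ((n - 1) / (2 * (1 + 4 * b ^ 2)) * |f x|) ∂sphMeasure n ≤ 2 := by
  have : NeZero n := ⟨by lia⟩
  obtain rfl | hn := hn.eq_or_lt
  · rw [show ((2 : ℕ) : ℝ) - 1 = 1 by norm_num]
    exact integral_exp_abs_le_of_two hf hmean hlin hb hHS
  · exact integral_exp_abs_le_of_three_le hn hf hmean hlin hop hHS

end Reduction

/-- **Theorem 1.2 (Statement 1).** Second order concentration on the sphere
in terms of the Euclidean Hessian. -/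
theorem second_order_concentration_euclidean_hessian
    {n : ℕ} (hn : 2 ≤ n) (f : E n → ℝ) (U : Set (E n)) (hU : IsOpen U)
    (hUS : Metric.sphere (0 : E n) 1 ⊆ U) (hf : ContDiffOn ℝ 2 f U)
    (hmean : ∫ θ, f θ ∂sphMeasure n = 0)
    (hlin : ∀ v : E n, ∫ θ, ⟪v, θ⟫ * f θ ∂sphMeasure n = 0)
    {a b : ℝ} (hb : 0 ≤ b)
    (hop : ∀ θ ∈ Metric.sphere (0 : E n) 1,
      ‖hess f θ - a • ContinuousLinearMap.id ℝ (E n)‖ ≤ 1)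
    (hHS : ∫ θ, hsNormSq (hess f θ - a • ContinuousLinearMap.id ℝ (E n)) ∂sphMeasure n ≤ b ^ 2) :
    ∫ θ, Real.exp (((n : ℝ) - 1) / (2 * (1 + 4 * b ^ 2)) * |f θ|) ∂sphMeasure n ≤ 2 := by
  have hfs : SphSmooth 2 f := fun x hx => hf.contDiffAt (hU.mem_nhds (hUS hx))
  let F : E n → ℝ := fun y => f y - a / 2 * (‖y‖ ^ 2 - 1)
  have hFs : SphSmooth 2 F := fun x hx => (hfs x hx).sub
    (contDiffAt_const.mul ((contDiff_norm_sq ℝ).contDiffAt.sub contDiffAt_const))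
  have hfF : ∀ x ∈ 𝕊, f x = F x := fun x hx => by
    simp [F, mem_sphere_zero_iff_norm.1 hx]
  have hhess : ∀ x ∈ 𝕊, hess f x - a • ContinuousLinearMap.id ℝ (E n) = hess F x :=
    fun x hx => (hess_sub_norm_sq (hfs x hx) a).symm
  rw [integral_congr_sphere hfF] at hmean
  replace hlin (v : E n) : ∫ θ, ⟪v, θ⟫ * F θ ∂sphMeasure n = 0 :=
    (integral_congr_sphere fun x hx => by rw [hfF x hx]).trans (hlin v)
  replace hop : ∀ x ∈ 𝕊, ‖hess F x‖ ≤ 1 := fun x hx => hhess x hx ▸ hop x hx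
  rw [integral_congr_sphere fun x hx => congrArg hsNormSq (hhess x hx)] at hHS
  rw [integral_congr_sphere fun x hx => by rw [hfF x hx]]
  exact integral_exp_abs_le_two hn hFs hmean hlin hb hop hHS

end SecondOrderConc
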